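/- arXiv:0812.2273 — 2 statements merged into one kernel-verified Lean document; each statement's English description precedes it below -/
import Mathlib

section
/- Let 1 ≤ θ < 2 and m = 1/2. There exists ε₀ > 0 such that for every ε ∈ (0, ε₀), setting ω = m − ε, there exist twice continuously differentiable functions f, g : (0,∞) → ℝ, not both identically zero, satisfying for all r > 0 the system f'(r) + (2/r) f(r) = (|g(r)² − f(r)²|^θ − (m − ω)) g(r) and g'(r) = (|g(r)² − f(r)²|^θ − (m + ω)) f(r), and constants C > 0, σ > 0 (depending on ε) such that |f(r)| + |g(r)| + |f'(r)| + |g'(r)| ≤ C e^{−σ r} for all r ≥ 1. -/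
/-!
Put `ε = μδ`, `f(r) = x y v(y r)` and `g(r) = x w(y r)` with `y² = (x²)^θ = μ`. The Dirac system
becomes `v' + (2/t) v = (|w² - μv²|^θ - δ) w`, `w' = -(1 - μ(δ + |w² - μv²|^θ)) v`, which for
`μ = δ = 0` is the Lane–Emden system `v' + (2/t) v = |w|^{2θ} w`, `w' = -v`. Its exponent `2θ + 1`
is below the critical exponent `5` when `θ < 2`, and then a Pohozaev identity forces `w` to reach
zero, so the trajectory from `(0, 1)` leaves the cone `v ≤ 10 w`. By continuous dependence it still
does so for small `μ` and all `δ < μ`, with positive energy, whereas for `δ > 0` the trajectory from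
`(0, a)` with `a^{2θ} = δ` has negative energy from the start. Both alternatives are open in `a` and
exclude each other, so some `a` in between satisfies neither, and its trajectory is trapped in the
cone with nonnegative energy. There `w' ≤ -v/2`; once `w^{2θ}` has dropped to `(1 + θ/2) δ`,
nonnegative energy gives `v ≥ κ w`, hence exponential decay. Truncating the field outside the cone
makes it globally Lipschitz, so that the singular initial value problem is solved by a contraction.
-/

open Set Filter Topology

namespace RadialDirac

open scoped BoundedContinuousFunction NNReal ContDiff

/-! ### The singular radial initial value problem -/

section RadialPrimitive

variable {E : Type*} [NormedAddCommGroup E] [NormedSpace ℝ E]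

/-- The radial primitive `t⁻ᵏ ∫₀ᵗ sᵏ h(s) ds`, the solution of `v' + (k/t) v = h` that vanishes at
`0`. The substitution `s = tσ` removes the singularity of the formula at `t = 0`. -/
noncomputable def radialPrimitive (k : ℕ) (h : ℝ → E) (t : ℝ) : E :=
  t • ∫ σ in (0 : ℝ)..1, σ ^ k • h (t * σ)

variable {k : ℕ} {h h' : ℝ → E} {t : ℝ}

@[simp]
lemma radialPrimitive_apply_zero : radialPrimitive k h 0 = 0 := zero_smul _ _

@[simp]
lemma radialPrimitive_zero : radialPrimitive k (fun _ ↦ (0 : E)) t = 0 := by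
  simp [radialPrimitive]

lemma pow_smul_radialPrimitive :
    t ^ k • radialPrimitive k h t = ∫ s in (0 : ℝ)..t, s ^ k • h s := by
  have substitution := intervalIntegral.smul_integral_comp_mul_left
    (a := 0) (b := 1) (fun s ↦ s ^ k • h s) t
  simp only [mul_pow, mul_smul, intervalIntegral.integral_smul, mul_zero, mul_one] at substitution
  rw [radialPrimitive, smul_comm, substitution]

lemma radialPrimitive_sub (hh : Continuous h) (hh' : Continuous h') :
    radialPrimitive k h t - radialPrimitive k h' t = radialPrimitive k (fun s ↦ h s - h' s) t := by
  simp only [radialPrimitive, ← smul_sub]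
  rw [← intervalIntegral.integral_sub (Continuous.intervalIntegrable (by fun_prop) _ _)
    (Continuous.intervalIntegrable (by fun_prop) _ _)]
  simp only [smul_sub]

lemma continuous_radialPrimitive (hh : Continuous h) : Continuous (radialPrimitive k h) :=
  continuous_id.smul <| intervalIntegral.continuous_parametric_intervalIntegral_of_continuous'
    (by simp only [Function.uncurry_def]; fun_prop) 0 1

lemma hasDerivAt_radialPrimitive [CompleteSpace E] (hh : Continuous h) (ht : t ≠ 0) :
    HasDerivAt (radialPrimitive k h) (h t - (k / t) • radialPrimitive k h t) t := by
  have weighted_integral : HasDerivAt (fun t ↦ ∫ s in (0 : ℝ)..t, s ^ k • h s) (t ^ k • h t) t :=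
    (Continuous.integral_hasStrictDerivAt (by fun_prop) 0 t).hasDerivAt
  have weight : HasDerivAt (fun s : ℝ ↦ (s ^ k)⁻¹) (-(k * t ^ (k - 1)) / (t ^ k) ^ 2) t :=
    (hasDerivAt_pow k t).inv (pow_ne_zero k ht)
  refine ((weight.smul weighted_integral).congr_of_eventuallyEq ?_).congr_deriv ?_
  · filter_upwards [isOpen_ne.mem_nhds ht] with s hs
    rw [Pi.smul_apply', ← pow_smul_radialPrimitive, inv_smul_smul₀ (pow_ne_zero k hs)]
  · rw [← pow_smul_radialPrimitive, inv_smul_smul₀ (pow_ne_zero k ht), smul_smul, sub_eq_add_neg,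
      ← neg_smul]
    congr 2
    rcases k with _ | k
    · simp
    · rw [Nat.add_sub_cancel]
      field_simp
      ring

lemma norm_radialPrimitive_le {C L : ℝ} (hL : 0 < L)
    (hh : ∀ s, ‖h s‖ ≤ C * Real.exp (L * |s|)) :
    ‖radialPrimitive k h t‖ ≤ C / L * Real.exp (L * |t|) := by
  have hC : 0 ≤ C := by simpa using (norm_nonneg _).trans (hh 0)
  have integrand_le : ∀ σ ∈ Ioc (0 : ℝ) 1,
      ‖σ ^ k • h (t * σ)‖ ≤ C * Real.exp (L * (|t| * σ)) := fun σ hσ ↦ by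
    rw [norm_smul, norm_pow, Real.norm_of_nonneg hσ.1.le]
    calc σ ^ k * ‖h (t * σ)‖ ≤ 1 * ‖h (t * σ)‖ := by gcongr; exact pow_le_one₀ hσ.1.le hσ.2
      _ ≤ _ := by simpa [abs_mul, abs_of_pos hσ.1] using hh (t * σ)
  have integral_exp : |t| * ∫ σ in (0 : ℝ)..1, C * Real.exp (L * (|t| * σ))
      = C / L * (Real.exp (L * |t|) - 1) := by
    rw [← smul_eq_mul,
      intervalIntegral.smul_integral_comp_mul_left (fun s ↦ C * Real.exp (L * s)) |t|,
      intervalIntegral.integral_const_mul,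
      intervalIntegral.integral_comp_mul_left Real.exp hL.ne', integral_exp]
    simp only [mul_zero, Real.exp_zero, mul_one, smul_eq_mul]
    field_simp
  calc ‖radialPrimitive k h t‖ = |t| * ‖∫ σ in (0 : ℝ)..1, σ ^ k • h (t * σ)‖ := norm_smul _ _
    _ ≤ |t| * ∫ σ in (0 : ℝ)..1, C * Real.exp (L * (|t| * σ)) := by
      gcongr
      exact intervalIntegral.norm_integral_le_of_norm_le zero_le_one
        (.of_forall integrand_le) (Continuous.intervalIntegrable (by fun_prop) _ _)
    _ = C / L * (Real.exp (L * |t|) - 1) := integral_exp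
    _ ≤ C / L * Real.exp (L * |t|) := by gcongr; linarith

end RadialPrimitive

section RadialIntegral

variable {E F : Type*} [NormedAddCommGroup E] [NormedSpace ℝ E] [NormedAddCommGroup F]
  [NormedSpace ℝ F]

/-- The solution `(v, w)` of the linear radial problem `v' + (k/t) v = h₁`, `w' = h₂` with
`v(0) = 0` and `w(0) = a`. -/
noncomputable def radialIntegral (k : ℕ) (a : F) (h : ℝ → E × F) (t : ℝ) : E × F :=
  (radialPrimitive k (fun s ↦ (h s).1) t, a + radialPrimitive 0 (fun s ↦ (h s).2) t)

variable {k : ℕ} {a a' : F} {h h' : ℝ → E × F} {t : ℝ}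

lemma continuous_radialIntegral (hh : Continuous h) : Continuous (radialIntegral k a h) :=
  (continuous_radialPrimitive hh.fst).prodMk
    (continuous_const.add (continuous_radialPrimitive hh.snd))

lemma hasDerivAt_radialIntegral [CompleteSpace E] [CompleteSpace F] (hh : Continuous h)
    (ht : t ≠ 0) :
    HasDerivAt (radialIntegral k a h) (h t - ((k / t : ℝ) • (radialIntegral k a h t).1, 0)) t := by
  refine ((hasDerivAt_radialPrimitive hh.fst ht).prodMk
    ((hasDerivAt_radialPrimitive hh.snd ht).const_add a)).congr_deriv ?_
  ext <;> simp [radialIntegral]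

lemma exp_neg_mul_norm_radialIntegral_sub_le {C L : ℝ} (hL : 0 < L) (hh : Continuous h)
    (hh' : Continuous h') (hdiff : ∀ s, ‖h s - h' s‖ ≤ C * Real.exp (L * |s|)) :
    Real.exp (-(L * |t|)) * ‖radialIntegral k a h t - radialIntegral k a' h' t‖
      ≤ ‖a - a'‖ + C / L := by
  have fst_le : ‖(radialIntegral k a h t - radialIntegral k a' h' t).1‖
      ≤ C / L * Real.exp (L * |t|) := by
    simp only [radialIntegral, Prod.fst_sub, radialPrimitive_sub hh.fst hh'.fst]
    exact norm_radialPrimitive_le hL fun s ↦ (norm_fst_le (h s - h' s)).trans (hdiff s)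
  have snd_le : ‖(radialIntegral k a h t - radialIntegral k a' h' t).2‖
      ≤ ‖a - a'‖ + C / L * Real.exp (L * |t|) := by
    simp only [radialIntegral, Prod.snd_sub, add_sub_add_comm, radialPrimitive_sub hh.snd hh'.snd]
    exact (norm_add_le _ _).trans (by
      gcongr
      exact norm_radialPrimitive_le hL fun s ↦ (norm_snd_le (h s - h' s)).trans (hdiff s))
  calc _ ≤ Real.exp (-(L * |t|)) * (‖a - a'‖ + C / L * Real.exp (L * |t|)) := by
        gcongr
        exact max_le (fst_le.trans (le_add_of_nonneg_left (norm_nonneg _))) snd_le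
    _ = Real.exp (-(L * |t|)) * ‖a - a'‖ + C / L := by
      rw [Real.exp_neg]; field_simp
    _ ≤ 1 * ‖a - a'‖ + C / L := by
      gcongr
      exact Real.exp_le_one_iff.2 (neg_nonpos.2 (by positivity))
    _ = ‖a - a'‖ + C / L := by rw [one_mul]

lemma exp_neg_mul_norm_radialIntegral_le {C L : ℝ} (hL : 0 < L) (hh : Continuous h)
    (hbound : ∀ s, ‖h s‖ ≤ C * Real.exp (L * |s|)) :
    Real.exp (-(L * |t|)) * ‖radialIntegral k a h t‖ ≤ ‖a‖ + C / L := by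
  have radialIntegral_zero : radialIntegral k 0 (fun _ ↦ (0 : E × F)) t = 0 := by
    ext <;> simp [radialIntegral]
  simpa [radialIntegral_zero] using exp_neg_mul_norm_radialIntegral_sub_le (k := k) (t := t)
    (a := a) (a' := 0) (h' := fun _ ↦ 0) (C := C) hL hh continuous_const (by simpa using hbound)

end RadialIntegral

section RadialFlow

variable {E F P : Type*} [NormedAddCommGroup E] [NormedSpace ℝ E] [NormedAddCommGroup F]
  [NormedSpace ℝ F] [PseudoMetricSpace P]

/-- `u = (v, w)` solves the singular radial initial value problem `v' + (k/t) v = N₁(v, w)`,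
`w' = N₂(v, w)` for `t > 0`, with `v(0) = 0` and `w(0) = a`. -/
structure IsRadialSolution (k : ℕ) (N : E × F → E × F) (a : F) (u : ℝ → E × F) : Prop where
  continuous : Continuous u
  apply_zero : u 0 = (0, a)
  hasDerivAt : ∀ t > 0, HasDerivAt u (N (u t) - ((k / t : ℝ) • (u t).1, 0)) t

variable {k : ℕ} {K : ℝ≥0} {N : P × (E × F) → E × F}

/-- The exponential growth rate allowed for solutions of a radial problem with Lipschitz constant
`K`; it makes the Picard operator a contraction of ratio `1/2`. -/
noncomputable def growthRate (K : ℝ≥0) : ℝ := 2 * K + 1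

lemma growthRate_pos : 0 < growthRate K := by unfold growthRate; positivity

lemma mul_div_growthRate_le {x : ℝ} (hx : 0 ≤ x) : K * x / growthRate K ≤ 1 / 2 * x := by
  rw [div_le_iff₀ growthRate_pos, growthRate]
  linarith

lemma one_le_exp_growthRate (s : ℝ) : 1 ≤ Real.exp (growthRate K * |s|) :=
  Real.one_le_exp (mul_nonneg growthRate_pos.le (abs_nonneg s))

lemma norm_field_le (hN : LipschitzWith K N) (p : P) (f : ℝ →ᵇ E × F) (s : ℝ) :
    ‖N (p, Real.exp (growthRate K * |s|) • f s)‖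
      ≤ (‖N (p, 0)‖ + K * ‖f‖) * Real.exp (growthRate K * |s|) := by
  have lipschitz := hN.dist_le_mul (p, Real.exp (growthRate K * |s|) • f s) (p, 0)
  rw [dist_eq_norm, dist_prod_same_left, dist_zero_right, norm_smul,
    Real.norm_of_nonneg (Real.exp_nonneg _)] at lipschitz
  calc _ ≤ ‖N (p, 0)‖ + K * (Real.exp (growthRate K * |s|) * ‖f s‖) :=
        (norm_le_norm_add_norm_sub' _ _).trans (by gcongr)
    _ ≤ ‖N (p, 0)‖ * Real.exp (growthRate K * |s|)
        + K * (Real.exp (growthRate K * |s|) * ‖f‖) := by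
      gcongr
      · exact le_mul_of_one_le_right (norm_nonneg _) (one_le_exp_growthRate s)
      · exact f.norm_coe_le_norm s
    _ = _ := by rw [add_mul]; ring

lemma norm_field_sub_le (hN : LipschitzWith K N) (p p' : P) (f f' : ℝ →ᵇ E × F) (s : ℝ) :
    ‖N (p, Real.exp (growthRate K * |s|) • f s) - N (p', Real.exp (growthRate K * |s|) • f' s)‖
      ≤ K * max (dist p p') (dist f f') * Real.exp (growthRate K * |s|) := by
  rw [← dist_eq_norm, mul_assoc]
  refine (hN.dist_le_mul _ _).trans ?_
  gcongr
  rw [Prod.dist_eq, max_mul_of_nonneg _ _ (Real.exp_nonneg _), dist_smul₀,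
    Real.norm_of_nonneg (Real.exp_nonneg _)]
  refine max_le_max (le_mul_of_one_le_right dist_nonneg (one_le_exp_growthRate s)) ?_
  rw [mul_comm]
  gcongr
  exact BoundedContinuousFunction.dist_coe_le_dist s

lemma continuous_field (hN : LipschitzWith K N) (p : P) (f : ℝ →ᵇ E × F) :
    Continuous fun s ↦ N (p, Real.exp (growthRate K * |s|) • f s) :=
  hN.continuous.comp (by have := f.continuous; fun_prop)

/-- The Picard operator of the radial problem with parameter and initial value `q = (p, a)`, acting
on `f(t) = e^{-L|t|} u(t)` rather than on `u`, so that the sup norm of `f` is an exponentially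
weighted norm of `u`. -/
noncomputable def weightedPicard (k : ℕ) (hN : LipschitzWith K N) (q : P × F)
    (f : ℝ →ᵇ E × F) : ℝ →ᵇ E × F :=
  BoundedContinuousFunction.ofNormedAddCommGroup
    (fun t ↦ Real.exp (-(growthRate K * |t|)) • radialIntegral k q.2
      (fun s ↦ N (q.1, Real.exp (growthRate K * |s|) • f s)) t)
    (Continuous.smul (f := fun t ↦ Real.exp (-(growthRate K * |t|))) (by fun_prop)
      (continuous_radialIntegral (continuous_field hN q.1 f)))
    (‖q.2‖ + (‖N (q.1, 0)‖ + K * ‖f‖) / growthRate K)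
    fun t ↦ by
      rw [norm_smul, Real.norm_of_nonneg (Real.exp_nonneg _)]
      exact exp_neg_mul_norm_radialIntegral_le growthRate_pos (continuous_field hN q.1 f)
        (norm_field_le hN q.1 f)

lemma weightedPicard_apply (hN : LipschitzWith K N) (q : P × F) (f : ℝ →ᵇ E × F) (t : ℝ) :
    weightedPicard k hN q f t = Real.exp (-(growthRate K * |t|)) • radialIntegral k q.2
      (fun s ↦ N (q.1, Real.exp (growthRate K * |s|) • f s)) t := rfl

lemma dist_weightedPicard_le (hN : LipschitzWith K N) (q q' : P × F) (f f' : ℝ →ᵇ E × F) :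
    dist (weightedPicard k hN q f) (weightedPicard k hN q' f')
      ≤ dist q.2 q'.2 + 1 / 2 * max (dist q.1 q'.1) (dist f f') := by
  refine (BoundedContinuousFunction.dist_le (by positivity)).2 fun t ↦ ?_
  rw [weightedPicard_apply, weightedPicard_apply, dist_smul₀,
    Real.norm_of_nonneg (Real.exp_nonneg _), dist_eq_norm, dist_eq_norm q.2]
  refine (exp_neg_mul_norm_radialIntegral_sub_le growthRate_pos (continuous_field hN q.1 f)
    (continuous_field hN q'.1 f') (norm_field_sub_le hN q.1 q'.1 f f')).trans ?_
  gcongr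
  exact mul_div_growthRate_le (by positivity)

lemma contractingWith_weightedPicard (hN : LipschitzWith K N) (q : P × F) :
    ContractingWith (1 / 2) (weightedPicard k hN q) :=
  ⟨NNReal.half_lt_self one_ne_zero, .of_dist_le_mul fun f f' ↦ by
    simpa using dist_weightedPicard_le hN q q f f'⟩

variable [CompleteSpace E] [CompleteSpace F]

/-- The solution of the radial problem with parameter `p` and initial value `a`, for `q = (p, a)`,
in the weighted form of `weightedPicard`. -/
noncomputable def weightedSolution (k : ℕ) (hN : LipschitzWith K N) (q : P × F) : ℝ →ᵇ E × F :=
  (contractingWith_weightedPicard (k := k) hN q).fixedPoint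

lemma lipschitzWith_weightedSolution (hN : LipschitzWith K N) :
    LipschitzWith 3 (weightedSolution k hN) := .of_dist_le_mul fun q q' ↦ by
  have picard_le (f : ℝ →ᵇ E × F) : dist (weightedPicard k hN q f) (weightedPicard k hN q' f)
      ≤ 3 / 2 * dist q q' := by
    have := dist_weightedPicard_le (k := k) hN q q' f f
    rw [dist_self, max_eq_left dist_nonneg] at this
    linarith [le_max_left (dist q.1 q'.1) (dist q.2 q'.2),
      le_max_right (dist q.1 q'.1) (dist q.2 q'.2), Prod.dist_eq (x := q) (y := q')]
  refine ((contractingWith_weightedPicard hN q).fixedPoint_lipschitz_in_map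
    (contractingWith_weightedPicard hN q') picard_le).trans_eq ?_
  norm_num
  ring

/-- The flow of the radial problem with parameters: `radialFlow k hN p a` is the solution for the
parameter `p` and the initial value `a`. -/
noncomputable def radialFlow (k : ℕ) (hN : LipschitzWith K N) (p : P) (a : F) (t : ℝ) : E × F :=
  Real.exp (growthRate K * |t|) • weightedSolution k hN (p, a) t

lemma continuous_radialFlow (hN : LipschitzWith K N) :
    Continuous fun z : P × F × ℝ ↦ radialFlow k hN z.1 z.2.1 z.2.2 := by
  have := (lipschitzWith_weightedSolution (k := k) hN).continuous
  unfold radialFlow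
  fun_prop

lemma radialFlow_eq_radialIntegral (hN : LipschitzWith K N) (p : P) (a : F) :
    radialFlow k hN p a = radialIntegral k a fun s ↦ N (p, radialFlow k hN p a s) := by
  ext1 t
  have fixed : weightedPicard k hN (p, a) (weightedSolution k hN (p, a))
      = weightedSolution k hN (p, a) :=
    (contractingWith_weightedPicard hN (p, a)).fixedPoint_isFixedPt
  rw [radialFlow, ← fixed, weightedPicard_apply, smul_smul, ← Real.exp_add,
    add_neg_cancel, Real.exp_zero, one_smul]
  rfl

theorem isRadialSolution_radialFlow (hN : LipschitzWith K N) (p : P) (a : F) :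
    IsRadialSolution k (fun x ↦ N (p, x)) a (radialFlow k hN p a) := by
  have hcont : Continuous (radialFlow k hN p a) :=
    (continuous_radialFlow hN).comp (f := fun t ↦ (p, a, t)) (by fun_prop)
  have hfield : Continuous fun s ↦ N (p, radialFlow k hN p a s) :=
    hN.continuous.comp (by fun_prop)
  refine ⟨hcont, ?_, fun t ht ↦ ?_⟩
  · rw [radialFlow_eq_radialIntegral]
    simp [radialIntegral]
  · have := hasDerivAt_radialIntegral (k := k) (a := a) hfield ht.ne'
    rwa [← radialFlow_eq_radialIntegral] at this

end RadialFlow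

section Monotonicity

variable {f f' : ℝ → ℝ} {a b c : ℝ}

lemma apply_le_apply_of_hasDerivAt_nonneg (hab : a ≤ b) (hf : ContinuousOn f (Icc a b))
    (hd : ∀ t ∈ Ioo a b, HasDerivAt f (f' t) t) (hf' : ∀ t ∈ Ioo a b, 0 ≤ f' t) : f a ≤ f b :=
  monotoneOn_of_hasDerivWithinAt_nonneg (convex_Icc a b) hf
    (fun t ht ↦ (hd t (by rwa [interior_Icc] at ht)).hasDerivWithinAt)
    (fun t ht ↦ hf' t (by rwa [interior_Icc] at ht)) (left_mem_Icc.2 hab) (right_mem_Icc.2 hab) hab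

lemma apply_lt_apply_of_hasDerivAt_pos (hab : a < b) (hf : ContinuousOn f (Icc a b))
    (hd : ∀ t ∈ Ioo a b, HasDerivAt f (f' t) t) (hf' : ∀ t ∈ Ioo a b, 0 < f' t) : f a < f b :=
  strictMonoOn_of_hasDerivWithinAt_pos (convex_Icc a b) hf
    (fun t ht ↦ (hd t (by rwa [interior_Icc] at ht)).hasDerivWithinAt)
    (fun t ht ↦ hf' t (by rwa [interior_Icc] at ht)) (left_mem_Icc.2 hab.le)
    (right_mem_Icc.2 hab.le) hab

lemma exp_mul_le_exp_mul_of_hasDerivAt (hab : a ≤ b) (hf : ContinuousOn f (Icc a b))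
    (hd : ∀ t ∈ Ioo a b, HasDerivAt f (f' t) t) (hf' : ∀ t ∈ Ioo a b, 0 ≤ c * f t + f' t) :
    Real.exp (c * a) * f a ≤ Real.exp (c * b) * f b :=
  apply_le_apply_of_hasDerivAt_nonneg (f := fun t ↦ Real.exp (c * t) * f t)
    (f' := fun t ↦ Real.exp (c * t) * (c * f t + f' t)) hab (by fun_prop)
    (fun t ht ↦ ((((hasDerivAt_id t).const_mul c).exp.mul (hd t ht))).congr_deriv (by
      simp only [id]; ring))
    fun t ht ↦ mul_nonneg (Real.exp_nonneg _) (hf' t ht)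

lemma exists_first_exit {X : Type*} [TopologicalSpace X] {γ : ℝ → X} {U : Set X}
    (hγ : Continuous γ) (hU : IsOpen U) (hstart : ∀ᶠ t in 𝓝[>] 0, γ t ∈ U)
    (hexit : ∃ t > 0, γ t ∉ U) :
    ∃ T > 0, (∀ t ∈ Ioo 0 T, γ t ∈ U) ∧ γ T ∈ closure U ∧ γ T ∉ U := by
  obtain ⟨τ, hτ, hstart⟩ := mem_nhdsGT_iff_exists_Ioo_subset.1 hstart
  have exit_ge {t : ℝ} (ht : 0 < t ∧ γ t ∉ U) : τ ≤ t := not_lt.1 fun h ↦ ht.2 (hstart ⟨ht.1, h⟩)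
  set Z := Ici τ ∩ γ ⁻¹' Uᶜ
  have hZ_nonempty : Z.Nonempty := hexit.imp fun t ht ↦ ⟨exit_ge ht, ht.2⟩
  have hZ_bdd : BddBelow Z := ⟨τ, fun _ ht ↦ ht.1⟩
  have hT : sInf Z ∈ Z :=
    (isClosed_Ici.inter (hU.isClosed_compl.preimage hγ)).csInf_mem hZ_nonempty hZ_bdd
  have hT_pos : 0 < sInf Z := hτ.trans_le hT.1
  have before : ∀ t ∈ Ioo 0 (sInf Z), γ t ∈ U := fun t ht ↦ by_contra fun h ↦
    ht.2.not_ge (csInf_le hZ_bdd ⟨exit_ge ⟨ht.1, h⟩, h⟩)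
  refine ⟨sInf Z, hT_pos, before, ?_, hT.2⟩
  exact mem_closure_of_tendsto (hγ.continuousAt.tendsto.mono_left nhdsWithin_le_nhds)
    (mem_of_superset (Ioo_mem_nhdsLT hT_pos) before)

end Monotonicity

namespace IsRadialSolution

variable {E F : Type*} [NormedAddCommGroup E] [NormedSpace ℝ E] [NormedAddCommGroup F]
  [NormedSpace ℝ F] {k : ℕ} {N N' : E × F → E × F} {a : F} {u : ℝ → E × F} {t : ℝ}

lemma hasDerivAt_fst (hu : IsRadialSolution k N a u) (ht : 0 < t) :
    HasDerivAt (fun s ↦ (u s).1) ((N (u t)).1 - (k / t : ℝ) • (u t).1) t :=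
  (ContinuousLinearMap.fst ℝ E F).hasFDerivAt.comp_hasDerivAt t (hu.hasDerivAt t ht)

lemma hasDerivAt_snd (hu : IsRadialSolution k N a u) (ht : 0 < t) :
    HasDerivAt (fun s ↦ (u s).2) (N (u t)).2 t :=
  ((ContinuousLinearMap.snd ℝ E F).hasFDerivAt.comp_hasDerivAt t
    (hu.hasDerivAt t ht)).congr_deriv (sub_zero _)

lemma congr (hu : IsRadialSolution k N a u) (hN : ∀ t > 0, N' (u t) = N (u t)) :
    IsRadialSolution k N' a u :=
  ⟨hu.continuous, hu.apply_zero, fun t ht ↦ by rw [hN t ht]; exact hu.hasDerivAt t ht⟩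

lemma rescale {α β y : ℝ} (hu : IsRadialSolution k N a u) (hy : 0 < y)
    (hN : ∀ x, N' (α • x.1, β • x.2) = (y • α • (N x).1, y • β • (N x).2)) :
    IsRadialSolution k N' (β • a) fun r ↦ (α • (u (y * r)).1, β • (u (y * r)).2) where
  continuous := by have := hu.continuous; fun_prop
  apply_zero := by simp [hu.apply_zero]
  hasDerivAt r hr := by
    have hyr : HasDerivAt (fun r ↦ y * r) y r := by
      simpa only [id, mul_one] using (hasDerivAt_id r).const_mul y
    have fst := ((hu.hasDerivAt_fst (mul_pos hy hr)).scomp r hyr).const_smul α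
    have snd := ((hu.hasDerivAt_snd (mul_pos hy hr)).scomp r hyr).const_smul β
    refine (fst.prodMk snd).congr_deriv (Prod.ext ?_ ?_)
    · simp only [hN, Prod.fst_sub, smul_sub, smul_smul]
      congr 2
      · ring
      · field_simp
    · simp only [hN, Prod.snd_sub, sub_zero, smul_smul]
      congr 1
      ring

lemma contDiffOn (hu : IsRadialSolution k N a u) {Ω : Set (E × F)} (hN : ContDiffOn ℝ ∞ N Ω)
    (hΩ : ∀ t > 0, u t ∈ Ω) : ContDiffOn ℝ ∞ u (Ioi 0) := by
  refine contDiffOn_infty.2 fun n ↦ ?_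
  induction n with
  | zero => exact contDiffOn_zero.2 hu.continuous.continuousOn
  | succ n ih =>
    have differentiableOn : DifferentiableOn ℝ u (Ioi 0) := fun t ht ↦
      (hu.hasDerivAt t ht).differentiableAt.differentiableWithinAt
    refine (contDiffOn_succ_iff_deriv_of_isOpen (n := n) isOpen_Ioi).2
      ⟨differentiableOn, by simp, ?_⟩
    have hcoeff : ContDiffOn ℝ n (fun t : ℝ ↦ (k / t : ℝ)) (Ioi 0) :=
      contDiffOn_const.div contDiffOn_id fun t ht ↦ ne_of_gt ht
    refine ContDiffOn.congr (((hN.of_le (by exact_mod_cast le_top)).comp ih hΩ).sub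
      ((hcoeff.smul ih.fst).prodMk contDiffOn_const)) fun t ht ↦ (hu.hasDerivAt t ht).deriv

lemma hasDerivAt_pow_smul_fst (hu : IsRadialSolution k N a u) (ht : 0 < t) :
    HasDerivAt (fun s ↦ s ^ k • (u s).1) (t ^ k • (N (u t)).1) t := by
  refine ((hasDerivAt_pow k t).smul (hu.hasDerivAt_fst ht)).congr_deriv ?_
  rw [smul_sub, smul_smul, sub_add, sub_eq_self, sub_eq_zero]
  congr 1
  rcases k with _ | k
  · simp
  · rw [Nat.add_sub_cancel]
    field_simp
    ring

end IsRadialSolution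

namespace IsRadialSolution

variable {F : Type*} [NormedAddCommGroup F] [NormedSpace ℝ F] {k : ℕ} {N : ℝ × F → ℝ × F} {a : F}
  {u : ℝ → ℝ × F} {t C : ℝ}

lemma fst_le (hu : IsRadialSolution k N a u) (ht : 0 ≤ t)
    (hN : ∀ s ∈ Ioo 0 t, (N (u s)).1 ≤ C) : (u t).1 ≤ C * t / (k + 1) := by
  rcases ht.eq_or_lt with rfl | ht
  · simp [hu.apply_zero]
  have hd (s : ℝ) (hs : s ∈ Ioo 0 t) : HasDerivAt
      (fun s ↦ C * s ^ (k + 1) / (k + 1) - s ^ k • (u s).1) (s ^ k * (C - (N (u s)).1)) s :=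
    ((((hasDerivAt_pow (k + 1) s).const_mul C).div_const (k + 1)).sub
      (hu.hasDerivAt_pow_smul_fst hs.1)).congr_deriv (by
        rw [Nat.add_sub_cancel, smul_eq_mul]; push_cast; field_simp)
  have := apply_le_apply_of_hasDerivAt_nonneg ht.le (by have := hu.continuous; fun_prop) hd
    fun s hs ↦ mul_nonneg (pow_nonneg hs.1.le k) (sub_nonneg.2 (hN s hs))
  have hpow : 0 < t ^ k := pow_pos ht k
  simp only [hu.apply_zero, zero_pow k.succ_ne_zero, mul_zero, zero_div, sub_zero,
    smul_eq_mul, pow_succ, sub_nonneg] at this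
  refine le_of_mul_le_mul_left (this.trans_eq ?_) hpow
  ring

lemma le_fst (hu : IsRadialSolution k N a u) (ht : 0 ≤ t)
    (hN : ∀ s ∈ Ioo 0 t, C ≤ (N (u s)).1) : C * t / (k + 1) ≤ (u t).1 := by
  have reflected := hu.rescale (α := -1) (β := 1) one_pos
    (N' := fun x ↦ (-(N (-x.1, x.2)).1, (N (-x.1, x.2)).2)) fun x ↦ by simp
  have := reflected.fst_le (C := -C) ht fun s hs ↦ by simpa using hN s hs
  simp only [one_mul, neg_smul, one_smul] at this
  rwa [neg_mul, neg_div, neg_le_neg_iff] at this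

lemma fst_pos (hu : IsRadialSolution k N a u) (ht : 0 < t)
    (hN : ∀ s ∈ Ioo 0 t, 0 < (N (u s)).1) : 0 < (u t).1 := by
  have := apply_lt_apply_of_hasDerivAt_pos ht (by have := hu.continuous; fun_prop)
    (fun s hs ↦ hu.hasDerivAt_pow_smul_fst hs.1)
    fun s hs ↦ mul_pos (pow_pos hs.1 k) (hN s hs)
  simp only [hu.apply_zero, smul_eq_mul, mul_zero] at this
  exact pos_of_mul_pos_right this (pow_pos ht k).le

lemma eventually_fst_pos (hu : IsRadialSolution k N a u) (hN : Continuous N)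
    (hNa : 0 < (N (0, a)).1) : ∀ᶠ t in 𝓝[>] 0, 0 < (u t).1 := by
  have hpos : ∀ᶠ s in 𝓝[>] 0, 0 < (N (u s)).1 :=
    ((hN.comp hu.continuous).fst.continuousAt.tendsto.mono_left nhdsWithin_le_nhds).eventually
      (lt_mem_nhds (by simpa [hu.apply_zero] using hNa))
  obtain ⟨τ, hτ, hpos⟩ := mem_nhdsGT_iff_exists_Ioo_subset.1 hpos
  filter_upwards [Ioo_mem_nhdsGT hτ] with t ht
  exact hu.fst_pos ht.1 fun s hs ↦ hpos ⟨hs.1, hs.2.trans ht.2⟩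

end IsRadialSolution

/-! ### The rescaled and the truncated field -/

section Shooting

variable {X Q : Type*} {U U' W W' : Set X}

/-- The trajectory `u`, started at time `0`, reaches `W` without having left `U`. -/
def ReachesWithin (u : ℝ → X) (U W : Set X) : Prop :=
  ∃ t ≥ 0, u t ∈ W ∧ ∀ s ∈ Icc 0 t, u s ∈ U

lemma ReachesWithin.not_reachesWithin {u : ℝ → X} (h : ReachesWithin u U W) (hWU : Disjoint W U')
    (hWU' : Disjoint W' U) : ¬ ReachesWithin u U' W' := by
  rintro ⟨t', ht', hW', hU'⟩
  obtain ⟨t, ht, hW, hU⟩ := h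
  rcases le_total t t' with htt' | htt'
  · exact hWU.notMem_of_mem_left hW (hU' t ⟨ht, htt'⟩)
  · exact hWU'.notMem_of_mem_left hW' (hU t' ⟨ht', htt'⟩)

variable [TopologicalSpace X] [TopologicalSpace Q] {Φ : Q → ℝ → X}

lemma isOpen_setOf_reachesWithin (hΦ : Continuous (Function.uncurry Φ)) (hU : IsOpen U)
    (hW : IsOpen W) : IsOpen {q | ReachesWithin (Φ q) U W} := by
  refine isOpen_iff_mem_nhds.2 fun q ⟨t, ht, hqW, hqU⟩ ↦ ?_
  have hmemW : ∀ᶠ q' in 𝓝 q, Φ q' t ∈ W :=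
    (hW.preimage (hΦ.comp (Continuous.prodMk_left t))).mem_nhds hqW
  have hmemU : ∀ᶠ q' in 𝓝 q, ∀ s ∈ Icc 0 t, Φ q' s ∈ U :=
    isCompact_Icc.eventually_forall_of_forall_eventually fun s hs ↦
      (hU.preimage hΦ).mem_nhds (hqU s hs)
  filter_upwards [hmemW, hmemU] with q' hW' hU'
  exact ⟨t, ht, hW', hU'⟩

lemma exists_not_reachesWithin (hΦ : Continuous (Function.uncurry Φ)) (hU : IsOpen U)
    (hW : IsOpen W) (hU' : IsOpen U') (hW' : IsOpen W') (hWU : Disjoint W U')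
    (hWU' : Disjoint W' U) {S : Set Q} (hS : IsPreconnected S)
    (h : ∃ q ∈ S, ReachesWithin (Φ q) U W) (h' : ∃ q ∈ S, ReachesWithin (Φ q) U' W') :
    ∃ q ∈ S, ¬ ReachesWithin (Φ q) U W ∧ ¬ ReachesWithin (Φ q) U' W' := by
  by_contra! hcover
  obtain ⟨q, -, hq, hq'⟩ := hS _ _ (isOpen_setOf_reachesWithin hΦ hU hW)
    (isOpen_setOf_reachesWithin hΦ hU' hW') (fun q hq ↦ or_iff_not_imp_left.2 (hcover q hq)) h h'
  exact hq.not_reachesWithin hWU hWU' hq'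

end Shooting

section RpowEstimates

variable {θ r x y : ℝ}

lemma one_sub_rpow_le (hr : 0 ≤ r) (hr' : r ≤ 1) :
    1 - r ^ θ ≤ max 1 θ * (1 - r) := by
  rcases le_total θ 1 with hθ' | hθ'
  · rw [max_eq_left hθ', one_mul]
    gcongr
    simpa using Real.rpow_le_rpow_of_exponent_ge_of_imp hr hr' hθ' fun _ h ↦ absurd h one_ne_zero
  · have bernoulli := one_add_mul_self_le_rpow_one_add (s := r - 1) (by linarith) hθ'
    rw [add_sub_cancel] at bernoulli
    rw [max_eq_right hθ']
    linarith

lemma abs_rpow_sub_rpow_mul_max_le (hθ : 0 < θ) (hx : 0 ≤ x) (hy : 0 ≤ y) :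
    |x ^ θ - y ^ θ| * max x y ≤ max 1 θ * max x y ^ θ * |x - y| := by
  wlog hyx : y ≤ x generalizing x y
  · rw [abs_sub_comm, abs_sub_comm x, max_comm x]
    exact this hy hx (le_of_not_ge hyx)
  rcases hx.eq_or_lt with rfl | hx
  · rw [le_antisymm hyx hy, max_self, mul_zero]
    positivity
  have hratio := one_sub_rpow_le (θ := θ) (div_nonneg hy hx.le) (div_le_one_of_le₀ hyx hx.le)
  rw [Real.div_rpow hy hx.le] at hratio
  rw [max_eq_left hyx, abs_of_nonneg (sub_nonneg.2 (Real.rpow_le_rpow hy hyx hθ.le)),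
    abs_of_nonneg (sub_nonneg.2 hyx)]
  calc (x ^ θ - y ^ θ) * x = x ^ θ * (1 - y ^ θ / x ^ θ) * x := by field_simp
    _ ≤ x ^ θ * (max 1 θ * (1 - y / x)) * x := by gcongr
    _ = max 1 θ * x ^ θ * (x - y) := by field_simp

end RpowEstimates

/-- The charge density `g² - f²` of the Dirac field, divided by `x²`, in the rescaled variables
`(v, w)`, in which `f² = x² μ v²` and `g² = x² w²`. -/
def density (μ v w : ℝ) : ℝ := w ^ 2 - μ * v ^ 2

/-- The right-hand side of the Dirac system after the scaling that, as `ε → 0`, turns it into the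
Lane–Emden system `v' + (2/t) v = |w|^{2θ} w`, `w' = -v`. It depends on `q = ((μ, δ), (v, w))`,
where `ε = μδ`. -/
noncomputable def rescaledField (θ : ℝ) (q : (ℝ × ℝ) × (ℝ × ℝ)) : ℝ × ℝ :=
  ((|density q.1.1 q.2.1 q.2.2| ^ θ - q.1.2) * q.2.2,
    -(1 - q.1.1 * (q.1.2 + |density q.1.1 q.2.1 q.2.2| ^ θ)) * q.2.1)

/-- The parameters `μ ∈ [0, 1/200]`, `δ ∈ [0, 1/2]` and states `0 ≤ v ≤ 10 w ≤ 10` in which the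
trapped solutions live. There the density is comparable to `w²`. -/
def admissible : Set ((ℝ × ℝ) × (ℝ × ℝ)) :=
  {q | (q.1.1 ∈ Icc 0 (1 / 200) ∧ q.1.2 ∈ Icc 0 (1 / 2)) ∧ q.2.1 ∈ Icc 0 (10 * q.2.2) ∧ q.2.2 ≤ 1}

section Admissible

variable {θ : ℝ} {q q' : (ℝ × ℝ) × (ℝ × ℝ)}

lemma isCompact_admissible : IsCompact admissible := by
  refine ((isCompact_Icc (a := (0 : ℝ)) (b := 1 / 200)).prod (isCompact_Icc (a := (0 : ℝ))
    (b := 1 / 2)) |>.prod ((isCompact_Icc (a := (0 : ℝ)) (b := 10)).prod (isCompact_Icc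
    (a := (0 : ℝ)) (b := 1)))).of_isClosed_subset ?_ ?_
  · simp only [admissible, mem_Icc, ofPred_and]
    refine ((IsClosed.inter ?_ ?_).inter (.inter ?_ ?_)).inter (.inter (.inter ?_ ?_) ?_) <;>
      exact isClosed_le (by fun_prop) (by fun_prop)
  · rintro q ⟨⟨hμ, hδ⟩, ⟨hv, hvw⟩, hw⟩
    exact ⟨⟨hμ, hδ⟩, ⟨hv, by linarith⟩, by linarith, hw⟩

lemma sq_div_two_le_density (hq : q ∈ admissible) :
    q.2.2 ^ 2 / 2 ≤ density q.1.1 q.2.1 q.2.2 := by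
  obtain ⟨⟨⟨-, hμ⟩, -⟩, ⟨hv, hvw⟩, -⟩ := hq
  have : q.1.1 * q.2.1 ^ 2 ≤ 1 / 200 * (10 * q.2.2) ^ 2 := by gcongr
  unfold density
  linarith

lemma density_le_sq (hq : q ∈ admissible) : density q.1.1 q.2.1 q.2.2 ≤ q.2.2 ^ 2 :=
  sub_le_self _ (mul_nonneg hq.1.1.1 (sq_nonneg _))

lemma density_nonneg (hq : q ∈ admissible) : 0 ≤ density q.1.1 q.2.1 q.2.2 :=
  (by positivity : (0 : ℝ) ≤ _).trans (sq_div_two_le_density hq)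

lemma admissible_snd_nonneg (hq : q ∈ admissible) : 0 ≤ q.2.2 := by
  linarith [hq.2.1.1, hq.2.1.2]

lemma density_le_one (hq : q ∈ admissible) : density q.1.1 q.2.1 q.2.2 ≤ 1 :=
  (density_le_sq hq).trans (pow_le_one₀ (admissible_snd_nonneg hq) hq.2.2)

lemma abs_density_sub_le (hq : q ∈ admissible) (hq' : q' ∈ admissible) :
    |density q.1.1 q.2.1 q.2.2 - density q'.1.1 q'.2.1 q'.2.2|
      ≤ 103 * max q.2.2 q'.2.2 * dist q q' := by
  set M := max q.2.2 q'.2.2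
  have hwM : q.2.2 ≤ M := le_max_left _ _
  have hwM' : q'.2.2 ≤ M := le_max_right _ _
  have hM : M ≤ 1 := max_le hq.2.2 hq'.2.2
  have hw := admissible_snd_nonneg hq
  have hw' := admissible_snd_nonneg hq'
  obtain ⟨-, ⟨hv, hvw⟩, -⟩ := hq
  obtain ⟨⟨⟨hμ, hμ'⟩, -⟩, ⟨hv', hvw'⟩, -⟩ := hq'
  have hdμ : |q.1.1 - q'.1.1| ≤ dist q q' := (le_max_left _ _).trans (le_max_left _ _)
  have hdv : |q.2.1 - q'.2.1| ≤ dist q q' := (le_max_left _ _).trans (le_max_right _ _)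
  have hdw : |q.2.2 - q'.2.2| ≤ dist q q' := (le_max_right _ _).trans (le_max_right _ _)
  calc |density q.1.1 q.2.1 q.2.2 - density q'.1.1 q'.2.1 q'.2.2|
      = |(q.2.2 + q'.2.2) * (q.2.2 - q'.2.2) - q.2.1 ^ 2 * (q.1.1 - q'.1.1)
          - q'.1.1 * (q.2.1 + q'.2.1) * (q.2.1 - q'.2.1)| := by
        congr 1
        unfold density
        ring
    _ ≤ (q.2.2 + q'.2.2) * |q.2.2 - q'.2.2| + q.2.1 ^ 2 * |q.1.1 - q'.1.1|
          + q'.1.1 * (q.2.1 + q'.2.1) * |q.2.1 - q'.2.1| := by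
        refine (abs_sub _ _).trans (add_le_add ((abs_sub _ _).trans_eq ?_) ?_)
        · rw [abs_mul, abs_mul, abs_of_nonneg (add_nonneg hw hw'), abs_sq]
        · rw [abs_mul, abs_of_nonneg (mul_nonneg hμ (add_nonneg hv hv'))]
    _ ≤ (M + M) * dist q q' + (10 * 1) * (10 * M) * dist q q'
          + 1 / 200 * (10 * M + 10 * M) * dist q q' := by
        rw [sq]
        gcongr <;> linarith
    _ ≤ 103 * M * dist q q' := by
        nlinarith [mul_nonneg (hw.trans hwM) (dist_nonneg (x := q) (y := q'))]

lemma abs_density_rpow_sub_mul_max_le (hθ : 0 < θ) (hq : q ∈ admissible) (hq' : q' ∈ admissible) :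
    |density q.1.1 q.2.1 q.2.2 ^ θ - density q'.1.1 q'.2.1 q'.2.2 ^ θ| * max q.2.2 q'.2.2
      ≤ 206 * max 1 θ * dist q q' := by
  set M := max q.2.2 q'.2.2
  set s := density q.1.1 q.2.1 q.2.2
  set s' := density q'.1.1 q'.2.1 q'.2.2
  have hM : 0 ≤ M := (admissible_snd_nonneg hq).trans (le_max_left _ _)
  rcases hM.eq_or_lt with hM | hM
  · rw [← hM, mul_zero]
    positivity
  have hsM : M ^ 2 ≤ 2 * max s s' := by
    have hs := sq_div_two_le_density hq
    have hs' := sq_div_two_le_density hq'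
    rcases max_choice q.2.2 q'.2.2 with hmax | hmax <;> simp only [M, hmax]
    · linarith [le_max_left s s']
    · linarith [le_max_right s s']
  have hs_one : max s s' ^ θ ≤ 1 := Real.rpow_le_one ((density_nonneg hq).trans (le_max_left _ _))
    (max_le (density_le_one hq) (density_le_one hq')) hθ.le
  refine le_of_mul_le_mul_right ?_ hM
  calc |s ^ θ - s' ^ θ| * M * M = |s ^ θ - s' ^ θ| * M ^ 2 := by ring
    _ ≤ |s ^ θ - s' ^ θ| * (2 * max s s') := by gcongr
    _ = 2 * (|s ^ θ - s' ^ θ| * max s s') := by ring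
    _ ≤ 2 * (max 1 θ * max s s' ^ θ * |s - s'|) := by
      gcongr 2 * ?_
      exact abs_rpow_sub_rpow_mul_max_le hθ (density_nonneg hq) (density_nonneg hq')
    _ ≤ 2 * (max 1 θ * 1 * (103 * M * dist q q')) := by
      gcongr
      exact abs_density_sub_le hq hq'
    _ = 206 * max 1 θ * dist q q' * M := by ring

lemma lipschitzOnWith_density_rpow_mul (hθ : 0 < θ) {ℓ : (ℝ × ℝ) × (ℝ × ℝ) → ℝ}
    (hℓ : ∀ q ∈ admissible, |ℓ q| ≤ 10 * q.2.2) (hℓ' : LipschitzWith 1 ℓ) :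
    LipschitzOnWith (2060 * max 1 θ + 1).toNNReal
      (fun q ↦ |density q.1.1 q.2.1 q.2.2| ^ θ * ℓ q) admissible := by
  refine .of_dist_le_mul fun q hq q' hq' ↦ ?_
  rw [Real.coe_toNNReal _ (by positivity), Real.dist_eq, abs_of_nonneg (density_nonneg hq),
    abs_of_nonneg (density_nonneg hq')]
  have hdiff := abs_density_rpow_sub_mul_max_le hθ hq hq'
  set s := density q.1.1 q.2.1 q.2.2
  set s' := density q'.1.1 q'.2.1 q'.2.2
  have hs' : s' ^ θ ≤ 1 := Real.rpow_le_one (density_nonneg hq') (density_le_one hq') hθ.le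
  calc |s ^ θ * ℓ q - s' ^ θ * ℓ q'| = |(s ^ θ - s' ^ θ) * ℓ q + s' ^ θ * (ℓ q - ℓ q')| := by
        congr 1
        ring
    _ ≤ |s ^ θ - s' ^ θ| * |ℓ q| + s' ^ θ * |ℓ q - ℓ q'| := by
      refine (abs_add_le _ _).trans_eq ?_
      rw [abs_mul, abs_mul, abs_of_nonneg (Real.rpow_nonneg (density_nonneg hq') θ)]
    _ ≤ |s ^ θ - s' ^ θ| * (10 * max q.2.2 q'.2.2) + 1 * dist q q' := by
      gcongr
      · exact (hℓ q hq).trans (by gcongr; exact le_max_left _ _)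
      · simpa [Real.dist_eq] using hℓ'.dist_le_mul q q'
    _ ≤ (2060 * max 1 θ + 1) * dist q q' := by linarith

lemma exists_lipschitzOnWith_rescaledField (hθ : 0 < θ) :
    ∃ K, LipschitzOnWith K (rescaledField θ) admissible := by
  set ι : (ℝ × ℝ) × (ℝ × ℝ) → ((ℝ × ℝ) × (ℝ × ℝ)) × (ℝ × ℝ) := fun q ↦
    (q, (|density q.1.1 q.2.1 q.2.2| ^ θ * q.2.1, |density q.1.1 q.2.1 q.2.2| ^ θ * q.2.2)) with hι
  set G : ((ℝ × ℝ) × (ℝ × ℝ)) × (ℝ × ℝ) → ℝ × ℝ := fun z ↦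
    (z.2.2 - z.1.1.2 * z.1.2.2,
      -(z.1.2.1 - z.1.1.1 * (z.1.1.2 * z.1.2.1 + z.2.1))) with hG
  have hv := lipschitzOnWith_density_rpow_mul hθ (ℓ := fun q ↦ q.2.1)
    (fun q hq ↦ by rw [abs_of_nonneg hq.2.1.1]; exact hq.2.1.2)
    (by simpa [Function.comp_def] using LipschitzWith.prod_fst.comp LipschitzWith.prod_snd)
  have hw := lipschitzOnWith_density_rpow_mul hθ (ℓ := fun q ↦ q.2.2)
    (fun q hq ↦ by
      have := admissible_snd_nonneg hq
      rw [abs_of_nonneg this]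
      linarith)
    (by simpa [Function.comp_def] using LipschitzWith.prod_snd.comp LipschitzWith.prod_snd)
  have hι_lipschitz : LipschitzOnWith _ ι admissible :=
    (LipschitzWith.id.lipschitzOnWith).prodMk (hv.prodMk hw)
  have hG_smooth : ContDiff ℝ 1 G := by fun_prop
  obtain ⟨K, hK⟩ := hG_smooth.locallyLipschitz.locallyLipschitzOn.exists_lipschitzOnWith_of_compact
    (isCompact_admissible.image_of_continuousOn hι_lipschitz.continuousOn)
  have hfactor : rescaledField θ = G ∘ ι := by
    ext q <;> simp only [Function.comp_apply, hι, hG, rescaledField] <;> ring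
  exact ⟨_, hfactor ▸ hK.comp hι_lipschitz (mapsTo_image ι admissible)⟩

end Admissible

section FieldBounds

variable {θ : ℝ} {q : (ℝ × ℝ) × (ℝ × ℝ)}

lemma abs_density_rpow_le_one (hθ : 0 < θ) (hq : q ∈ admissible) :
    |density q.1.1 q.2.1 q.2.2| ^ θ ≤ 1 := by
  rw [abs_of_nonneg (density_nonneg hq)]
  exact Real.rpow_le_one (density_nonneg hq) (density_le_one hq) hθ.le

lemma rescaledField_fst_le (hθ : 0 < θ) (hq : q ∈ admissible) : (rescaledField θ q).1 ≤ q.2.2 :=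
  mul_le_of_le_one_left (admissible_snd_nonneg hq)
    (by linarith [abs_density_rpow_le_one hθ hq, hq.1.2.1])

lemma neg_fst_le_rescaledField_snd (hq : q ∈ admissible) : -q.2.1 ≤ (rescaledField θ q).2 := by
  have : 0 ≤ q.1.1 * (q.1.2 + |density q.1.1 q.2.1 q.2.2| ^ θ) :=
    mul_nonneg hq.1.1.1 (add_nonneg hq.1.2.1 (by positivity))
  have := mul_nonneg this hq.2.1.1
  simp only [rescaledField]
  linarith

lemma half_le_one_sub_mul_add_rpow (hθ : 0 < θ) (hq : q ∈ admissible) :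
    1 / 2 ≤ 1 - q.1.1 * (q.1.2 + |density q.1.1 q.2.1 q.2.2| ^ θ) := by
  have : q.1.1 * (q.1.2 + |density q.1.1 q.2.1 q.2.2| ^ θ) ≤ 1 / 200 * (1 / 2 + 1) := by
    gcongr
    exacts [add_nonneg hq.1.2.1 (by positivity), hq.1.1.2, hq.1.2.2, abs_density_rpow_le_one hθ hq]
  linarith

lemma rescaledField_snd_le (hθ : 0 < θ) (hq : q ∈ admissible) :
    (rescaledField θ q).2 ≤ -(q.2.1 / 2) := by
  have := mul_le_mul_of_nonneg_right (half_le_one_sub_mul_add_rpow hθ hq) hq.2.1.1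
  simp only [rescaledField]
  linarith

end FieldBounds

section Truncation

variable {θ : ℝ} {q : (ℝ × ℝ) × (ℝ × ℝ)}

/-- The retraction onto `admissible` that clips one coordinate after the other. -/
noncomputable def truncate (q : (ℝ × ℝ) × (ℝ × ℝ)) : (ℝ × ℝ) × (ℝ × ℝ) :=
  ((max 0 (min q.1.1 (1 / 200)), max 0 (min q.1.2 (1 / 2))),
    (max 0 (min q.2.1 (10 * max 0 (min q.2.2 1))), max 0 (min q.2.2 1)))

lemma truncate_mem (q : (ℝ × ℝ) × (ℝ × ℝ)) : truncate q ∈ admissible :=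
  ⟨⟨⟨le_max_left _ _, max_le (by norm_num) (min_le_right _ _)⟩,
    ⟨le_max_left _ _, max_le (by norm_num) (min_le_right _ _)⟩⟩,
    ⟨le_max_left _ _, max_le (by simp [truncate]) (min_le_right _ _)⟩,
    max_le zero_le_one (min_le_right _ _)⟩

lemma truncate_eq_self (hq : q ∈ admissible) : truncate q = q := by
  have hw := admissible_snd_nonneg hq
  obtain ⟨⟨⟨hμ, hμ'⟩, ⟨hδ, hδ'⟩⟩, ⟨hv, hvw⟩, hw'⟩ := hq
  simp only [truncate, min_eq_left hμ', max_eq_right hμ, min_eq_left hδ', max_eq_right hδ,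
    min_eq_left hw', max_eq_right hw, min_eq_left hvw, max_eq_right hv]

lemma exists_lipschitzWith_truncate : ∃ K, LipschitzWith K truncate := by
  have hw : LipschitzWith _ fun q : (ℝ × ℝ) × (ℝ × ℝ) ↦ max 0 (min q.2.2 1) :=
    ((LipschitzWith.prod_snd.comp LipschitzWith.prod_snd).min_const 1).const_max 0
  have hμ : LipschitzWith _ fun q : (ℝ × ℝ) × (ℝ × ℝ) ↦ max 0 (min q.1.1 (1 / 200)) :=
    ((LipschitzWith.prod_fst.comp LipschitzWith.prod_fst).min_const _).const_max 0
  have hδ : LipschitzWith _ fun q : (ℝ × ℝ) × (ℝ × ℝ) ↦ max 0 (min q.1.2 (1 / 2)) :=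
    ((LipschitzWith.prod_snd.comp LipschitzWith.prod_fst).min_const _).const_max 0
  have hv : LipschitzWith _ fun q : (ℝ × ℝ) × (ℝ × ℝ) ↦
      max 0 (min q.2.1 (10 * max 0 (min q.2.2 1))) :=
    ((LipschitzWith.prod_fst.comp LipschitzWith.prod_snd).min
      ((lipschitzWith_smul (10 : ℝ)).comp hw)).const_max 0
  exact ⟨_, (hμ.prodMk hδ).prodMk (hv.prodMk hw)⟩

/-- A globally Lipschitz field that agrees with `rescaledField` on `admissible`. -/
noncomputable def truncatedField (θ : ℝ) (q : (ℝ × ℝ) × (ℝ × ℝ)) : ℝ × ℝ :=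
  rescaledField θ (truncate q)

lemma truncatedField_eq (hq : q ∈ admissible) : truncatedField θ q = rescaledField θ q := by
  rw [truncatedField, truncate_eq_self hq]

lemma exists_lipschitzWith_truncatedField (hθ : 0 < θ) :
    ∃ K, LipschitzWith K (truncatedField θ) := by
  obtain ⟨K, hK⟩ := exists_lipschitzOnWith_rescaledField hθ
  obtain ⟨K', hK'⟩ := exists_lipschitzWith_truncate
  exact ⟨K * K', lipschitzOnWith_univ.1
    (hK.comp hK'.lipschitzOnWith fun q _ ↦ truncate_mem q)⟩

end Truncation

/-- `u = (v, w)` is a trajectory of the truncated field for the parameters `p = (μ, δ)`, starting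
at `(0, a)`. -/
abbrev IsTruncatedSolution (θ : ℝ) (p : ℝ × ℝ) (a : ℝ) (u : ℝ → ℝ × ℝ) : Prop :=
  IsRadialSolution 2 (fun x ↦ truncatedField θ (p, x)) a u

namespace IsTruncatedSolution

variable {θ a t : ℝ} {p : ℝ × ℝ} {u : ℝ → ℝ × ℝ}

lemma antitoneOn_snd (hu : IsTruncatedSolution θ p a u) (hθ : 0 < θ) :
    AntitoneOn (fun t ↦ (u t).2) (Ici 0) :=
  antitoneOn_of_hasDerivWithinAt_nonpos (convex_Ici 0) hu.continuous.snd.continuousOn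
    (fun t ht ↦ (hu.hasDerivAt_snd (by simpa using ht)).hasDerivWithinAt)
    fun t _ ↦ (rescaledField_snd_le hθ (truncate_mem _)).trans
      (by linarith [(truncate_mem (p, u t)).2.1.1])

lemma snd_le (hu : IsTruncatedSolution θ p a u) (hθ : 0 < θ) (ht : 0 ≤ t) : (u t).2 ≤ a := by
  simpa [hu.apply_zero] using hu.antitoneOn_snd hθ self_mem_Ici ht ht

lemma snd_pos (hu : IsTruncatedSolution θ p a u) (ha : 0 < a) (ht : 0 ≤ t) : 0 < (u t).2 := by
  by_contra! hw
  have hnear : ∀ᶠ s in 𝓝[>] 0, u s ∈ {x | 0 < x.2} :=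
    (hu.continuous.continuousAt.tendsto.mono_left nhdsWithin_le_nhds).eventually
      ((isOpen_lt continuous_const continuous_snd).mem_nhds (by simpa [hu.apply_zero] using ha))
  have ht' : 0 < t := ht.lt_of_ne (by rintro rfl; simp [hu.apply_zero, ha.not_ge] at hw)
  obtain ⟨T, hT, hbefore, -, hexit⟩ := exists_first_exit hu.continuous
    (isOpen_lt continuous_const continuous_snd) hnear ⟨t, ht', not_lt.2 hw⟩
  have := exp_mul_le_exp_mul_of_hasDerivAt (c := 10) hT.le hu.continuous.snd.continuousOn
    (fun s hs ↦ hu.hasDerivAt_snd hs.1) fun s hs ↦ by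
      have hw := hbefore s hs
      have htrunc : (truncate (p, u s)).2.2 ≤ (u s).2 := max_le hw.le (min_le_left _ _)
      linarith [neg_fst_le_rescaledField_snd (θ := θ) (truncate_mem (p, u s)),
        (truncate_mem (p, u s)).2.1.2,
        show (truncatedField θ (p, u s)).2 = (rescaledField θ (truncate (p, u s))).2 from rfl]
  simp only [mul_zero, Real.exp_zero, hu.apply_zero, one_mul] at this
  exact hexit (pos_of_mul_pos_right (ha.trans_le this) (Real.exp_nonneg _))

lemma fst_le (hu : IsTruncatedSolution θ p a u) (hθ : 0 < θ) (ha : 0 < a) (ht : 0 ≤ t) :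
    (u t).1 ≤ a * t / 3 :=
  (IsRadialSolution.fst_le hu ht fun s hs ↦
    (rescaledField_fst_le hθ (truncate_mem (p, u s))).trans
      (max_le ha.le ((min_le_left _ _).trans (hu.snd_le hθ hs.1.le)))).trans_eq (by norm_num)

lemma le_snd (hu : IsTruncatedSolution θ p a u) (hθ : 0 < θ) (ha : 0 < a) (ht : 0 ≤ t) :
    a * (1 - t ^ 2 / 6) ≤ (u t).2 := by
  have hd (s : ℝ) (hs : s ∈ Ioo 0 t) : HasDerivAt (fun s ↦ (u s).2 + a * (s ^ 2 / 6))
      ((truncatedField θ (p, u s)).2 + a * s / 3) s :=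
    ((hu.hasDerivAt_snd hs.1).add (((hasDerivAt_pow 2 s).div_const 6).const_mul a)).congr_deriv
      (by push_cast; ring)
  have := apply_le_apply_of_hasDerivAt_nonneg ht
    (by have := hu.continuous; fun_prop) hd fun s hs ↦ by
      have htrunc : (truncate (p, u s)).2.1 ≤ a * s / 3 :=
        max_le (by have := hs.1; positivity) ((min_le_left _ _).trans (hu.fst_le hθ ha hs.1.le))
      have : -(truncate (p, u s)).2.1 ≤ (truncatedField θ (p, u s)).2 :=
        neg_fst_le_rescaledField_snd (truncate_mem (p, u s))
      linarith
  simp only [hu.apply_zero] at this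
  linarith

lemma fst_lt_ten_mul_snd (hu : IsTruncatedSolution θ p a u) (hθ : 0 < θ) (ha : 0 < a)
    (ht : 0 ≤ t) (ht' : t ≤ 1) : (u t).1 < 10 * (u t).2 := by
  have hv := hu.fst_le hθ ha ht
  have hw := hu.le_snd hθ ha ht
  nlinarith [mul_le_mul_of_nonneg_left ht' ha.le,
    mul_le_mul_of_nonneg_left (pow_le_one₀ (n := 2) ht ht') ha.le]

lemma mem_admissible (hu : IsTruncatedSolution θ p a u) (hθ : 0 < θ)
    (hp : p ∈ Icc 0 (1 / 200) ×ˢ Icc 0 (1 / 2)) (ha : a ≤ 1) (ht : 0 ≤ t)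
    (hv : (u t).1 ∈ Icc 0 (10 * (u t).2)) : (p, u t) ∈ admissible :=
  ⟨hp, hv, (hu.snd_le hθ ht).trans ha⟩

end IsTruncatedSolution

/-! ### The Lane–Emden limit -/

section LaneEmden

/-- The field of the radial Lane–Emden system `v' + (2/t) v = |w|^{2θ} w`, `w' = -v`. -/
noncomputable def laneEmdenField (θ : ℝ) (x : ℝ × ℝ) : ℝ × ℝ := ((x.2 ^ 2) ^ θ * x.2, -x.1)

/-- The Pohozaev function, whose derivative along a Lane–Emden solution has the sign of `2 - θ`. -/
noncomputable def pohozaev (θ : ℝ) (u : ℝ → ℝ × ℝ) (t : ℝ) : ℝ :=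
  t ^ 3 * ((u t).1 ^ 2 / 2 + ((u t).2 ^ 2) ^ (θ + 1) / (2 * (θ + 1)))
    - t ^ 2 * (u t).1 * (u t).2 / 2

variable {θ a t : ℝ} {u : ℝ → ℝ × ℝ}

lemma laneEmdenField_fst_pos {x : ℝ × ℝ} (hx : 0 < x.2) : 0 < (laneEmdenField θ x).1 := by
  unfold laneEmdenField
  positivity

variable (hu : IsRadialSolution 2 (laneEmdenField θ) a u) (hpos : ∀ t ≥ 0, 0 < (u t).2)

include hu hpos

lemma laneEmden_fst_pos (ht : 0 < t) : 0 < (u t).1 :=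
  hu.fst_pos ht fun _ hs ↦ laneEmdenField_fst_pos (hpos _ hs.1.le)

lemma laneEmden_snd_antitoneOn : AntitoneOn (fun t ↦ (u t).2) (Ici 0) :=
  antitoneOn_of_hasDerivWithinAt_nonpos (convex_Ici 0) hu.continuous.snd.continuousOn
    (fun _ ht ↦ (hu.hasDerivAt_snd (by simpa using ht)).hasDerivWithinAt)
    fun _ ht ↦ neg_nonpos.2 (laneEmden_fst_pos hu hpos (by simpa using ht)).le

lemma laneEmden_mul_fst_sub_snd_mono {t₀ : ℝ} (ht₀ : 0 ≤ t₀) (ht : t₀ ≤ t) :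
    t₀ * (u t₀).1 - (u t₀).2 ≤ t * (u t).1 - (u t).2 := by
  refine apply_le_apply_of_hasDerivAt_nonneg (f := fun t ↦ t * (u t).1 - (u t).2)
    (f' := fun t ↦ t * (laneEmdenField θ (u t)).1) ht
    (by have := hu.continuous; fun_prop) (fun s hs ↦ ?_) fun s hs ↦ ?_
  all_goals have hs_pos : 0 < s := ht₀.trans_lt hs.1
  · refine (((hasDerivAt_id s).mul (hu.hasDerivAt_fst hs_pos)).sub
      (hu.hasDerivAt_snd hs_pos)).congr_deriv ?_
    simp only [id, laneEmdenField, smul_eq_mul, Nat.cast_ofNat]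
    field_simp
    ring
  · exact mul_nonneg hs_pos.le (laneEmdenField_fst_pos (hpos s hs_pos.le)).le

-- Otherwise `v ≥ c / t` for large `t`, and `w' = -v` drives `w` to `0` logarithmically.
lemma laneEmden_mul_fst_le_snd (ht : 0 < t) : t * (u t).1 ≤ (u t).2 := by
  by_contra! hlt
  set c := t * (u t).1 - (u t).2
  have hc : 0 < c := sub_pos.2 hlt
  set T := t * Real.exp ((u t).2 / c)
  have hexp : 0 < (u t).2 / c := div_pos (hpos t ht.le) hc
  have htT : t ≤ T := le_mul_of_one_le_right ht.le (Real.one_le_exp hexp.le)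
  have decay := apply_le_apply_of_hasDerivAt_nonneg (f := fun s ↦ -((u s).2 + c * Real.log s))
    (f' := fun s ↦ (u s).1 - c / s) htT
    (.neg (.add hu.continuous.snd.continuousOn (.mul continuousOn_const
      (Real.continuousOn_log.mono fun s hs ↦ (ht.trans_le hs.1).ne'))))
    (fun s hs ↦ by
      have hs_pos := ht.trans hs.1
      refine ((hu.hasDerivAt_snd hs_pos).add
        ((Real.hasDerivAt_log hs_pos.ne').const_mul c)).neg.congr_deriv ?_
      simp only [laneEmdenField]
      ring)
    fun s hs ↦ by
      have hs_pos := ht.trans hs.1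
      have := laneEmden_mul_fst_sub_snd_mono hu hpos ht.le hs.1.le
      have := hpos s hs_pos.le
      rw [sub_nonneg, div_le_iff₀ hs_pos]
      linarith
  have hlog : c * Real.log T = c * Real.log t + (u t).2 := by
    rw [Real.log_mul ht.ne' (Real.exp_ne_zero _), Real.log_exp]
    field_simp
  linarith [hpos T (ht.le.trans htT)]

lemma laneEmden_le_fst (hθ : 0 < θ) (ht : 0 ≤ t) :
    (laneEmdenField θ (u t)).1 * t / 3 ≤ (u t).1 := by
  refine (hu.le_fst (C := (laneEmdenField θ (u t)).1) ht fun s hs ↦ ?_).trans_eq' (by norm_num)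
  have := hpos t ht
  have hwt : (u t).2 ≤ (u s).2 := laneEmden_snd_antitoneOn hu hpos hs.1.le ht hs.2.le
  simp only [laneEmdenField]
  gcongr

-- Integrates `(w^{-2θ})' = 2θ w^{-2θ-1} v ≥ 2θ t / 3`.
lemma laneEmden_sq_mul_rpow_le (hθ : 0 < θ) (ht : 0 ≤ t) :
    θ * t ^ 2 * ((u t).2 ^ 2) ^ θ ≤ 3 := by
  have hsq (s : ℝ) (hs : 0 ≤ s) : 0 < (u s).2 ^ 2 := pow_pos (hpos s hs) 2
  have growth := apply_le_apply_of_hasDerivAt_nonneg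
    (f := fun s ↦ ((u s).2 ^ 2) ^ (-θ) - θ * s ^ 2 / 3)
    (f' := fun s ↦ 2 * θ * (((u s).2 ^ 2) ^ (-θ - 1) * (u s).2 * (u s).1 - s / 3)) ht
    (.sub (.rpow_const (by have := hu.continuous; fun_prop)
      fun s hs ↦ .inl (hsq s hs.1).ne') (by fun_prop))
    (fun s hs ↦ by
      refine ((((hu.hasDerivAt_snd hs.1).pow 2).rpow_const (.inl (hsq s hs.1.le).ne')).sub
        (((hasDerivAt_pow 2 s).const_mul θ).div_const 3)).congr_deriv ?_
      simp only [laneEmdenField, Pi.pow_apply]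
      push_cast
      ring)
    fun s hs ↦ by
      have hw := hpos s hs.1.le
      have hpow : ((u s).2 ^ 2) ^ (-θ - 1) * (u s).2 * ((u s).2 ^ 2) ^ θ * (u s).2 = 1 := by
        rw [Real.rpow_sub_one (hsq s hs.1.le).ne', Real.rpow_neg (hsq s hs.1.le).le]
        field_simp
      have hv : ((u s).2 ^ 2) ^ θ * (u s).2 * s / 3 ≤ (u s).1 :=
        laneEmden_le_fst hu hpos hθ hs.1.le
      refine mul_nonneg (by positivity) (sub_nonneg.2 ?_)
      calc s / 3 = ((u s).2 ^ 2) ^ (-θ - 1) * (u s).2 * (((u s).2 ^ 2) ^ θ * (u s).2 * s / 3) := by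
            linear_combination -(s / 3) * hpow
        _ ≤ _ := by gcongr
  have hrpow := Real.rpow_pos_of_pos (hsq t ht) θ
  have hstart := Real.rpow_nonneg (hsq 0 le_rfl).le (-θ)
  rw [Real.rpow_neg (hsq t ht).le] at growth
  have : θ * t ^ 2 / 3 ≤ 1 / ((u t).2 ^ 2) ^ θ := by
    rw [one_div]
    linarith
  rw [le_div_iff₀ hrpow] at this
  linarith

omit hpos in
lemma continuous_pohozaev (hθ : 0 < θ) : Continuous (pohozaev θ u) := by
  have := hu.continuous
  have : Continuous fun t ↦ ((u t).2 ^ 2) ^ (θ + 1) :=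
    .rpow_const (by fun_prop) fun _ ↦ .inr (by positivity)
  simp only [funext (pohozaev.eq_1 θ u), div_eq_mul_inv]
  fun_prop

lemma hasDerivAt_pohozaev (hθ : 0 < θ) (ht : 0 < t) :
    HasDerivAt (pohozaev θ u)
      (t ^ 2 * (((u t).2 ^ 2) ^ θ * (u t).2 ^ 2) * ((2 - θ) / (2 * (θ + 1)))) t := by
  have hw2 : 0 < (u t).2 ^ 2 := pow_pos (hpos t ht.le) 2
  have hv := hu.hasDerivAt_fst ht
  have hw := hu.hasDerivAt_snd ht
  have hkinetic := (hv.pow 2).div_const 2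
  have hpotential := ((hw.pow 2).rpow_const (p := θ + 1) (.inl hw2.ne')).div_const (2 * (θ + 1))
  refine (((hasDerivAt_pow 3 t).mul (hkinetic.add hpotential)).sub
    ((((hasDerivAt_pow 2 t).mul hv).mul hw).div_const 2)).congr_deriv ?_
  simp only [laneEmdenField, smul_eq_mul, Pi.add_apply, Pi.mul_apply, Pi.pow_apply,
    add_sub_cancel_right, Real.rpow_add_one hw2.ne']
  push_cast
  field_simp
  ring

lemma pohozaev_le (hθ : 0 < θ) (ht : 0 < t) :
    pohozaev θ u t ≤ (1 / 2 + 3 / (2 * θ)) * t * (u t).2 ^ 2 := by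
  have hw := hpos t ht.le
  have hv := laneEmden_fst_pos hu hpos ht
  have hkinetic : (t * (u t).1) ^ 2 ≤ (u t).2 ^ 2 := by
    have := laneEmden_mul_fst_le_snd hu hpos ht
    gcongr
  have hpotential : t ^ 2 * ((u t).2 ^ 2) ^ θ / (θ + 1) ≤ 3 / θ := by
    calc _ ≤ t ^ 2 * ((u t).2 ^ 2) ^ θ := div_le_self (by positivity) (by linarith)
      _ ≤ 3 / θ := by
        rw [le_div_iff₀ hθ]
        linarith [laneEmden_sq_mul_rpow_le hu hpos hθ ht.le]
  calc pohozaev θ u t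
      ≤ t ^ 3 * ((u t).1 ^ 2 / 2 + ((u t).2 ^ 2) ^ (θ + 1) / (2 * (θ + 1))) :=
        sub_le_self _ (by positivity)
    _ = t / 2 * (t * (u t).1) ^ 2
        + t / 2 * (u t).2 ^ 2 * (t ^ 2 * ((u t).2 ^ 2) ^ θ / (θ + 1)) := by
      rw [Real.rpow_add_one (pow_pos hw 2).ne']
      field_simp
    _ ≤ t / 2 * (u t).2 ^ 2 + t / 2 * (u t).2 ^ 2 * (3 / θ) := by gcongr
    _ = _ := by field_simp

omit hpos in
theorem laneEmden_exists_snd_nonpos (hθ : 0 < θ) (hθ' : θ < 2) : ∃ t ≥ 0, (u t).2 ≤ 0 := by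
  by_contra! hpos
  obtain ⟨A, hA⟩ : ∃ A, A = 1 / 2 + 3 / (2 * θ) := ⟨_, rfl⟩
  have hA_pos : 0 < A := by rw [hA]; positivity
  have pohozaev_lt {s t : ℝ} (hs : 0 ≤ s) (hst : s < t) : pohozaev θ u s < pohozaev θ u t :=
    apply_lt_apply_of_hasDerivAt_pos hst
      (continuous_pohozaev hu hθ).continuousOn
      (fun r hr ↦ hasDerivAt_pohozaev hu hpos hθ (hs.trans_lt hr.1))
      fun r hr ↦ by
        have := hpos r (hs.trans hr.1.le)
        have := hs.trans_lt hr.1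
        have : 0 < 2 - θ := by linarith
        positivity
  obtain ⟨c, hc_def⟩ : ∃ c, c = pohozaev θ u 1 := ⟨_, rfl⟩
  have hc : 0 < c := by
    have hstart : pohozaev θ u 0 = 0 := by simp [pohozaev]
    exact hc_def ▸ hstart ▸ pohozaev_lt le_rfl one_pos
  have bounded_rpow (t : ℝ) (ht : 1 < t) : t ^ (2 - θ) ≤ 3 / (θ * (c / A) ^ θ) := by
    have ht_pos : 0 < t := by linarith
    have hw : c / A / t ≤ (u t).2 ^ 2 := by
      rw [div_div, div_le_iff₀ (by positivity)]
      linarith [pohozaev_lt zero_le_one ht, hA ▸ pohozaev_le hu hpos hθ ht_pos]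
    rw [le_div_iff₀ (by positivity)]
    calc t ^ (2 - θ) * (θ * (c / A) ^ θ) = θ * t ^ 2 * (c / A / t) ^ θ := by
          rw [Real.rpow_sub ht_pos, Real.rpow_two, Real.div_rpow (by positivity) ht_pos.le]
          ring
      _ ≤ θ * t ^ 2 * ((u t).2 ^ 2) ^ θ := by gcongr
      _ ≤ 3 := laneEmden_sq_mul_rpow_le hu hpos hθ ht_pos.le
  obtain ⟨t, ht, hlarge⟩ := ((eventually_gt_atTop (1 : ℝ)).and
    ((tendsto_rpow_atTop (sub_pos.2 hθ')).eventually_gt_atTop _)).exists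
  exact (bounded_rpow t ht).not_gt hlarge

end LaneEmden

/-! ### Energy and the shooting alternative -/

section Energy

variable {θ : ℝ}

/-- The energy of the system without its friction term `(2/t) v`; it decreases along admissible
trajectories. For `μ = 0` it is `v²/2 + w^{2θ+2}/(2θ+2) - δ w²/2`. -/
noncomputable def energy (θ : ℝ) (q : (ℝ × ℝ) × (ℝ × ℝ)) : ℝ :=
  density q.1.1 q.2.1 q.2.2 ^ (θ + 1) / (2 * (θ + 1)) - q.1.2 * q.2.2 ^ 2 / 2
    + (1 - q.1.1 * q.1.2) * q.2.1 ^ 2 / 2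

lemma continuous_energy (hθ : 0 < θ) : Continuous (energy θ) := by
  have : Continuous fun q : (ℝ × ℝ) × (ℝ × ℝ) ↦ density q.1.1 q.2.1 q.2.2 ^ (θ + 1) :=
    .rpow_const (by unfold density; fun_prop) fun _ ↦ .inr (by positivity)
  simp only [funext (energy.eq_1 θ), div_eq_mul_inv]
  fun_prop

lemma energy_zero_left {p : ℝ × ℝ} {w : ℝ} (hθ : 0 < θ) (hw : 0 < w) :
    energy θ (p, (0, w)) = w ^ 2 / 2 * ((w ^ 2) ^ θ / (θ + 1) - p.2) := by
  have : 0 < θ + 1 := by linarith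
  simp only [energy, density, ne_eq, OfNat.ofNat_ne_zero, not_false_eq_true, zero_pow, mul_zero,
    sub_zero, Real.rpow_add_one (pow_pos hw 2).ne']
  field_simp
  ring

lemma rescaledField_fst_pos_of_energy_nonneg {p : ℝ × ℝ} {w : ℝ} (hθ : 0 < θ) (hp : 0 < p.2)
    (hw : 0 < w) (hE : 0 ≤ energy θ (p, (0, w))) : 0 < (rescaledField θ (p, (0, w))).1 := by
  rw [energy_zero_left hθ hw] at hE
  have hE : p.2 ≤ (w ^ 2) ^ θ / (θ + 1) :=
    sub_nonneg.1 (nonneg_of_mul_nonneg_right hE (by positivity))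
  rw [le_div_iff₀ (by positivity)] at hE
  have : 0 < (w ^ 2) ^ θ - p.2 := by linarith [mul_pos hp hθ]
  simpa [rescaledField, density] using mul_pos this hw

lemma energy_pos_of_fst_eq {q : (ℝ × ℝ) × (ℝ × ℝ)} (hθ : 0 < θ) (hq : q ∈ admissible)
    (hw : 0 < q.2.2) (hv : q.2.1 = 10 * q.2.2) : 0 < energy θ q := by
  have hpot : 0 ≤ density q.1.1 q.2.1 q.2.2 ^ (θ + 1) / (2 * (θ + 1)) :=
    div_nonneg (Real.rpow_nonneg (density_nonneg hq) _) (by positivity)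
  obtain ⟨⟨⟨-, hμ⟩, ⟨hδ, hδ'⟩⟩, -⟩ := hq
  have hμδ : q.1.1 * q.1.2 ≤ 1 / 200 * (1 / 2) := by gcongr
  have hmass : q.1.2 * q.2.2 ^ 2 ≤ 1 / 2 * q.2.2 ^ 2 := by gcongr
  have hkin : 1 / 2 * (10 * q.2.2) ^ 2 ≤ (1 - q.1.1 * q.1.2) * q.2.1 ^ 2 := by
    rw [hv]
    gcongr
    linarith
  have : 0 < q.2.2 ^ 2 := pow_pos hw 2
  unfold energy
  linarith

end Energy

namespace IsTruncatedSolution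

variable {θ a t T : ℝ} {p : ℝ × ℝ} {u : ℝ → ℝ × ℝ} (hu : IsTruncatedSolution θ p a u) (hθ : 0 < θ)
  (hp : p ∈ Icc 0 (1 / 200) ×ˢ Icc 0 (1 / 2)) (ha : 0 < a) (ha' : a ≤ 1)

include hu hθ hp ha ha'

lemma hasDerivAt_energy (ht : 0 < t) (hv : (u t).1 ∈ Icc 0 (10 * (u t).2)) :
    HasDerivAt (fun s ↦ energy θ (p, u s)) (-(2 / t * (u t).1 ^ 2 *
      (1 - p.1 * (p.2 + |density p.1 (u t).1 (u t).2| ^ θ)))) t := by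
  have hq := hu.mem_admissible hθ hp ha' ht.le hv
  have hs : 0 < density p.1 (u t).1 (u t).2 :=
    (half_pos (pow_pos (hu.snd_pos ha ht.le) 2)).trans_le (sq_div_two_le_density hq)
  have hdv := hu.hasDerivAt_fst ht
  have hdw := hu.hasDerivAt_snd ht
  have hds := (hdw.pow 2).sub ((hdv.pow 2).const_mul p.1)
  refine (((hds.rpow_const (p := θ + 1) (.inl hs.ne')).div_const (2 * (θ + 1))).sub
    (((hdw.pow 2).const_mul p.2).div_const 2) |>.add
    (((hdv.pow 2).const_mul (1 - p.1 * p.2)).div_const 2)).congr_deriv ?_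
  have hs_eq : (u t).2 ^ 2 - p.1 * (u t).1 ^ 2 = density p.1 (u t).1 (u t).2 := rfl
  simp only [truncatedField_eq hq, rescaledField, Pi.sub_apply, Pi.pow_apply, hs_eq,
    abs_of_pos hs, add_sub_cancel_right, smul_eq_mul]
  push_cast
  field_simp
  ring

lemma antitoneOn_energy (hv : ∀ s ∈ Ioo 0 T, (u s).1 ∈ Icc 0 (10 * (u s).2)) :
    AntitoneOn (fun s ↦ energy θ (p, u s)) (Icc 0 T) := by
  refine antitoneOn_of_hasDerivWithinAt_nonpos (convex_Icc 0 T)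
    ((continuous_energy hθ).comp ((Continuous.prodMk_right p).comp hu.continuous)).continuousOn
    (fun s hs ↦ (hu.hasDerivAt_energy hθ hp ha ha' ?_ (hv s ?_)).hasDerivWithinAt) fun s hs ↦ ?_
  all_goals rw [interior_Icc] at hs
  · exact hs.1
  · exact hs
  · have := hs.1
    have := half_le_one_sub_mul_add_rpow hθ (hu.mem_admissible hθ hp ha' hs.1.le (hv s hs))
    exact neg_nonpos.2 (mul_nonneg (by positivity) (by linarith))

end IsTruncatedSolution

/-- The trajectory leaves the cone `v ≤ 10 w` while its energy is positive. -/
def Overshoots (θ : ℝ) (p : ℝ × ℝ) (u : ℝ → ℝ × ℝ) : Prop :=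
  ReachesWithin (fun t ↦ (p, u t)) {q | 0 < energy θ q} {q | 10 * q.2.2 < q.2.1}

/-- The energy of the trajectory becomes negative while it is in the cone `v < 10 w`. -/
def Undershoots (θ : ℝ) (p : ℝ × ℝ) (u : ℝ → ℝ × ℝ) : Prop :=
  ReachesWithin (fun t ↦ (p, u t)) {q | q.2.1 < 10 * q.2.2} {q | energy θ q < 0}

namespace IsTruncatedSolution

variable {θ a t T : ℝ} {p : ℝ × ℝ} {u : ℝ → ℝ × ℝ} (hu : IsTruncatedSolution θ p a u) (hθ : 0 < θ)
  (hp : p ∈ Icc 0 (1 / 200) ×ˢ Icc 0 (1 / 2)) (ha : 0 < a) (ha' : a ≤ 1)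

include hu ha in
lemma energy_nonneg (hB : ¬ Undershoots θ p u) (ht : 0 ≤ t)
    (hv : ∀ s ∈ Ioc 0 t, (u s).1 < 10 * (u s).2) : 0 ≤ energy θ (p, u t) := by
  by_contra! hE
  refine hB ⟨t, ht, hE, fun s hs ↦ ?_⟩
  rcases hs.1.eq_or_lt with rfl | hs'
  · simpa [hu.apply_zero] using ha
  · exact hv s ⟨hs', hs.2⟩

include hu hθ hp ha ha'

lemma exit_fst_ne_zero (hδ : 0 < p.2) (hB : ¬ Undershoots θ p u) (hT : 0 < T)
    (hv : ∀ s ∈ Ioo 0 T, (u s).1 ∈ Ioo 0 (10 * (u s).2)) : (u T).1 ≠ 0 := by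
  intro hz
  have huT : u T = (0, (u T).2) := Prod.ext hz rfl
  have hw := hu.snd_pos ha hT.le
  have hE : 0 ≤ energy θ (p, u T) :=
    ge_of_tendsto (((continuous_energy hθ).comp
      ((Continuous.prodMk_right p).comp hu.continuous)).continuousWithinAt (s := Iio T))
      (by
        filter_upwards [Ioo_mem_nhdsLT hT] with s hs
        exact hu.energy_nonneg ha hB hs.1.le fun r hr ↦ (hv r ⟨hr.1, hr.2.trans_lt hs.2⟩).2)
  have hN : 0 < (truncatedField θ (p, u T)).1 := by
    rw [truncatedField_eq (hu.mem_admissible hθ hp ha' hT.le (by rw [hz]; simpa using hw.le)), huT]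
    exact rescaledField_fst_pos_of_energy_nonneg hθ hδ hw (huT ▸ hE)
  have hd := hu.hasDerivAt_fst hT
  rw [hz, smul_zero, sub_zero] at hd
  obtain ⟨s, hsign, hs⟩ := (((eventually_nhdsWithin_sign_eq_of_deriv_pos
    (hd.deriv.symm ▸ hN) hz).filter_mono nhdsWithin_le_nhds).and (Ioo_mem_nhdsLT hT)).exists
  rw [sign_pos (hv s hs).1, sign_neg (sub_neg.2 hs.2)] at hsign
  exact absurd hsign (by decide)

lemma deriv_fst_sub_snd_pos (hT : 1 ≤ T) (hexit : (u T).1 = 10 * (u T).2) :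
    0 < deriv (fun s ↦ (u s).1 - 10 * (u s).2) T := by
  have hT_pos : 0 < T := one_pos.trans_le hT
  have hw := hu.snd_pos ha hT_pos.le
  have hq := hu.mem_admissible hθ hp ha' hT_pos.le (by rw [hexit]; exact ⟨by positivity, le_rfl⟩)
  have hN₂ := rescaledField_snd_le hθ hq
  have hN₁ : -(1 / 2 * (u T).2) ≤ (rescaledField θ (p, u T)).1 := by
    have : p.2 * (u T).2 ≤ 1 / 2 * (u T).2 := mul_le_mul_of_nonneg_right hp.2.2 hw.le
    have := mul_nonneg (Real.rpow_nonneg (abs_nonneg (density p.1 (u T).1 (u T).2)) θ) hw.le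
    simp only [rescaledField]
    linarith
  have hfriction : 2 / T * (u T).1 ≤ 2 * (u T).1 := by
    rw [hexit]
    gcongr
    exact div_le_self zero_le_two hT
  have hd : HasDerivAt (fun s ↦ (u s).1 - 10 * (u s).2) _ T :=
    (hu.hasDerivAt_fst hT_pos).sub ((hu.hasDerivAt_snd hT_pos).const_mul 10)
  rw [hd.deriv, truncatedField_eq hq, smul_eq_mul, Nat.cast_ofNat]
  dsimp only at hN₂
  linarith

lemma overshoots_of_exit (hT : 0 < T) (hv : ∀ s ∈ Ioo 0 T, (u s).1 ∈ Ioo 0 (10 * (u s).2))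
    (hexit : (u T).1 = 10 * (u T).2) : Overshoots θ p u := by
  have hw := hu.snd_pos ha hT.le
  have hq := hu.mem_admissible hθ hp ha' hT.le (by rw [hexit]; exact ⟨by positivity, le_rfl⟩)
  have hT_one : 1 ≤ T := by
    by_contra! hlt
    exact (hu.fst_lt_ten_mul_snd hθ ha hT.le hlt.le).ne hexit
  have hET : 0 < energy θ (p, u T) := energy_pos_of_fst_eq hθ hq hw hexit
  have hE_near := ((continuous_energy hθ).comp ((Continuous.prodMk_right p).comp
    hu.continuous)).continuousAt.eventually (lt_mem_nhds hET)
  obtain ⟨T', hTT', hE_after⟩ := mem_nhdsGE_iff_exists_Ico_subset.1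
    (mem_nhdsWithin_of_mem_nhds hE_near)
  obtain ⟨r, hsign, hr⟩ := (((eventually_nhdsWithin_sign_eq_of_deriv_pos
    (hu.deriv_fst_sub_snd_pos hθ hp ha ha' hT_one hexit) (sub_eq_zero.2 hexit)).filter_mono
    nhdsWithin_le_nhds).and (Ioo_mem_nhdsGT hTT')).exists
  rw [sign_pos (sub_pos.2 hr.1), sign_eq_one_iff, sub_pos] at hsign
  refine ⟨r, hT.le.trans hr.1.le, hsign, fun s hs ↦ ?_⟩
  rcases le_total s T with hsT | hTs
  · exact hET.trans_le (hu.antitoneOn_energy hθ hp ha ha'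
      (fun s hs ↦ Ioo_subset_Icc_self (hv s hs)) ⟨hs.1, hsT⟩ (right_mem_Icc.2 hT.le) hsT)
  · exact hE_after ⟨hTs, hs.2.trans_lt hr.2⟩

theorem fst_mem_Ioo (hδ : 0 < p.2) (hA : ¬ Overshoots θ p u) (hB : ¬ Undershoots θ p u)
    (ht : 0 < t) : (u t).1 ∈ Ioo 0 (10 * (u t).2) := by
  obtain ⟨K, hK⟩ := exists_lipschitzWith_truncatedField hθ
  set U := {x : ℝ × ℝ | x.1 ∈ Ioo 0 (10 * x.2)}
  have hU : IsOpen U :=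
    (isOpen_lt continuous_const continuous_fst).inter (isOpen_lt continuous_fst (by fun_prop))
  have hU_closure : closure U ⊆ {x | x.1 ∈ Icc 0 (10 * x.2)} :=
    closure_minimal (fun x hx ↦ Ioo_subset_Icc_self hx)
      ((isClosed_le continuous_const continuous_fst).inter
        (isClosed_le continuous_fst (by fun_prop)))
  have hN : 0 < (truncatedField θ (p, (0, a))).1 := by
    have hE := hu.energy_nonneg ha hB le_rfl (by simp)
    rw [hu.apply_zero] at hE
    rw [truncatedField_eq (q := (p, (0, a))) ⟨hp, ⟨le_rfl, by positivity⟩, ha'⟩]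
    exact rescaledField_fst_pos_of_energy_nonneg hθ hδ ha hE
  have hstart : ∀ᶠ t in 𝓝[>] 0, u t ∈ U := by
    filter_upwards [hu.eventually_fst_pos (hK.continuous.comp (Continuous.prodMk_right p)) hN,
      Ioo_mem_nhdsGT one_pos] with t hv ht
    exact ⟨hv, hu.fst_lt_ten_mul_snd hθ ha ht.1.le ht.2.le⟩
  by_contra hout
  obtain ⟨T, hT, hbefore, hcl, hexit⟩ := exists_first_exit hu.continuous hU hstart ⟨t, ht, hout⟩
  have hne := hu.exit_fst_ne_zero hθ hp ha ha' hδ hB hT hbefore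
  have hvT := hU_closure hcl
  have hle := not_lt.1 fun h ↦ hexit ⟨hvT.1.lt_of_ne hne.symm, h⟩
  exact hA (hu.overshoots_of_exit hθ hp ha ha' hT hbefore (hvT.2.antisymm hle))

end IsTruncatedSolution

/-! ### Trapped solutions and their decay -/

lemma exists_sq_rpow_eq {θ c : ℝ} (hθ : θ ≠ 0) (hc : 0 < c) : ∃ x > 0, (x ^ 2) ^ θ = c :=
  ⟨√(c ^ θ⁻¹), by positivity, by rw [Real.sq_sqrt (by positivity), Real.rpow_inv_rpow hc.le hθ]⟩

section Decay

variable {θ : ℝ} {q : (ℝ × ℝ) × (ℝ × ℝ)}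

lemma sq_rpow_sub_density_rpow_mul_le (hθ : 0 < θ) (hθ' : θ ≤ 2) (hq : q ∈ admissible) :
    ((q.2.2 ^ 2) ^ θ - |density q.1.1 q.2.1 q.2.2| ^ θ) * q.2.2 ≤ q.2.1 / 10 := by
  rcases (admissible_snd_nonneg hq).eq_or_lt with hw | hw
  · rw [← hw, mul_zero]
    linarith [hq.2.1.1]
  have hs := density_nonneg hq
  have hs_le := density_le_sq hq
  rw [abs_of_nonneg hs]
  have hdiff := abs_rpow_sub_rpow_mul_max_le hθ (sq_nonneg q.2.2) hs
  have hgap : |q.2.2 ^ 2 - density q.1.1 q.2.1 q.2.2| = q.1.1 * q.2.1 ^ 2 := by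
    rw [density, sub_sub_cancel, abs_of_nonneg (mul_nonneg hq.1.1.1 (sq_nonneg _))]
  rw [max_eq_left hs_le, hgap] at hdiff
  obtain ⟨⟨⟨hμ, hμ'⟩, -⟩, ⟨hv, hvw⟩, hw'⟩ := hq
  have hrpow : (q.2.2 ^ 2) ^ θ ≤ 1 :=
    Real.rpow_le_one (sq_nonneg _) (pow_le_one₀ hw.le hw') hθ.le
  refine le_of_mul_le_mul_right ?_ hw
  calc _ = ((q.2.2 ^ 2) ^ θ - density q.1.1 q.2.1 q.2.2 ^ θ) * q.2.2 ^ 2 := by ring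
    _ ≤ |(q.2.2 ^ 2) ^ θ - density q.1.1 q.2.1 q.2.2 ^ θ| * q.2.2 ^ 2 := by
      gcongr
      exact le_abs_self _
    _ ≤ max 1 θ * (q.2.2 ^ 2) ^ θ * (q.1.1 * q.2.1 ^ 2) := hdiff
    _ ≤ 2 * 1 * (1 / 200 * (q.2.1 * (10 * q.2.2))) := by
      rw [sq q.2.1]
      gcongr
      exact max_le one_le_two hθ'
    _ = q.2.1 / 10 * q.2.2 := by ring

lemma mul_sq_le_sq_of_energy_nonneg (hθ : 0 < θ) (hq : q ∈ admissible) (hw : 0 < q.2.2)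
    (hE : 0 ≤ energy θ q) (hsmall : (q.2.2 ^ 2) ^ θ ≤ (1 + θ / 2) * q.1.2) :
    q.1.2 * (θ / (2 * (θ + 1))) * q.2.2 ^ 2 ≤ q.2.1 ^ 2 := by
  have hs := density_nonneg hq
  have hs_le := density_le_sq hq
  have hpot : density q.1.1 q.2.1 q.2.2 ^ (θ + 1) / (2 * (θ + 1))
      ≤ (1 + θ / 2) * q.1.2 * q.2.2 ^ 2 / (2 * (θ + 1)) := by
    gcongr
    calc density q.1.1 q.2.1 q.2.2 ^ (θ + 1) ≤ (q.2.2 ^ 2) ^ (θ + 1) := by gcongr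
      _ = (q.2.2 ^ 2) ^ θ * q.2.2 ^ 2 := Real.rpow_add_one (pow_pos hw 2).ne' θ
      _ ≤ _ := by gcongr
  have hkin : 0 ≤ q.1.1 * q.1.2 * q.2.1 ^ 2 :=
    mul_nonneg (mul_nonneg hq.1.1.1 hq.1.2.1) (sq_nonneg _)
  have hsplit : q.1.2 * (θ / (2 * (θ + 1))) * q.2.2 ^ 2
      = q.1.2 * q.2.2 ^ 2 - 2 * ((1 + θ / 2) * q.1.2 * q.2.2 ^ 2 / (2 * (θ + 1))) := by
    field_simp
    ring
  unfold energy at hE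
  linarith

end Decay

/-- A solution `u = (v, w)` of the rescaled system for the parameters `p = (μ, δ)` that starts at
`(0, a)` and stays forever in the cone `0 ≤ v ≤ 10 w` with nonnegative energy. -/
structure IsTrappedSolution (θ : ℝ) (p : ℝ × ℝ) (a : ℝ) (u : ℝ → ℝ × ℝ) : Prop extends
    IsRadialSolution 2 (fun x ↦ rescaledField θ (p, x)) a u where
  mem_admissible : ∀ t > 0, (p, u t) ∈ admissible
  snd_pos : ∀ t > 0, 0 < (u t).2
  energy_nonneg : ∀ t > 0, 0 ≤ energy θ (p, u t)

theorem IsTruncatedSolution.isTrappedSolution {θ a : ℝ} {p : ℝ × ℝ} {u : ℝ → ℝ × ℝ}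
    (hu : IsTruncatedSolution θ p a u) (hθ : 0 < θ) (hp : p ∈ Icc 0 (1 / 200) ×ˢ Icc 0 (1 / 2))
    (hδ : 0 < p.2) (ha : 0 < a) (ha' : a ≤ 1) (hA : ¬ Overshoots θ p u)
    (hB : ¬ Undershoots θ p u) : IsTrappedSolution θ p a u := by
  have hcone (t : ℝ) (ht : 0 < t) := hu.fst_mem_Ioo hθ hp ha ha' hδ hA hB ht
  have hmem (t : ℝ) (ht : 0 < t) : (p, u t) ∈ admissible :=
    hu.mem_admissible hθ hp ha' ht.le (Ioo_subset_Icc_self (hcone t ht))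
  exact
    { toIsRadialSolution :=
        IsRadialSolution.congr hu fun t ht ↦ (truncatedField_eq (hmem t ht)).symm
      mem_admissible := hmem
      snd_pos := fun t ht ↦ hu.snd_pos ha ht.le
      energy_nonneg := fun t ht ↦ hu.energy_nonneg ha hB ht.le fun s hs ↦ (hcone s hs.1).2 }

namespace IsTrappedSolution

variable {θ a t T : ℝ} {p : ℝ × ℝ} {u : ℝ → ℝ × ℝ} (hu : IsTrappedSolution θ p a u) (hθ : 0 < θ)

include hu hθ

lemma antitoneOn_snd : AntitoneOn (fun t ↦ (u t).2) (Ioi 0) :=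
  antitoneOn_of_hasDerivWithinAt_nonpos (convex_Ioi 0) hu.continuous.snd.continuousOn
    (fun t ht ↦ (hu.hasDerivAt_snd (by simpa using ht)).hasDerivWithinAt)
    fun t ht ↦ by
      have hq := hu.mem_admissible t (by simpa using ht)
      have hv : 0 ≤ (u t).1 := hq.2.1.1
      exact (rescaledField_snd_le hθ hq).trans (by linarith)

-- While `w^{2θ}` exceeds `(1 + θ/2) δ`, the bounded quantity `v - 6 w` grows linearly.
lemma exists_sq_rpow_le (hθ' : θ ≤ 2) (hδ : 0 < p.2) :
    ∃ T ≥ 1, ((u T).2 ^ 2) ^ θ ≤ (1 + θ / 2) * p.2 := by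
  by_contra! hlarge
  obtain ⟨x, hx, hxδ⟩ := exists_sq_rpow_eq hθ.ne' hδ
  set c := θ / 2 * p.2 * x
  have hc : 0 < c := by positivity
  have growth := apply_le_apply_of_hasDerivAt_nonneg
    (f := fun t ↦ (u t).1 - 6 * (u t).2 - c * t) (a := 1) (b := 1 + 17 / c)
    (le_add_of_nonneg_right (by positivity)) (by have := hu.continuous; fun_prop)
    (fun t ht ↦ ((hu.hasDerivAt_fst (one_pos.trans ht.1)).sub
      ((hu.hasDerivAt_snd (one_pos.trans ht.1)).const_mul 6)).sub
      ((hasDerivAt_id t).const_mul c))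
    fun t ht ↦ by
      have ht_pos := one_pos.trans ht.1
      have hq := hu.mem_admissible t ht_pos
      have hw := hu.snd_pos t ht_pos
      have hv : 0 ≤ (u t).1 := hq.2.1.1
      have hx_le : x ≤ (u t).2 := by
        by_contra! hlt
        have : ((u t).2 ^ 2) ^ θ ≤ (x ^ 2) ^ θ := by gcongr
        linarith [hlarge t ht.1.le, mul_pos hθ hδ]
      have hN₁ := sq_rpow_sub_density_rpow_mul_le hθ hθ' hq
      have hN₂ := rescaledField_snd_le hθ hq
      have hfriction : 2 / t * (u t).1 ≤ 2 * (u t).1 := by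
        gcongr
        exact div_le_self zero_le_two ht.1.le
      have hgrow : c ≤ (((u t).2 ^ 2) ^ θ - p.2) * (u t).2 :=
        mul_le_mul (by linarith [hlarge t ht.1.le]) hx_le hx.le
          (by linarith [hlarge t ht.1.le, mul_pos hθ hδ])
      simp only [rescaledField, smul_eq_mul, Nat.cast_ofNat, mul_one] at hN₁ hN₂ ⊢
      linarith
  have hc_mul : c * (1 + 17 / c) = c + 17 := by field_simp
  have hstart := hu.mem_admissible 1 one_pos
  have hend := hu.mem_admissible (1 + 17 / c) (by positivity)
  have := hu.snd_pos (1 + 17 / c) (by positivity)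
  simp only [hc_mul] at growth
  linarith [hstart.2.1.1, hstart.2.2, hend.2.1.2, hend.2.2]

lemma exists_mul_snd_le_fst (hθ' : θ ≤ 2) (hδ : 0 < p.2) :
    ∃ κ > 0, ∃ T ≥ 1, ∀ t ≥ T, κ * (u t).2 ≤ (u t).1 := by
  obtain ⟨T, hT, hsmall⟩ := hu.exists_sq_rpow_le hθ hθ' hδ
  refine ⟨√(p.2 * (θ / (2 * (θ + 1)))), by positivity, T, hT, fun t ht ↦ ?_⟩
  have hT_pos : 0 < T := one_pos.trans_le hT
  have ht_pos : 0 < t := hT_pos.trans_le ht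
  have hw := hu.snd_pos t ht_pos
  have hq := hu.mem_admissible t ht_pos
  have hwT : (u t).2 ≤ (u T).2 := hu.antitoneOn_snd hθ hT_pos ht_pos ht
  have hsmall' : ((u t).2 ^ 2) ^ θ ≤ (1 + θ / 2) * p.2 := le_trans (by gcongr) hsmall
  refine le_of_sq_le_sq ?_ hq.2.1.1
  rw [mul_pow, Real.sq_sqrt (by positivity)]
  exact mul_sq_le_sq_of_energy_nonneg hθ hq hw (hu.energy_nonneg t ht_pos) hsmall'

theorem exists_snd_le_exp (hθ' : θ ≤ 2) (hδ : 0 < p.2) :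
    ∃ C > 0, ∃ σ > 0, ∀ t > 0, (u t).2 ≤ C * Real.exp (-σ * t) := by
  obtain ⟨κ, hκ, T, hT, hκ_le⟩ := hu.exists_mul_snd_le_fst hθ hθ' hδ
  have hT_pos : 0 < T := one_pos.trans_le hT
  refine ⟨Real.exp (κ / 2 * T), Real.exp_pos _, κ / 2, half_pos hκ, fun t ht ↦ ?_⟩
  have hwT : (u T).2 ≤ 1 := (hu.mem_admissible T hT_pos).2.2
  rw [neg_mul, Real.exp_neg, ← div_eq_mul_inv, le_div_iff₀ (Real.exp_pos _)]
  rcases le_total t T with htT | hTt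
  · have hw : (u t).2 ≤ 1 := (hu.mem_admissible t ht).2.2
    calc (u t).2 * Real.exp (κ / 2 * t) ≤ 1 * Real.exp (κ / 2 * T) := by gcongr
      _ = _ := one_mul _
  have decay := exp_mul_le_exp_mul_of_hasDerivAt (c := κ / 2) (f := fun s ↦ -(u s).2) hTt
    (by have := hu.continuous; fun_prop)
    (fun s hs ↦ (hu.hasDerivAt_snd (hT_pos.trans hs.1)).neg)
    fun s hs ↦ by
      have := rescaledField_snd_le hθ (hu.mem_admissible s (hT_pos.trans hs.1))
      have := hκ_le s hs.1.le
      dsimp only at *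
      linarith
  linarith [mul_le_mul_of_nonneg_left hwT (Real.exp_nonneg (κ / 2 * T))]

omit hθ in
lemma norm_le_ten_mul_snd (ht : 0 < t) : ‖u t‖ ≤ 10 * (u t).2 := by
  have hw := (hu.snd_pos t ht).le
  obtain ⟨hv, hvw⟩ : (u t).1 ∈ Icc 0 (10 * (u t).2) := (hu.mem_admissible t ht).2.1
  rw [Prod.norm_def, Real.norm_of_nonneg hv, Real.norm_of_nonneg hw]
  exact max_le hvw (by linarith)

end IsTrappedSolution

/-! ### Existence of localized solutions -/

section Shooting

variable {θ a : ℝ} {p : ℝ × ℝ} {u : ℝ → ℝ × ℝ}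

lemma truncatedField_zero_fst_pos {x : ℝ × ℝ} (hx : 0 < x.2) :
    0 < (truncatedField θ (0, x)).1 := by
  have hw : 0 < max 0 (min x.2 1) := lt_max_of_lt_right (lt_min hx one_pos)
  have := mul_pos (Real.rpow_pos_of_pos (pow_pos hw 2) θ) hw
  simpa [truncatedField, truncate, rescaledField, density] using this

lemma energy_zero_pos {x : ℝ × ℝ} (hθ : 0 < θ) (hx : 0 < x.2) : 0 < energy θ (0, x) := by
  simp only [energy, density, Prod.fst_zero, Prod.snd_zero, zero_mul, sub_zero, zero_div]
  positivity

theorem overshoots_zero (hu : IsTruncatedSolution θ 0 a u) (hθ : 0 < θ) (hθ' : θ < 2)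
    (ha : 0 < a) (ha' : a ≤ 1) : Overshoots θ 0 u := by
  suffices ∃ t ≥ 0, 10 * (u t).2 < (u t).1 by
    obtain ⟨t, ht, hexit⟩ := this
    exact ⟨t, ht, hexit, fun s hs ↦ energy_zero_pos hθ (hu.snd_pos ha hs.1)⟩
  by_contra! hcone
  have hv (t : ℝ) (ht : 0 < t) : 0 < (u t).1 :=
    hu.fst_pos ht fun s hs ↦ truncatedField_zero_fst_pos (hu.snd_pos ha hs.1.le)
  have hlaneEmden : IsRadialSolution 2 (laneEmdenField θ) a u :=
    IsRadialSolution.congr hu fun t ht ↦ by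
      rw [truncatedField_eq (hu.mem_admissible hθ ⟨⟨le_rfl, by norm_num⟩, ⟨le_rfl, by norm_num⟩⟩ ha'
        ht.le ⟨(hv t ht).le, hcone t ht.le⟩)]
      simp [rescaledField, laneEmdenField, density]
  obtain ⟨t, ht, hw⟩ := laneEmden_exists_snd_nonpos hlaneEmden hθ hθ'
  exact hw.not_gt (hu.snd_pos ha ht)

lemma undershoots_of_energy_neg (hu0 : u 0 = (0, a)) (ha : 0 < a)
    (hE : energy θ (p, (0, a)) < 0) : Undershoots θ p u := by
  refine ⟨0, le_rfl, by simpa [hu0] using hE, fun s hs ↦ ?_⟩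
  rw [Icc_self, mem_singleton_iff] at hs
  simpa [hs, hu0] using ha

lemma isOpen_setOf_energy_pos (hθ : 0 < θ) : IsOpen {q | 0 < energy θ q} :=
  isOpen_lt continuous_const (continuous_energy hθ)

lemma isOpen_setOf_ten_mul_lt : IsOpen {q : (ℝ × ℝ) × (ℝ × ℝ) | 10 * q.2.2 < q.2.1} :=
  isOpen_lt (by fun_prop) (by fun_prop)

lemma exists_isTrappedSolution_of_overshoots {K : ℝ≥0} (hK : LipschitzWith K (truncatedField θ))
    (hθ : 0 < θ) (hp : p ∈ Icc 0 (1 / 200) ×ˢ Icc 0 (1 / 2)) (hδ : 0 < p.2)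
    (h : Overshoots θ p (radialFlow 2 hK p 1)) : ∃ a u, IsTrappedSolution θ p a u := by
  obtain ⟨a₀, ha₀, ha₀δ⟩ := exists_sq_rpow_eq hθ.ne' hδ
  have ha₀_le : a₀ ≤ 1 := by
    by_contra! hlt
    linarith [hp.2.2, Real.one_lt_rpow (one_lt_pow₀ hlt two_ne_zero) hθ]
  have hE : energy θ (p, (0, a₀)) < 0 := by
    rw [energy_zero_left hθ ha₀, ha₀δ]
    exact mul_neg_of_pos_of_neg (by positivity)
      (sub_neg.2 (div_lt_self hδ (lt_add_of_pos_left 1 hθ)))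
  have hΦ : Continuous (Function.uncurry fun a t ↦ (p, radialFlow 2 hK p a t)) :=
    continuous_const.prodMk ((continuous_radialFlow hK).comp (Continuous.prodMk_right p))
  obtain ⟨a, ha, hA, hB⟩ := exists_not_reachesWithin hΦ (isOpen_setOf_energy_pos hθ)
    isOpen_setOf_ten_mul_lt (U' := {q : (ℝ × ℝ) × (ℝ × ℝ) | q.2.1 < 10 * q.2.2})
    (W' := {q | energy θ q < 0})
    (isOpen_lt (by fun_prop) (by fun_prop)) (isOpen_lt (continuous_energy hθ) continuous_const)
    (disjoint_left.2 fun q (hq : 10 * q.2.2 < q.2.1) (hq' : q.2.1 < 10 * q.2.2) ↦ lt_asymm hq hq')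
    (disjoint_left.2 fun q (hq : energy θ q < 0) (hq' : 0 < energy θ q) ↦ lt_asymm hq hq')
    (isPreconnected_Icc (a := a₀) (b := 1)) ⟨1, right_mem_Icc.2 ha₀_le, h⟩
    ⟨a₀, left_mem_Icc.2 ha₀_le, undershoots_of_energy_neg
      (isRadialSolution_radialFlow hK p a₀).apply_zero ha₀ hE⟩
  have hu : IsTruncatedSolution θ p a (radialFlow 2 hK p a) := isRadialSolution_radialFlow hK p a
  exact ⟨a, _, hu.isTrappedSolution hθ hp hδ (ha₀.trans_le ha.1) ha.2 hA hB⟩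

theorem exists_isTrappedSolution (hθ : 0 < θ) (hθ' : θ < 2) :
    ∃ κ > 0, κ ≤ 1 ∧ ∀ δ ∈ Ioo 0 κ, ∃ a u, IsTrappedSolution θ (κ, δ) a u := by
  obtain ⟨K, hK⟩ := exists_lipschitzWith_truncatedField hθ
  have hΦ : Continuous (Function.uncurry fun (p : ℝ × ℝ) t ↦ (p, radialFlow 2 hK p 1 t)) :=
    continuous_fst.prodMk ((continuous_radialFlow hK).comp
      (continuous_fst.prodMk (continuous_const.prodMk continuous_snd)))
  have hzero : Overshoots θ 0 (radialFlow 2 hK 0 1) :=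
    overshoots_zero (isRadialSolution_radialFlow hK 0 1) hθ hθ' one_pos le_rfl
  have hnear : {p | Overshoots θ p (radialFlow 2 hK p 1)} ∈ 𝓝 (0 : ℝ × ℝ) :=
    (isOpen_setOf_reachesWithin hΦ (isOpen_setOf_energy_pos hθ)
      isOpen_setOf_ten_mul_lt).mem_nhds hzero
  obtain ⟨ρ, hρ, hball⟩ := Metric.mem_nhds_iff.1 hnear
  obtain ⟨κ, hκ, hκ_lt⟩ := exists_between (lt_min hρ (by norm_num : (0 : ℝ) < 1 / 200))
  obtain ⟨hκρ, hκ'⟩ := lt_min_iff.1 hκ_lt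
  refine ⟨κ, hκ, by linarith, fun δ hδ ↦ exists_isTrappedSolution_of_overshoots hK hθ
    ⟨⟨hκ.le, hκ'.le⟩, hδ.1.le, by linarith [hδ.2]⟩ hδ.1 (hball ?_)⟩
  rw [Metric.mem_ball, dist_zero_right, Prod.norm_def, Real.norm_of_nonneg hκ.le,
    Real.norm_of_nonneg hδ.1.le]
  exact max_lt hκρ (hδ.2.trans hκρ)

end Shooting

/-- The right-hand side of the radial Dirac system in the unknown `x = (f, g)` for the frequency
`ω = 1/2 - ε`, so that `m - ω = ε` and `m + ω = 1 - ε`. -/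
noncomputable def diracField (θ ε : ℝ) (x : ℝ × ℝ) : ℝ × ℝ :=
  ((|x.2 ^ 2 - x.1 ^ 2| ^ θ - ε) * x.2, (|x.2 ^ 2 - x.1 ^ 2| ^ θ - (1 - ε)) * x.1)

section DiracField

variable {θ ε : ℝ}

lemma diracField_rescale {x y : ℝ} {p v : ℝ × ℝ} (hx : (x ^ 2) ^ θ = p.1) (hy : y ^ 2 = p.1) :
    diracField θ (p.1 * p.2) ((x * y) • v.1, x • v.2) =
      (y • (x * y) • (rescaledField θ (p, v)).1, y • x • (rescaledField θ (p, v)).2) := by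
  have hdensity : |(x * v.2) ^ 2 - (x * y * v.1) ^ 2| ^ θ = p.1 * |density p.1 v.1 v.2| ^ θ := by
    have : (x * v.2) ^ 2 - (x * y * v.1) ^ 2 = x ^ 2 * density p.1 v.1 v.2 := by
      rw [density, ← hy]
      ring
    rw [this, abs_mul, abs_of_nonneg (sq_nonneg x), Real.mul_rpow (sq_nonneg x) (abs_nonneg _), hx]
  simp only [diracField, rescaledField, smul_eq_mul, hdensity]
  refine Prod.ext ?_ ?_ <;> dsimp only
  · linear_combination (-(x * v.2 * (|density p.1 v.1 v.2| ^ θ - p.2))) * hy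
  · ring

lemma contDiffOn_diracField : ContDiffOn ℝ ∞ (diracField θ ε) {x | x.1 ^ 2 < x.2 ^ 2} := by
  have hrpow : ContDiffOn ℝ ∞ (fun x : ℝ × ℝ ↦ |x.2 ^ 2 - x.1 ^ 2| ^ θ) {x | x.1 ^ 2 < x.2 ^ 2} :=
    (ContDiffOn.rpow_const_of_ne (f := fun x : ℝ × ℝ ↦ x.2 ^ 2 - x.1 ^ 2) (by fun_prop)
      fun x hx ↦ (sub_pos.2 hx).ne').congr fun x hx ↦ by rw [abs_of_pos (sub_pos.2 hx)]
  exact ((hrpow.sub contDiffOn_const).mul contDiffOn_snd).prodMk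
    ((hrpow.sub contDiffOn_const).mul contDiffOn_fst)

lemma norm_diracField_le {x : ℝ × ℝ} (hθ : 0 ≤ θ) (hε : ε ∈ Icc 0 1)
    (hx : |x.2 ^ 2 - x.1 ^ 2| ≤ 1) : ‖diracField θ ε x‖ ≤ ‖x‖ := by
  have hrpow : |x.2 ^ 2 - x.1 ^ 2| ^ θ ∈ Icc 0 1 :=
    ⟨Real.rpow_nonneg (abs_nonneg _) θ, Real.rpow_le_one (abs_nonneg _) hx hθ⟩
  have coeff_le {c : ℝ} (hc : c ∈ Icc 0 1) : |(|x.2 ^ 2 - x.1 ^ 2| ^ θ - c)| ≤ 1 :=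
    abs_sub_le_iff.2 ⟨by linarith [hrpow.2, hc.1], by linarith [hrpow.1, hc.2]⟩
  refine max_le ?_ ?_
  · exact (norm_mul _ _).trans_le ((mul_le_of_le_one_left (norm_nonneg _)
      (coeff_le hε)).trans (norm_snd_le x))
  · exact (norm_mul _ _).trans_le ((mul_le_of_le_one_left (norm_nonneg _)
      (coeff_le ⟨sub_nonneg.2 hε.2, sub_le_self 1 hε.1⟩)).trans (norm_fst_le x))

end DiracField

/-- An exponentially decaying solution `u = (f, g)` of the radial Dirac system for the frequency
`ω = 1/2 - ε`, with `u 0 = (0, a)`, whose charge density `g² - f²` lies in `(0, 1]`; positivity of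
the density keeps the solution in the region where the nonlinearity is smooth. -/
structure IsLocalizedSolution (θ ε a : ℝ) (u : ℝ → ℝ × ℝ) : Prop extends
    IsRadialSolution 2 (diracField θ ε) a u where
  density_mem : ∀ r > 0, (u r).2 ^ 2 - (u r).1 ^ 2 ∈ Ioc 0 1
  norm_le_exp : ∃ C > 0, ∃ σ > 0, ∀ r > 0, ‖u r‖ ≤ C * Real.exp (-σ * r)

theorem IsTrappedSolution.isLocalizedSolution {θ a x y : ℝ} {p : ℝ × ℝ} {u : ℝ → ℝ × ℝ}
    (hu : IsTrappedSolution θ p a u) (hθ : 0 < θ) (hθ' : θ ≤ 2) (hδ : 0 < p.2) (hx : 0 < x)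
    (hy : 0 < y) (hxμ : (x ^ 2) ^ θ = p.1) (hyμ : y ^ 2 = p.1) :
    IsLocalizedSolution θ (p.1 * p.2) (x • a)
      fun r ↦ ((x * y) • (u (y * r)).1, x • (u (y * r)).2) where
  toIsRadialSolution := hu.rescale hy fun _ ↦ diracField_rescale hxμ hyμ
  density_mem r hr := by
    have hyr := mul_pos hy hr
    have hq := hu.mem_admissible _ hyr
    have hx' : x ^ 2 ≤ 1 := by
      by_contra! hlt
      linarith [hq.1.1.2, Real.one_lt_rpow hlt hθ]
    have hscale : (x • (u (y * r)).2) ^ 2 - ((x * y) • (u (y * r)).1) ^ 2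
        = x ^ 2 * density p.1 (u (y * r)).1 (u (y * r)).2 := by
      rw [← hyμ, density, smul_eq_mul, smul_eq_mul]
      ring
    have hpos : 0 < density p.1 (u (y * r)).1 (u (y * r)).2 :=
      (half_pos (pow_pos (hu.snd_pos _ hyr) 2)).trans_le (sq_div_two_le_density hq)
    rw [hscale]
    exact ⟨by positivity, mul_le_one₀ hx' hpos.le (density_le_one hq)⟩
  norm_le_exp := by
    obtain ⟨C, hC, σ, hσ, hdecay⟩ := hu.exists_snd_le_exp hθ hθ' hδ
    refine ⟨max (x * y) x * (10 * C), by positivity, σ * y, by positivity, fun r hr ↦ ?_⟩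
    have hyr := mul_pos hy hr
    calc _ ≤ max (x * y) x * ‖u (y * r)‖ := by
          rw [Prod.norm_def, norm_smul, norm_smul, Real.norm_of_nonneg (by positivity),
            Real.norm_of_nonneg hx.le]
          exact max_le
            (mul_le_mul (le_max_left _ _) (norm_fst_le _) (norm_nonneg _) (by positivity))
            (mul_le_mul (le_max_right _ _) (norm_snd_le _) (norm_nonneg _) (by positivity))
      _ ≤ max (x * y) x * (10 * (C * Real.exp (-σ * (y * r)))) := by
          gcongr
          exact (hu.norm_le_ten_mul_snd hyr).trans (by gcongr; exact hdecay _ hyr)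
      _ = _ := by ring_nf

theorem exists_isLocalizedSolution {θ : ℝ} (hθ : 0 < θ) (hθ' : θ < 2) :
    ∃ ε₀ > 0, ε₀ ≤ 1 ∧ ∀ ε ∈ Ioo 0 ε₀, ∃ a u, IsLocalizedSolution θ ε a u := by
  obtain ⟨κ, hκ, hκ', trapped⟩ := exists_isTrappedSolution hθ hθ'
  obtain ⟨x, hx, hxκ⟩ := exists_sq_rpow_eq hθ.ne' hκ
  refine ⟨κ * κ, by positivity, mul_le_one₀ hκ' hκ.le hκ', fun ε hε ↦ ?_⟩
  have hδ : 0 < ε / κ := div_pos hε.1 hκ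
  obtain ⟨a, u, hu⟩ := trapped (ε / κ) ⟨hδ, (div_lt_iff₀ hκ).2 hε.2⟩
  have hlocalized := hu.isLocalizedSolution hθ hθ'.le hδ hx (Real.sqrt_pos.2 hκ) hxκ
    (Real.sq_sqrt hκ.le)
  rw [mul_div_cancel₀ ε hκ.ne'] at hlocalized
  exact ⟨_, _, hlocalized⟩

namespace IsLocalizedSolution

variable {θ ε a r : ℝ} {u : ℝ → ℝ × ℝ} (hu : IsLocalizedSolution θ ε a u)

include hu

lemma snd_ne_zero (hr : 0 < r) : (u r).2 ≠ 0 := by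
  intro hz
  have := (hu.density_mem r hr).1
  rw [hz] at this
  linarith [sq_nonneg (u r).1]

lemma contDiffOn_two : ContDiffOn ℝ 2 u (Ioi 0) :=
  contDiffOn_infty.1 (hu.toIsRadialSolution.contDiffOn contDiffOn_diracField
    fun r hr ↦ sub_pos.1 (hu.density_mem r hr).1) 2

lemma norm_diracField_le (hθ : 0 ≤ θ) (hε : ε ∈ Icc 0 1) (hr : 0 < r) :
    ‖diracField θ ε (u r)‖ ≤ ‖u r‖ :=
  RadialDirac.norm_diracField_le hθ hε <|
    (abs_of_pos (hu.density_mem r hr).1).trans_le (hu.density_mem r hr).2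

lemma abs_deriv_fst_le (hθ : 0 ≤ θ) (hε : ε ∈ Icc 0 1) (hr : 1 ≤ r) :
    |deriv (fun s ↦ (u s).1) r| ≤ 3 * ‖u r‖ := by
  have hr_pos : 0 < r := one_pos.trans_le hr
  have hfield : |(diracField θ ε (u r)).1| ≤ ‖u r‖ := (norm_fst_le _).trans
    (hu.norm_diracField_le hθ hε hr_pos)
  have hfriction : |2 / r * (u r).1| ≤ 2 * ‖u r‖ := by
    rw [abs_mul, abs_of_pos (by positivity)]
    gcongr
    · exact div_le_self zero_le_two hr
    · exact norm_fst_le (u r)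
  rw [(hu.hasDerivAt_fst hr_pos).deriv]
  exact (abs_sub _ _).trans (by simp only [smul_eq_mul, Nat.cast_ofNat]; linarith)

lemma abs_deriv_snd_le (hθ : 0 ≤ θ) (hε : ε ∈ Icc 0 1) (hr : 0 < r) :
    |deriv (fun s ↦ (u s).2) r| ≤ ‖u r‖ := by
  rw [(hu.hasDerivAt_snd hr).deriv]
  exact (norm_snd_le _).trans (hu.norm_diracField_le hθ hε hr)

lemma exists_abs_add_abs_deriv_le_exp (hθ : 0 ≤ θ) (hε : ε ∈ Icc 0 1) :
    ∃ C > 0, ∃ σ > 0, ∀ r ≥ 1, |(u r).1| + |(u r).2| + |deriv (fun s ↦ (u s).1) r| +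
      |deriv (fun s ↦ (u s).2) r| ≤ C * Real.exp (-σ * r) := by
  obtain ⟨C, hC, σ, hσ, hdecay⟩ := hu.norm_le_exp
  refine ⟨6 * C, by positivity, σ, hσ, fun r hr ↦ ?_⟩
  have hr_pos : 0 < r := one_pos.trans_le hr
  have hf : |(u r).1| ≤ ‖u r‖ := norm_fst_le (u r)
  have hg : |(u r).2| ≤ ‖u r‖ := norm_snd_le (u r)
  linarith [hu.abs_deriv_fst_le hθ hε hr, hu.abs_deriv_snd_le hθ hε hr_pos, hdecay r hr_pos]

end IsLocalizedSolution

end RadialDirac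

theorem dirac_localized_solutions_general (θ : ℝ) (hθ : 0 < θ) (hθ' : θ < 2) :
    ∃ ε₀ > (0:ℝ), ∀ ε ∈ Set.Ioo (0:ℝ) ε₀, ∀ ω : ℝ, ω = 1/2 - ε →
      ∃ f g : ℝ → ℝ,
        ContDiffOn ℝ 2 f (Set.Ioi 0) ∧ ContDiffOn ℝ 2 g (Set.Ioi 0) ∧
        (∃ r > (0:ℝ), f r ≠ 0 ∨ g r ≠ 0) ∧
        (∀ r > (0:ℝ),
          deriv f r + (2 / r) * f r = (|g r ^ 2 - f r ^ 2| ^ θ - (1/2 - ω)) * g r ∧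
          deriv g r = (|g r ^ 2 - f r ^ 2| ^ θ - (1/2 + ω)) * f r) ∧
        ∃ C > (0:ℝ), ∃ σ > (0:ℝ), ∀ r ≥ (1:ℝ),
          |f r| + |g r| + |deriv f r| + |deriv g r| ≤ C * Real.exp (-σ * r) := by
  obtain ⟨ε₀, hε₀, hε₀', localized⟩ := RadialDirac.exists_isLocalizedSolution hθ hθ'
  refine ⟨ε₀, hε₀, ?_⟩
  rintro ε hε _ rfl
  obtain ⟨a, u, hu⟩ := localized ε hε
  refine ⟨fun r ↦ (u r).1, fun r ↦ (u r).2, hu.contDiffOn_two.fst, hu.contDiffOn_two.snd,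
    ⟨1, one_pos, .inr (hu.snd_ne_zero one_pos)⟩, fun r hr ↦ ⟨?_, ?_⟩,
    hu.exists_abs_add_abs_deriv_le_exp hθ.le ⟨hε.1.le, hε.2.le.trans hε₀'⟩⟩
  · rw [(hu.hasDerivAt_fst hr).deriv, RadialDirac.diracField, smul_eq_mul, Nat.cast_ofNat,
      sub_add_cancel, sub_sub_cancel]
  · rw [(hu.hasDerivAt_snd hr).deriv, RadialDirac.diracField]
    ring

/-- Combination of Theorems 1.1 and 1.2 of the paper: for the nonlinearity `F(s) = |s|^θ`
with `1 ≤ θ < 2` and mass `m = 1/2`, there is `ε₀ > 0` such that for every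
`ε ∈ (0, ε₀)` and frequency `ω = m − ε`, the radially reduced nonlinear Dirac system has a
nontrivial, twice continuously differentiable, exponentially decaying solution `(f, g)`. -/
theorem dirac_localized_solutions (θ : ℝ) (hθ₁ : 1 ≤ θ) (hθ₂ : θ < 2) :
    ∃ ε₀ > (0:ℝ), ∀ ε ∈ Set.Ioo (0:ℝ) ε₀, ∀ ω : ℝ, ω = 1/2 - ε →
      ∃ f g : ℝ → ℝ,
        ContDiffOn ℝ 2 f (Set.Ioi 0) ∧ ContDiffOn ℝ 2 g (Set.Ioi 0) ∧
        (∃ r > (0:ℝ), f r ≠ 0 ∨ g r ≠ 0) ∧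
        (∀ r > (0:ℝ),
          deriv f r + (2 / r) * f r = (|g r ^ 2 - f r ^ 2| ^ θ - (1/2 - ω)) * g r ∧
          deriv g r = (|g r ^ 2 - f r ^ 2| ^ θ - (1/2 + ω)) * f r) ∧
        ∃ C > (0:ℝ), ∃ σ > (0:ℝ), ∀ r ≥ (1:ℝ),
          |f r| + |g r| + |deriv f r| + |deriv g r| ≤ C * Real.exp (-σ * r) :=
  dirac_localized_solutions_general θ (one_pos.trans_le hθ₁) hθ₂
end

section
/- Let m = 1/2 (Soler model, F(s) = s). There exists ε₀ > 0 such that for every ε ∈ (0, ε₀), setting ω = m − ε, there exist twice continuously differentiable functions f, g : (0,∞) → ℝ, not both identically zero, satisfying for all r > 0 the system f'(r) + (2/r) f(r) = ((g(r)² − f(r)²) − (m − ω)) g(r) and g'(r) = ((g(r)² − f(r)²) − (m + ω)) f(r), and constants C > 0, σ > 0 (depending on ε) such that |f(r)| + |g(r)| + |f'(r)| + |g'(r)| ≤ C e^{−σ r} for all r ≥ 1. -/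
/-!
With `ω = 1 / 2 - μ ν`, the scaling `g(r) = √μ v(√μ r)`, `f(r) = μ w(√μ r)` turns the system into a
regular perturbation, in `μ`, of the first-order form of `-Δv = v ^ 3 - ν v`, and one shoots from
`v(0) = 1`, `w(0) = 0`. At `μ = ν = 0` this is the Lane–Emden equation of index 3, whose solution
crosses zero; at `ν = 1` the energy, which decreases along profiles, is negative from the start and
keeps `v` positive. Both alternatives are open in `(μ, ν)` and exclude each other, while the
hyperbola `μ ν = ε` is connected, so on it some profile does neither. That profile stays positive
with nonnegative energy, which forces it to decrease to zero; once `v ^ 2 < ν / 2`, the sum `v + w`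
obeys `(v + w)' ≤ -(ν / 2) (v + w)` and decays exponentially.
-/

open Set Filter Topology Function
open scoped BoundedContinuousFunction NNReal

theorem exists_continuous_fixedPoint_of_lipschitzWith {P Z : Type*} [PseudoMetricSpace P]
    [MetricSpace Z] [CompleteSpace Z] [Nonempty Z] {Φ : P → Z → Z} {K : ℝ≥0} (hK : K < 1)
    (hΦ : LipschitzWith K (uncurry Φ)) :
    ∃ y : P → Z, Continuous y ∧ ∀ p, Φ p (y p) = y p := by
  have hcontr (p) : ContractingWith K (Φ p) :=
    ⟨hK, LipschitzWith.of_dist_le_mul fun y z => by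
      simpa [Prod.dist_eq] using hΦ.dist_le_mul (p, y) (p, z)⟩
  refine ⟨fun p => (hcontr p).fixedPoint, ?_, fun p => (hcontr p).fixedPoint_isFixedPt⟩
  refine (LipschitzWith.of_dist_le_mul (K := K / (1 - K)) fun p q => ?_).continuous
  have hpq (z) : dist (Φ p z) (Φ q z) ≤ K * dist p q := by
    simpa [Prod.dist_eq] using hΦ.dist_le_mul (p, z) (q, z)
  refine ((hcontr p).fixedPoint_lipschitz_in_map (hcontr q) hpq).trans_eq ?_
  rw [NNReal.coe_div, NNReal.coe_sub hK.le, NNReal.coe_one, mul_div_right_comm]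

section WeightedContraction

variable {P α X : Type*} [PseudoMetricSpace P] [TopologicalSpace α]
  [NormedAddCommGroup X] [NormedSpace ℝ X] [CompleteSpace X]

theorem exists_continuous_fixedPoint_of_weighted_contraction {T : P → (α → X) → α → X}
    {w : α → ℝ} {K : ℝ≥0} (hK : K < 1) (hw : Continuous w) (hw_pos : ∀ t, 0 < w t)
    (hT_cont : ∀ p F, Continuous F → Continuous (T p F))
    (hT_zero : ∀ p, ∃ C, ∀ t, ‖T p 0 t‖ ≤ C * w t)
    (hT_sub : ∀ p q F G D, Continuous F → Continuous G → dist p q ≤ D →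
      (∀ t, ‖F t - G t‖ ≤ D * w t) → ∀ t, ‖T p F t - T q G t‖ ≤ K * D * w t) :
    ∃ y : P → α → X, Continuous (uncurry y) ∧ ∀ p, T p (y p) = y p := by
  let U (Y : α →ᵇ X) (t : α) : X := w t • Y t
  have hU_cont (Y) : Continuous (U Y) := hw.smul Y.continuous
  have hU_sub (Y Z t) : ‖U Y t - U Z t‖ ≤ dist Y Z * w t := by
    rw [← smul_sub, norm_smul, Real.norm_of_nonneg (hw_pos t).le, mul_comm, ← dist_eq_norm]
    exact mul_le_mul_of_nonneg_right (Y.dist_coe_le_dist t) (hw_pos t).le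
  have norm_unweight (t) (x : X) (C : ℝ) : ‖(w t)⁻¹ • x‖ ≤ C ↔ ‖x‖ ≤ C * w t := by
    rw [norm_smul, norm_inv, Real.norm_of_nonneg (hw_pos t).le, inv_mul_le_iff₀ (hw_pos t),
      mul_comm]
  have hT_bdd (p Y) : ∃ C, ∀ t, ‖(w t)⁻¹ • T p (U Y) t‖ ≤ C := by
    obtain ⟨C, hC⟩ := hT_zero p
    refine ⟨K * ‖Y‖ + C, fun t => (norm_unweight _ _ _).2 ?_⟩
    have hY : ‖T p (U Y) t - T p 0 t‖ ≤ K * ‖Y‖ * w t :=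
      hT_sub p p _ 0 _ (hU_cont Y) continuous_zero (by simp)
        (fun t => by simpa [U] using hU_sub Y 0 t) t
    linarith [norm_le_norm_sub_add (T p (U Y) t) (T p 0 t), hC t]
  choose C hC using hT_bdd
  let Φ (p : P) (Y : α →ᵇ X) : α →ᵇ X := .ofNormedAddCommGroup (fun t => (w t)⁻¹ • T p (U Y) t)
    ((hw.inv₀ fun t => (hw_pos t).ne').smul (hT_cont p _ (hU_cont Y))) (C p Y) (hC p Y)
  have hΦ : LipschitzWith K (uncurry Φ) := LipschitzWith.of_dist_le_mul fun ⟨p, Y⟩ ⟨q, Z⟩ => by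
    refine (BoundedContinuousFunction.dist_le (by positivity)).2 fun t => ?_
    change dist ((w t)⁻¹ • T p (U Y) t) ((w t)⁻¹ • T q (U Z) t) ≤ _
    rw [dist_eq_norm, ← smul_sub, norm_unweight]
    exact hT_sub p q _ _ _ (hU_cont Y) (hU_cont Z) (le_max_left _ _) (fun t => (hU_sub Y Z t).trans
      (mul_le_mul_of_nonneg_right (le_max_right _ _) (hw_pos t).le)) t
  obtain ⟨Y, hY_cont, hY_fix⟩ := exists_continuous_fixedPoint_of_lipschitzWith hK hΦ
  refine ⟨fun p => U (Y p), ?_, fun p => funext fun t => ?_⟩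
  · exact (hw.comp continuous_snd).smul ((hY_cont.comp continuous_fst).eval continuous_snd)
  · have h : (w t)⁻¹ • T p (U (Y p)) t = Y p t := DFunLike.congr_fun (hY_fix p) t
    exact (inv_smul_eq_iff₀ (hw_pos t).ne').1 h

end WeightedContraction

section RadialPrimitive

variable {E : Type*} [NormedAddCommGroup E] [NormedSpace ℝ E] {n : ℕ} {F G : ℝ → E}

/-- The solution `u` of `u' + (n / ρ) u = F` that vanishes at `0`. Integrating over `[0, 1]`
instead of dividing `∫ t in 0..ρ, t ^ n • F t` by `ρ ^ n` keeps it continuous at the origin. -/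
noncomputable def radialPrimitive (n : ℕ) (F : ℝ → E) (ρ : ℝ) : E :=
  ρ • ∫ τ in (0 : ℝ)..1, τ ^ n • F (ρ * τ)

theorem continuous_radialPrimitive (hF : Continuous F) : Continuous (radialPrimitive n F) :=
  continuous_id.smul <|
    intervalIntegral.continuous_parametric_intervalIntegral_of_continuous' (by fun_prop) 0 1

theorem radialPrimitive_sub (hF : Continuous F) (hG : Continuous G) (ρ : ℝ) :
    radialPrimitive n (F - G) ρ = radialPrimitive n F ρ - radialPrimitive n G ρ := by
  simp only [radialPrimitive, Pi.sub_apply, smul_sub]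
  rw [intervalIntegral.integral_sub, smul_sub] <;>
    exact Continuous.intervalIntegrable (by fun_prop) _ _

theorem pow_smul_radialPrimitive (n : ℕ) (F : ℝ → E) (ρ : ℝ) :
    ρ ^ n • radialPrimitive n F ρ = ∫ t in (0 : ℝ)..ρ, t ^ n • F t := by
  have h := intervalIntegral.smul_integral_comp_mul_left (a := 0) (b := 1)
    (fun t => t ^ n • F t) ρ
  rw [mul_zero, mul_one] at h
  simp only [← h, mul_pow, mul_smul, intervalIntegral.integral_smul, radialPrimitive]
  exact smul_comm _ _ _

theorem hasDerivAt_radialPrimitive [CompleteSpace E] (hF : Continuous F) {ρ : ℝ} (hρ : ρ ≠ 0) :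
    HasDerivAt (radialPrimitive n F) (F ρ - (n / ρ) • radialPrimitive n F ρ) ρ := by
  have hint : HasDerivAt (fun r => ∫ t in (0 : ℝ)..r, t ^ n • F t) (ρ ^ n • F ρ) ρ := by
    have hc : Continuous fun t => t ^ n • F t := by fun_prop
    exact intervalIntegral.integral_hasDerivAt_right (hc.intervalIntegrable _ _)
      (hc.stronglyMeasurableAtFilter _ _) hc.continuousAt
  have hquot := ((hasDerivAt_pow n ρ).fun_inv (pow_ne_zero n hρ)).smul hint
  have heq : radialPrimitive n F =ᶠ[𝓝 ρ]
      fun r => (r ^ n)⁻¹ • ∫ t in (0 : ℝ)..r, t ^ n • F t := by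
    filter_upwards [eventually_ne_nhds hρ] with r hr
    rw [← pow_smul_radialPrimitive, inv_smul_smul₀ (pow_ne_zero n hr)]
  refine (hquot.congr_of_eventuallyEq heq).congr_deriv ?_
  rw [← pow_smul_radialPrimitive, inv_smul_smul₀ (pow_ne_zero n hρ), smul_smul, sub_eq_add_neg,
    ← neg_smul]
  congr 2
  rcases n with _ | n
  · simp
  · rw [Nat.add_sub_cancel]
    field_simp
    ring

theorem abs_mul_integral_exp_le {l : ℝ} (hl : 0 < l) (ρ : ℝ) :
    |ρ| * ∫ τ in (0 : ℝ)..1, Real.exp (l * |ρ * τ|) ≤ Real.exp (l * |ρ|) / l := by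
  have habs : ∫ τ in (0 : ℝ)..1, Real.exp (l * |ρ * τ|) =
      ∫ τ in (0 : ℝ)..1, Real.exp (l * (|ρ| * τ)) := by
    refine intervalIntegral.integral_congr fun τ hτ => ?_
    rw [uIcc_of_le zero_le_one] at hτ
    simp only [abs_mul, abs_of_nonneg hτ.1]
  have hscale := intervalIntegral.smul_integral_comp_mul_left (a := 0) (b := 1)
    (fun t => Real.exp (l * t)) |ρ|
  rw [mul_zero, mul_one, intervalIntegral.integral_comp_mul_left _ hl.ne', integral_exp, mul_zero,
    Real.exp_zero, smul_eq_mul, smul_eq_mul] at hscale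
  rw [habs, hscale, inv_mul_eq_div]
  gcongr
  linarith

theorem norm_radialPrimitive_le {D l : ℝ} (hl : 0 < l)
    (hF : ∀ t, ‖F t‖ ≤ D * Real.exp (l * |t|)) (ρ : ℝ) :
    ‖radialPrimitive n F ρ‖ ≤ D / l * Real.exp (l * |ρ|) := by
  have hD : 0 ≤ D := by simpa using (norm_nonneg _).trans (hF 0)
  have hint : ‖∫ τ in (0 : ℝ)..1, τ ^ n • F (ρ * τ)‖ ≤
      ∫ τ in (0 : ℝ)..1, D * Real.exp (l * |ρ * τ|) := by
    refine intervalIntegral.norm_integral_le_of_norm_le zero_le_one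
      (Eventually.of_forall fun τ hτ => ?_) (Continuous.intervalIntegrable (by fun_prop) _ _)
    rw [norm_smul, norm_pow, Real.norm_of_nonneg hτ.1.le]
    exact (mul_le_of_le_one_left (norm_nonneg _) (pow_le_one₀ hτ.1.le hτ.2)).trans (hF _)
  rw [intervalIntegral.integral_const_mul] at hint
  calc ‖radialPrimitive n F ρ‖
      ≤ |ρ| * (D * ∫ τ in (0 : ℝ)..1, Real.exp (l * |ρ * τ|)) := by
        rw [radialPrimitive, norm_smul, Real.norm_eq_abs]
        gcongr
    _ = D * (|ρ| * ∫ τ in (0 : ℝ)..1, Real.exp (l * |ρ * τ|)) := mul_left_comm _ _ _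
    _ ≤ D * (Real.exp (l * |ρ|) / l) :=
        mul_le_mul_of_nonneg_left (abs_mul_integral_exp_le hl ρ) hD
    _ = D / l * Real.exp (l * |ρ|) := by ring

end RadialPrimitive

section RadialSystem

variable {P E F : Type*} [PseudoMetricSpace P] [NormedAddCommGroup E] [NormedSpace ℝ E]
  [NormedAddCommGroup F] [NormedSpace ℝ F] {n : ℕ} {a : E} {G H : ℝ → E × F}

/-- The solution `y` of `y' + (0, (n / ρ) y₂) = G` with `y(0) = (a, 0)`: the operator whose fixed
points solve a radial first-order system. -/
noncomputable def radialSolution (n : ℕ) (a : E) (G : ℝ → E × F) (ρ : ℝ) : E × F :=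
  (a + radialPrimitive 0 (fun t => (G t).1) ρ, radialPrimitive n (fun t => (G t).2) ρ)

theorem radialSolution_apply_zero (G : ℝ → E × F) : radialSolution n a G 0 = (a, 0) := by
  simp [radialSolution, radialPrimitive]

theorem radialSolution_zero (ρ : ℝ) : radialSolution n a (fun _ => (0 : E × F)) ρ = (a, 0) := by
  simp [radialSolution, radialPrimitive]

theorem continuous_radialSolution (hG : Continuous G) : Continuous (radialSolution n a G) :=
  (continuous_const.add (continuous_radialPrimitive hG.fst)).prodMk
    (continuous_radialPrimitive hG.snd)

theorem hasDerivAt_radialSolution [CompleteSpace E] [CompleteSpace F] (hG : Continuous G) {ρ : ℝ}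
    (hρ : ρ ≠ 0) : HasDerivAt (radialSolution n a G)
      (G ρ - (0, (n / ρ) • (radialSolution n a G ρ).2)) ρ := by
  refine (((hasDerivAt_radialPrimitive hG.fst hρ).const_add a).prodMk
    (hasDerivAt_radialPrimitive hG.snd hρ)).congr_deriv ?_
  ext <;> simp [radialSolution]

theorem norm_radialSolution_sub_le (hG : Continuous G) (hH : Continuous H) {D l : ℝ} (hl : 0 < l)
    (hGH : ∀ t, ‖G t - H t‖ ≤ D * Real.exp (l * |t|)) (ρ : ℝ) :
    ‖radialSolution n a G ρ - radialSolution n a H ρ‖ ≤ D / l * Real.exp (l * |ρ|) := by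
  have hfst := radialPrimitive_sub (n := 0) hG.fst hH.fst ρ
  have hsnd := radialPrimitive_sub (n := n) hG.snd hH.snd ρ
  rw [radialSolution, radialSolution, Prod.mk_sub_mk, add_sub_add_left_eq_sub, ← hfst, ← hsnd]
  exact max_le (norm_radialPrimitive_le hl (fun t => (norm_fst_le _).trans (hGH t)) ρ)
    (norm_radialPrimitive_le hl (fun t => (norm_snd_le _).trans (hGH t)) ρ)

theorem norm_radialSolution_comp_sub_le {N : P → E × F → E × F} {K : ℝ≥0}
    (hN : LipschitzWith K (uncurry N)) {p q : P} {Y Z : ℝ → E × F} (hY : Continuous Y)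
    (hZ : Continuous Z) {D l : ℝ} (hl : 0 < l) (hpq : dist p q ≤ D)
    (hYZ : ∀ t, ‖Y t - Z t‖ ≤ D * Real.exp (l * |t|)) (ρ : ℝ) :
    ‖radialSolution n a (fun t => N p (Y t)) ρ - radialSolution n a (fun t => N q (Z t)) ρ‖ ≤
      K * D / l * Real.exp (l * |ρ|) := by
  have hD : 0 ≤ D := dist_nonneg.trans hpq
  refine norm_radialSolution_sub_le (hN.continuous.comp (continuous_const.prodMk hY))
    (hN.continuous.comp (continuous_const.prodMk hZ)) hl (fun t => ?_) ρ
  rw [← dist_eq_norm, mul_assoc]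
  refine (hN.dist_le_mul (p, Y t) (q, Z t)).trans (mul_le_mul_of_nonneg_left ?_ K.2)
  exact max_le (hpq.trans (le_mul_of_one_le_right hD (Real.one_le_exp (by positivity))))
    ((dist_eq_norm _ _).trans_le (hYZ t))

theorem exists_continuous_radial_flow [CompleteSpace E] [CompleteSpace F]
    {N : P → E × F → E × F} {K : ℝ≥0} (hN : LipschitzWith K (uncurry N)) (n : ℕ) (a : E) :
    ∃ y : P → ℝ → E × F, Continuous (uncurry y) ∧ ∀ p, y p 0 = (a, 0) ∧
      ∀ ρ ≠ 0, HasDerivAt (y p) (N p (y p ρ) - (0, (n / ρ) • (y p ρ).2)) ρ := by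
  let l : ℝ≥0 := K + 1
  have hl : 0 < (l : ℝ) := by positivity
  have hKl : K / l < 1 := (div_lt_one (by positivity)).2 (lt_add_one K)
  have le_mul_exp {C : ℝ} (hC : 0 ≤ C) (t : ℝ) : C ≤ C * Real.exp (l * |t|) :=
    le_mul_of_one_le_right hC (Real.one_le_exp (by positivity))
  have hN_comp (p) {Y : ℝ → E × F} (hY : Continuous Y) : Continuous fun t => N p (Y t) :=
    hN.continuous.comp (continuous_const.prodMk hY)
  let T (p : P) (Y : ℝ → E × F) : ℝ → E × F := radialSolution n a fun t => N p (Y t)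
  have hT_zero (p) : ∃ C, ∀ t, ‖T p 0 t‖ ≤ C * Real.exp (l * |t|) := by
    refine ⟨‖N p 0‖ / l + ‖(a, (0 : F))‖, fun t => ?_⟩
    have h := norm_radialSolution_sub_le (n := n) (a := a) (G := fun _ => N p 0)
      (H := fun _ => 0) continuous_const continuous_const hl (D := ‖N p 0‖)
      (fun t => (sub_zero (N p 0)).symm ▸ le_mul_exp (norm_nonneg _) t) t
    rw [radialSolution_zero] at h
    rw [add_mul]
    exact (norm_le_norm_sub_add _ _).trans (add_le_add h (le_mul_exp (norm_nonneg _) t))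
  obtain ⟨y, hy, hfix⟩ := exists_continuous_fixedPoint_of_weighted_contraction hKl
    (w := fun t => Real.exp (l * |t|)) (by fun_prop) (fun t => Real.exp_pos _)
    (fun p Y hY => continuous_radialSolution (hN_comp p hY)) hT_zero
    fun p q Y Z D hY hZ hpq hYZ ρ =>
      (norm_radialSolution_comp_sub_le hN hY hZ hl hpq hYZ ρ).trans_eq (by push_cast; ring)
  refine ⟨y, hy, fun p => ⟨?_, fun ρ hρ => ?_⟩⟩
  · rw [← hfix p, radialSolution_apply_zero]
  · have h := hasDerivAt_radialSolution (n := n) (a := a) (hN_comp p (hy.uncurry_left p)) hρ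
    rwa [hfix p] at h

end RadialSystem

section RealAnalysis

theorem le_of_hasDerivAt_nonpos {f f' : ℝ → ℝ} {a b : ℝ} (hab : a ≤ b)
    (hf : ContinuousOn f (Icc a b)) (hf' : ∀ x ∈ Ioo a b, HasDerivAt f (f' x) x)
    (hle : ∀ x ∈ Ioo a b, f' x ≤ 0) : f b ≤ f a := by
  rw [← interior_Icc] at hf' hle
  exact antitoneOn_of_hasDerivWithinAt_nonpos (convex_Icc a b) hf
    (fun x hx => (hf' x hx).hasDerivWithinAt) hle (left_mem_Icc.2 hab) (right_mem_Icc.2 hab) hab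

theorem le_of_hasDerivAt_nonneg {f f' : ℝ → ℝ} {a b : ℝ} (hab : a ≤ b)
    (hf : ContinuousOn f (Icc a b)) (hf' : ∀ x ∈ Ioo a b, HasDerivAt f (f' x) x)
    (hle : ∀ x ∈ Ioo a b, 0 ≤ f' x) : f a ≤ f b :=
  neg_le_neg_iff.1 <| le_of_hasDerivAt_nonpos (f := -f) hab hf.neg (fun x hx => (hf' x hx).neg)
    fun x hx => neg_nonpos.2 (hle x hx)

theorem pos_of_hasDerivAt_pos_of_eq_zero {f f' : ℝ → ℝ} {a b : ℝ} (hab : a ≤ b) (ha : 0 < f a)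
    (hf : ∀ t ∈ Icc a b, HasDerivAt f (f' t) t) (hf' : ∀ t ∈ Icc a b, f t = 0 → 0 < f' t) :
    0 < f b := by
  have hnonneg : ∀ t ∈ Icc a b, 0 ≤ f t := fun t ht => neg_nonpos.1 <|
    image_le_of_deriv_right_lt_deriv_boundary (f := fun t => -f t) (B := fun _ => 0)
      (fun t ht => (hf t ht).neg.continuousAt.continuousWithinAt)
      (fun t ht => (hf t (Ico_subset_Icc_self ht)).neg.hasDerivWithinAt) (neg_nonpos.2 ha.le)
      (fun t => hasDerivAt_const t 0)
      (fun t ht h => neg_lt_zero.2 (hf' t (Ico_subset_Icc_self ht) (neg_eq_zero.1 h))) ht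
  have hb : b ∈ Icc a b := right_mem_Icc.2 hab
  refine (hnonneg b hb).lt_of_ne' fun h0 => (hf' b hb h0).not_ge ?_
  have hlt : a < b := hab.lt_of_ne (by rintro rfl; exact ha.ne' h0)
  have hslope := (hasDerivWithinAt_iff_tendsto_slope' self_notMem_Iio).1
    (hf b hb).hasDerivWithinAt
  refine le_of_tendsto hslope ?_
  filter_upwards [Ioo_mem_nhdsLT hlt] with t ht
  rw [slope_def_field, h0, sub_zero]
  exact div_nonpos_of_nonneg_of_nonpos (hnonneg t (Ioo_subset_Icc_self ht))
    (sub_nonpos.2 ht.2.le)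

theorem sq_le_mul_sub_of_deriv_le_neg {v v' w w' : ℝ → ℝ} {k L l t : ℝ} (hk : 0 ≤ k) (hL : 0 < L)
    (hv : ∀ s ≥ t, HasDerivAt v (v' s) s) (hw : ∀ s ≥ t, HasDerivAt w (w' s) s)
    (hv' : ∀ s ≥ t, v' s ≤ -k * w s) (hw' : ∀ s ≥ t, -L ≤ w' s) (hwt : 0 ≤ w t)
    (hl : ∀ s ≥ t, l ≤ v s) : k * w t ^ 2 ≤ 2 * L * (v t - l) := by
  have hw_ge : ∀ s ≥ t, w t - L * (s - t) ≤ w s := fun s hs => by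
    have h := le_of_hasDerivAt_nonneg (f := fun s => w s + L * (s - t)) (f' := fun s => w' s + L) hs
      (fun x hx => ContinuousAt.continuousWithinAt (by have := (hw x hx.1).continuousAt; fun_prop))
      (fun x hx => by
        simpa using (hw x hx.1.le).fun_add (((hasDerivAt_id x).sub_const t).const_mul L))
      (fun x hx => by linarith [hw' x hx.1.le])
    simp only [sub_self] at h
    linarith
  have hts : t ≤ t + w t / L := le_add_of_nonneg_right (by positivity)
  have h := le_of_hasDerivAt_nonpos
    (f := fun s => v s + k * (w t * (s - t) - L * (s - t) ^ 2 / 2))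
    (f' := fun s => v' s + k * (w t - L * (s - t))) hts
    (fun x hx => ContinuousAt.continuousWithinAt (by have := (hv x hx.1).continuousAt; fun_prop))
    (fun x hx => by
      have hx' := (hasDerivAt_id x).sub_const t
      refine ((hv x hx.1.le).add (((hx'.const_mul (w t)).sub
        (((hx'.pow 2).const_mul L).div_const 2)).const_mul k)).congr_deriv ?_
      simp only [id_eq, Nat.cast_ofNat]
      ring)
    (fun x hx => by
      linarith [hv' x hx.1.le, mul_le_mul_of_nonneg_left (hw_ge x hx.1.le) hk])
  have harea : k * (w t * (w t / L) - L * (w t / L) ^ 2 / 2) = k * w t ^ 2 / (2 * L) := by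
    field_simp
    ring
  have hvl := hl _ hts
  simp only [add_sub_cancel_left, sub_self, harea] at h
  rw [← div_le_iff₀' (by positivity)]
  linarith

theorem tendsto_zero_of_deriv_le_neg {v v' w w' : ℝ → ℝ} {k L l R : ℝ} (hk : 0 < k) (hL : 0 < L)
    (hv : ∀ t ≥ R, HasDerivAt v (v' t) t) (hw : ∀ t ≥ R, HasDerivAt w (w' t) t)
    (hv' : ∀ t ≥ R, v' t ≤ -k * w t) (hw' : ∀ t ≥ R, -L ≤ w' t) (hw_nonneg : ∀ t ≥ R, 0 ≤ w t)
    (hl : ∀ t ≥ R, l ≤ v t) (hlim : Tendsto v atTop (𝓝 l)) : Tendsto w atTop (𝓝 0) := by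
  have hbound : Tendsto (fun t => √(2 * L * (v t - l) / k)) atTop (𝓝 0) := by
    have h := (((hlim.sub_const l).const_mul (2 * L)).div_const k).sqrt
    simpa using h
  refine squeeze_zero' ?_ ?_ hbound
  · filter_upwards [eventually_ge_atTop R] with t ht using hw_nonneg t ht
  · filter_upwards [eventually_ge_atTop R] with t ht
    refine Real.le_sqrt_of_sq_le ((le_div_iff₀' hk).2 ?_)
    exact sq_le_mul_sub_of_deriv_le_neg hk.le hL (fun s hs => hv s (ht.trans hs))
      (fun s hs => hw s (ht.trans hs)) (fun s hs => hv' s (ht.trans hs))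
      (fun s hs => hw' s (ht.trans hs)) (hw_nonneg t ht) (fun s hs => hl s (ht.trans hs))

theorem exists_tendsto_of_antitoneOn_Ici {f : ℝ → ℝ} {a : ℝ} (hf : AntitoneOn f (Ici a))
    (hbdd : BddBelow (f '' Ici a)) : ∃ l, Tendsto f atTop (𝓝 l) ∧ ∀ t ≥ a, l ≤ f t := by
  rw [image_eq_range] at hbdd
  refine ⟨⨅ t : Ici a, f t, (tendsto_comp_val_Ici_atTop (a := a)).1 ?_,
    fun t ht => ciInf_le hbdd ⟨t, ht⟩⟩
  exact tendsto_atTop_ciInf (antitoneOn_iff_antitone.1 hf) hbdd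

theorem eq_zero_of_tendsto_of_tendsto_deriv {f f' : ℝ → ℝ} {a c R : ℝ}
    (hf : ∀ t > R, HasDerivAt f (f' t) t) (hlim : Tendsto f atTop (𝓝 a))
    (hlim' : Tendsto f' atTop (𝓝 c)) : c = 0 := by
  have hmvt : ∀ t > R, ∃ s ∈ Ioo t (t + 1), f' s = f (t + 1) - f t := fun t ht => by
    obtain ⟨s, hs, h⟩ := exists_hasDerivAt_eq_slope f f' (lt_add_one t)
      (fun s hs => (hf s (ht.trans_le hs.1)).continuousAt.continuousWithinAt)
      (fun s hs => hf s (ht.trans hs.1))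
    exact ⟨s, hs, by simpa using h⟩
  choose! s hs hfs using hmvt
  have hs_top : Tendsto s atTop atTop := tendsto_atTop_mono' _ (by
    filter_upwards [eventually_gt_atTop R] with t ht using (hs t ht).1.le) tendsto_id
  have hdiff : Tendsto (fun t => f (t + 1) - f t) atTop (𝓝 (a - a)) :=
    (hlim.comp (tendsto_atTop_add_const_right _ _ tendsto_id)).sub hlim
  rw [sub_self] at hdiff
  refine tendsto_nhds_unique ((hlim'.comp hs_top).congr' ?_) hdiff
  filter_upwards [eventually_gt_atTop R] with t ht using hfs t ht

theorem le_mul_exp_of_hasDerivAt_le {f f' : ℝ → ℝ} {σ R t : ℝ} (ht : R ≤ t)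
    (hf : ∀ s ≥ R, HasDerivAt f (f' s) s) (hf' : ∀ s ≥ R, f' s ≤ -σ * f s) :
    f t ≤ f R * Real.exp (-σ * (t - R)) := by
  have h := le_gronwallBound_of_liminf_deriv_right_le (f := f) (f' := f') (δ := f R) (K := -σ)
    (ε := 0) (a := R) (b := t) (fun s hs => (hf s hs.1).continuousAt.continuousWithinAt)
    (fun s hs r hr => (hf s hs.1).hasDerivWithinAt.liminf_right_slope_le hr) le_rfl
    (fun s hs => by simpa using hf' s hs.1) t (right_mem_Icc.2 ht)
  rwa [gronwallBound_ε0] at h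

theorem contDiffOn_succ_of_hasDerivAt {F : Type*} [NormedAddCommGroup F] [NormedSpace ℝ F]
    {s : Set ℝ} (hs : IsOpen s) {y : ℝ → F} {G : ℝ → F → F} {n : ℕ}
    (hG : ContDiffOn ℝ n (uncurry G) (s ×ˢ univ)) (hy : ∀ t ∈ s, HasDerivAt y (G t (y t)) t) :
    ContDiffOn ℝ (n + 1) y s := by
  have step {m : ℕ} (hm : m ≤ n) (hym : ContDiffOn ℝ m y s) : ContDiffOn ℝ (m + 1) y s := by
    refine (contDiffOn_succ_iff_deriv_of_isOpen hs).2
      ⟨fun t ht => (hy t ht).differentiableAt.differentiableWithinAt, by simp, ?_⟩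
    refine ((hG.of_le (by exact_mod_cast hm)).comp (contDiffOn_id.prodMk hym)
      fun t ht => ⟨ht, mem_univ _⟩).congr fun t ht => (hy t ht).deriv
  have hall (m : ℕ) (hm : m ≤ n) : ContDiffOn ℝ m y s := by
    induction m with
    | zero => exact contDiffOn_zero.2 fun t ht => (hy t ht).continuousAt.continuousWithinAt
    | succ m ih => exact_mod_cast step (by lia) (ih (by lia))
  exact step le_rfl (hall n le_rfl)

end RealAnalysis

section LaneEmden

/-- A radial solution `v` of the Lane–Emden equation `-Δv = v ^ 3` in `ℝ³`, as a first-order system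
for `v` and `w = -v'`. -/
structure IsLaneEmden (v w : ℝ → ℝ) : Prop where
  continuous_fst : Continuous v
  continuous_snd : Continuous w
  hasDerivAt_fst : ∀ ρ > 0, HasDerivAt v (-w ρ) ρ
  hasDerivAt_snd : ∀ ρ > 0, HasDerivAt w (v ρ ^ 3 - 2 / ρ * w ρ) ρ

namespace IsLaneEmden

variable {v w : ℝ → ℝ} {ρ : ℝ}

theorem hasDerivAt_sq_mul_snd (h : IsLaneEmden v w) (hρ : 0 < ρ) :
    HasDerivAt (fun t => t ^ 2 * w t) (ρ ^ 2 * v ρ ^ 3) ρ := by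
  refine ((hasDerivAt_pow 2 ρ).mul (h.hasDerivAt_snd ρ hρ)).congr_deriv ?_
  simp only [Nat.cast_ofNat]
  field_simp
  ring

theorem hasDerivAt_mul_fst (h : IsLaneEmden v w) (hρ : 0 < ρ) :
    HasDerivAt (fun t => t * v t) (v ρ - ρ * w ρ) ρ :=
  ((hasDerivAt_id ρ).mul (h.hasDerivAt_fst ρ hρ)).congr_deriv (by simp [sub_eq_add_neg])

theorem sq_mul_snd_mono (h : IsLaneEmden v w) (hv : ∀ ρ ≥ 0, 0 ≤ v ρ) {a b : ℝ} (ha : 0 ≤ a)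
    (hab : a ≤ b) : a ^ 2 * w a ≤ b ^ 2 * w b := by
  have := h.continuous_snd
  exact le_of_hasDerivAt_nonneg hab (by fun_prop)
    (fun t ht => h.hasDerivAt_sq_mul_snd (ha.trans_lt ht.1))
    fun t ht => mul_nonneg (sq_nonneg t) (pow_nonneg (hv t (ha.trans ht.1.le)) 3)

theorem snd_nonneg (h : IsLaneEmden v w) (hv : ∀ ρ ≥ 0, 0 ≤ v ρ) (hρ : 0 < ρ) : 0 ≤ w ρ := by
  have := h.sq_mul_snd_mono hv le_rfl hρ.le
  rw [sq, zero_mul, zero_mul] at this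
  exact nonneg_of_mul_nonneg_right this (by positivity)

theorem mul_snd_le_fst (h : IsLaneEmden v w) (hv : ∀ ρ ≥ 0, 0 ≤ v ρ) (hρ : 0 < ρ) :
    ρ * w ρ ≤ v ρ := by
  by_contra! hlt
  have := h.continuous_fst
  have := h.continuous_snd
  let q : ℝ := ρ * w ρ - v ρ
  have hq : 0 < q := sub_pos.2 hlt
  have hqle : ∀ t ≥ ρ, v t - t * w t ≤ -q := fun t ht => by
    have h := le_of_hasDerivAt_nonpos (f := fun t => v t - t * w t)
      (f' := fun t => -(t * v t ^ 3)) ht (by fun_prop)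
      (fun s hs => by
        have hs0 : 0 < s := hρ.trans hs.1
        refine ((h.hasDerivAt_fst s hs0).sub
          ((hasDerivAt_id s).mul (h.hasDerivAt_snd s hs0))).congr_deriv ?_
        simp only [id_eq]
        field_simp
        ring)
      (fun s hs => neg_nonpos.2 (mul_nonneg (hρ.trans hs.1).le
        (pow_nonneg (hv s (hρ.trans hs.1).le) 3)))
    linarith
  let T : ℝ := ρ + ρ * v ρ / q + 1
  have hρT : ρ ≤ T := by
    have : 0 ≤ ρ * v ρ / q := div_nonneg (mul_nonneg hρ.le (hv ρ hρ.le)) hq.le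
    linarith
  have hT := le_of_hasDerivAt_nonpos (f := fun t => t * v t + q * t)
    (f' := fun t => v t - t * w t + q) hρT (by fun_prop)
    (fun t ht => by
      simpa using (h.hasDerivAt_mul_fst (hρ.trans ht.1)).fun_add ((hasDerivAt_id t).const_mul q))
    (fun t ht => by linarith [hqle t ht.1.le])
  have hqT : q * T = q * ρ + ρ * v ρ + q := by
    simp only [T]
    field_simp
  linarith [mul_nonneg (hρ.le.trans hρT) (hv T (hρ.le.trans hρT))]

theorem mul_fst_cube_le (h : IsLaneEmden v w) (hv : ∀ ρ ≥ 0, 0 ≤ v ρ) (hρ : 0 < ρ) :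
    (ρ * v ρ) ^ 3 ≤ 3 * (ρ ^ 2 * w ρ) := by
  have := h.continuous_fst
  have := h.continuous_snd
  have h := le_of_hasDerivAt_nonneg (f := fun t => 3 * (t ^ 2 * w t) - (t * v t) ^ 3)
    (f' := fun t => 3 * (t ^ 3 * v t ^ 2 * w t)) hρ.le (by fun_prop)
    (fun t ht => by
      refine (((h.hasDerivAt_sq_mul_snd ht.1).const_mul 3).sub
        ((h.hasDerivAt_mul_fst ht.1).pow 3)).congr_deriv ?_
      simp only [Nat.cast_ofNat]
      ring)
    (fun t ht => by
      have := h.snd_nonneg hv ht.1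
      have := ht.1.le
      positivity)
  simp only [zero_mul, ne_eq, OfNat.ofNat_ne_zero, not_false_eq_true, zero_pow, mul_zero,
    sub_zero] at h
  linarith

theorem mul_fst_sq_le (h : IsLaneEmden v w) (hv : ∀ ρ ≥ 0, 0 ≤ v ρ) (hρ : 0 < ρ) :
    (ρ * v ρ) ^ 2 ≤ 3 := by
  have hu : 0 ≤ ρ * v ρ := mul_nonneg hρ.le (hv ρ hρ.le)
  rcases hu.eq_or_lt with hu0 | hu0
  · norm_num [← hu0]
  · have hcube := h.mul_fst_cube_le hv hρ
    have := mul_le_mul_of_nonneg_left (h.mul_snd_le_fst hv hρ) hρ.le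
    exact le_of_mul_le_mul_left (by linarith) hu0

theorem mul_log_sub_log_le (h : IsLaneEmden v w) (hv : ∀ ρ ≥ 0, 0 ≤ v ρ) {c δ : ℝ} (hδ : 0 < δ)
    (hc : 0 ≤ c) (hcle : ∀ t ≥ δ, c ≤ t * v t) (hρ : δ ≤ ρ) :
    c ^ 3 * (Real.log ρ - Real.log δ) ≤ ρ ^ 2 * w ρ := by
  have hpos : ∀ s ∈ Icc δ ρ, s ≠ 0 := fun s hs => (hδ.trans_le hs.1).ne'
  have : ContinuousOn Real.log (Icc δ ρ) := Real.continuousOn_log.mono hpos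
  have := h.continuous_snd
  have := le_of_hasDerivAt_nonneg (f := fun t => t ^ 2 * w t - c ^ 3 * Real.log t)
    (f' := fun t => t ^ 2 * v t ^ 3 - c ^ 3 * t⁻¹) hρ (by fun_prop)
    (fun s hs => (h.hasDerivAt_sq_mul_snd (hδ.trans hs.1)).sub
      ((Real.hasDerivAt_log (hpos s (Ioo_subset_Icc_self hs))).const_mul _))
    (fun s hs => by
      have hs0 : 0 < s := hδ.trans hs.1
      rw [sub_nonneg, ← div_eq_mul_inv, div_le_iff₀ hs0]
      calc c ^ 3 ≤ (s * v s) ^ 3 := pow_le_pow_left₀ hc (hcle s hs.1.le) 3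
        _ = s ^ 2 * v s ^ 3 * s := by ring)
  linarith [mul_nonneg (sq_nonneg δ) (h.snd_nonneg hv hδ)]

/-- If `v` stayed nonnegative, `ρ v(ρ)` would be bounded, but also nondecreasing, hence at least
some `c > 0`; then `ρ ^ 2 w(ρ) ≤ ρ v(ρ)` would grow at least like `c ^ 3 log ρ`. -/
theorem exists_fst_neg (h : IsLaneEmden v w) (h0 : 0 < v 0) : ∃ ρ ≥ 0, v ρ < 0 := by
  by_contra! hv
  have := h.continuous_fst
  obtain ⟨δ, hδ, hvδ⟩ : ∃ δ > 0, 0 < v δ := by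
    have hev : ∀ᶠ t in 𝓝[>] 0, 0 < v t :=
      (h.continuous_fst.continuousAt.eventually_const_lt h0).filter_mono nhdsWithin_le_nhds
    exact (hev.and self_mem_nhdsWithin).exists.imp fun t ht => ⟨ht.2, ht.1⟩
  let c : ℝ := δ * v δ
  have hc : 0 < c := by positivity
  have hcle : ∀ t ≥ δ, c ≤ t * v t := fun t ht =>
    le_of_hasDerivAt_nonneg ht (by fun_prop) (fun s hs => h.hasDerivAt_mul_fst (hδ.trans hs.1))
      fun s hs => sub_nonneg.2 (h.mul_snd_le_fst hv (hδ.trans hs.1))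
  have hle_two : ∀ t ≥ δ, c ^ 3 * (Real.log t - Real.log δ) ≤ 2 := fun t ht => by
    have ht0 : 0 < t := hδ.trans_le ht
    have := mul_le_mul_of_nonneg_left (h.mul_snd_le_fst hv ht0) ht0.le
    nlinarith [h.mul_log_sub_log_le hv hδ hc.le hcle ht, h.mul_fst_sq_le hv ht0]
  have htop : Tendsto (fun t => c ^ 3 * (Real.log t - Real.log δ)) atTop atTop :=
    (tendsto_atTop_add_const_right _ _ Real.tendsto_log_atTop).const_mul_atTop (by positivity)
  obtain ⟨t, ht, ht'⟩ := ((htop.eventually_gt_atTop 2).and (eventually_ge_atTop δ)).exists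
  exact (hle_two t ht').not_gt ht

end IsLaneEmden

end LaneEmden

section SolerSystem

/-- The mass coefficient `1 - μ (ν + S)`, `S = x ^ 2 - μ y ^ 2`, in the rescaled Soler system
`v' = -solerMass μ ν v w * w`, `w' + (2 / ρ) w = (S - ν) v`. -/
def solerMass (μ ν x y : ℝ) : ℝ := 1 - μ * (ν + (x ^ 2 - μ * y ^ 2))

/-- The energy of the rescaled Soler system: conserved without the damping term `(2 / ρ) w`. -/
noncomputable def solerEnergy (μ ν x y : ℝ) : ℝ :=
  (x ^ 2 - μ * y ^ 2) ^ 2 / 4 - ν * (x ^ 2 - μ * y ^ 2) / 2 + (1 / 2 - μ * ν) * y ^ 2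

/-- A regular solution of the Soler system with `ω = 1 / 2 - μ ν`, written in the variables
`g(r) = √μ v(√μ r)`, `f(r) = μ w(√μ r)` and normalized by `v(0) = 1`. At `μ = 0` the system is the
nonrelativistic limit `-Δv = v ^ 3 - ν v`. The bounds on `μ` and `ν` keep `solerMass` positive
along profiles. -/
structure IsSolerProfile (μ ν : ℝ) (v w : ℝ → ℝ) : Prop where
  mu_mem : μ ∈ Icc 0 (1 / 8)
  nu_mem : ν ∈ Icc 0 1
  continuous_fst : Continuous v
  continuous_snd : Continuous w
  fst_zero : v 0 = 1
  snd_zero : w 0 = 0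
  hasDerivAt_fst : ∀ ρ > 0, HasDerivAt v (-solerMass μ ν (v ρ) (w ρ) * w ρ) ρ
  hasDerivAt_snd : ∀ ρ > 0,
    HasDerivAt w ((v ρ ^ 2 - μ * w ρ ^ 2 - ν) * v ρ - 2 / ρ * w ρ) ρ

variable {μ ν x y ρ : ℝ} {v w : ℝ → ℝ}

theorem solerMass_mem_Icc (hμ : μ ∈ Icc 0 (1 / 8)) (hν : ν ∈ Icc 0 1) (hx : x ^ 2 ≤ 4)
    (hy : y ^ 2 ≤ 4) : solerMass μ ν x y ∈ Icc (3 / 8) 2 := by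
  have hsum : ν + (x ^ 2 - μ * y ^ 2) ∈ Icc (-8) 5 :=
    ⟨by nlinarith [hμ.1, hμ.2, hν.1, sq_nonneg x], by nlinarith [hμ.1, hν.2, sq_nonneg y]⟩
  constructor <;> unfold solerMass <;> nlinarith [hμ.1, hμ.2, hsum.1, hsum.2]

theorem sq_le_of_solerEnergy_le (hμ : μ ∈ Icc 0 (1 / 8)) (hν : ν ∈ Icc 0 1)
    (hE : solerEnergy μ ν x y ≤ solerEnergy μ ν 1 0) : x ^ 2 ≤ 2 ∧ y ^ 2 ≤ 1 := by
  have hμν : μ * ν ≤ 1 / 8 := by nlinarith [hμ.1, hμ.2, hν.1, hν.2]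
  have hcoeff : 3 / 8 * y ^ 2 ≤ (1 / 2 - μ * ν) * y ^ 2 := by gcongr; linarith
  have hsq : (x ^ 2 - μ * y ^ 2 - ν) ^ 2 + 3 / 2 * y ^ 2 ≤ (1 - ν) ^ 2 := by
    unfold solerEnergy at hE
    nlinarith
  have hy : y ^ 2 ≤ 1 := by nlinarith [hν.1, hν.2, sq_nonneg (x ^ 2 - μ * y ^ 2 - ν)]
  have hS := abs_le_of_sq_le_sq' (by nlinarith [sq_nonneg y]) (sub_nonneg.2 hν.2)
    (a := x ^ 2 - μ * y ^ 2 - ν)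
  exact ⟨by nlinarith [hS.2, hμ.2], hy⟩

theorem hasDerivAt_solerEnergy (hv : HasDerivAt v (-solerMass μ ν (v ρ) (w ρ) * w ρ) ρ)
    (hw : HasDerivAt w ((v ρ ^ 2 - μ * w ρ ^ 2 - ν) * v ρ - 2 / ρ * w ρ) ρ) :
    HasDerivAt (fun t => solerEnergy μ ν (v t) (w t))
      (-(2 / ρ * solerMass μ ν (v ρ) (w ρ) * w ρ ^ 2)) ρ := by
  have hS := (hv.pow 2).sub ((hw.pow 2).const_mul μ)
  refine (((hS.pow 2).div_const 4).sub ((hS.const_mul ν).div_const 2)).add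
    ((hw.pow 2).const_mul (1 / 2 - μ * ν)) |>.congr_deriv ?_
  simp only [Pi.sub_apply, Pi.pow_apply, Nat.cast_ofNat, solerMass]
  ring

theorem continuous_solerEnergy (hv : Continuous v) (hw : Continuous w) :
    Continuous fun t => solerEnergy μ ν (v t) (w t) := by
  unfold solerEnergy
  fun_prop

/-- The equations are only required while the solution is small, so that the bounds apply to the
solution of the system with its nonlinearity modified far from the origin. -/
theorem sq_le_of_hasDerivAt_of_sq_le (hμ : μ ∈ Icc 0 (1 / 8)) (hν : ν ∈ Icc 0 1)
    (hvc : Continuous v) (hwc : Continuous w) (hv0 : v 0 = 1) (hw0 : w 0 = 0)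
    (hv : ∀ ρ > 0, v ρ ^ 2 ≤ 4 → w ρ ^ 2 ≤ 4 →
      HasDerivAt v (-solerMass μ ν (v ρ) (w ρ) * w ρ) ρ)
    (hw : ∀ ρ > 0, v ρ ^ 2 ≤ 4 → w ρ ^ 2 ≤ 4 →
      HasDerivAt w ((v ρ ^ 2 - μ * w ρ ^ 2 - ν) * v ρ - 2 / ρ * w ρ) ρ)
    (hρ : 0 ≤ ρ) : v ρ ^ 2 ≤ 2 ∧ w ρ ^ 2 ≤ 1 := by
  have improve : ∀ t ≥ 0, (∀ s ∈ Icc 0 t, v s ^ 2 ≤ 4 ∧ w s ^ 2 ≤ 4) →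
      v t ^ 2 ≤ 2 ∧ w t ^ 2 ≤ 1 := fun t ht hbound => by
    have hE := le_of_hasDerivAt_nonpos ht (continuous_solerEnergy hvc hwc).continuousOn
      (fun s hs => have hs' := hbound s (Ioo_subset_Icc_self hs)
        hasDerivAt_solerEnergy (hv s hs.1 hs'.1 hs'.2) (hw s hs.1 hs'.1 hs'.2))
      (fun s hs => by
        have hs' := hbound s (Ioo_subset_Icc_self hs)
        have := (solerMass_mem_Icc hμ hν hs'.1 hs'.2).1
        have := hs.1
        rw [neg_nonpos]
        positivity)
    rw [hv0, hw0] at hE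
    exact sq_le_of_solerEnergy_le hμ hν hE
  have hclosed : IsClosed {t | v t ^ 2 ≤ 2 ∧ w t ^ 2 ≤ 1} :=
    (isClosed_le (hvc.pow 2) continuous_const).inter (isClosed_le (hwc.pow 2) continuous_const)
  refine IsClosed.Icc_subset_of_forall_mem_nhdsGT_of_Icc_subset (hclosed.inter isClosed_Icc)
    (by norm_num [hv0, hw0]) (fun t ht hsub => ?_) (right_mem_Icc.2 hρ)
  have hvt := (hsub (right_mem_Icc.2 ht.1)).1
  have hwt := (hsub (right_mem_Icc.2 ht.1)).2
  have hnear : ∀ᶠ s in 𝓝 t, v s ^ 2 < 4 ∧ w s ^ 2 < 4 :=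
    ((hvc.pow 2).continuousAt.eventually_lt_const (hvt.trans_lt (by norm_num))).and
      ((hwc.pow 2).continuousAt.eventually_lt_const (hwt.trans_lt (by norm_num)))
  obtain ⟨δ, hδ, hball⟩ := Metric.eventually_nhds_iff_ball.1 hnear
  filter_upwards [Ioo_mem_nhdsGT (show t < t + δ by linarith)] with s hs
  refine improve s (ht.1.trans hs.1.le) fun r hr => ?_
  rcases le_total r t with hrt | hrt
  · have := hsub ⟨hr.1, hrt⟩
    exact ⟨by linarith [this.1], by linarith [this.2]⟩
  · have := hball r (by
      rw [Metric.mem_ball, Real.dist_eq, abs_of_nonneg (sub_nonneg.2 hrt)]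
      linarith [hr.2, hs.2])
    exact ⟨this.1.le, this.2.le⟩

theorem exists_lipschitzWith_eq_solerField : ∃ N : (ℝ × ℝ) × ℝ × ℝ → ℝ × ℝ, ∃ K,
    LipschitzWith K N ∧ ∀ μ ∈ Icc 0 (1 / 8), ∀ ν ∈ Icc 0 1, ∀ x y, x ^ 2 ≤ 4 → y ^ 2 ≤ 4 →
      N ((μ, ν), x, y) = (-solerMass μ ν x y * y, (x ^ 2 - μ * y ^ 2 - ν) * x) := by
  let N (z : (ℝ × ℝ) × ℝ × ℝ) : ℝ × ℝ := (-solerMass z.1.1 z.1.2 z.2.1 z.2.2 * z.2.2,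
    (z.2.1 ^ 2 - z.1.1 * z.2.2 ^ 2 - z.1.2) * z.2.1)
  have hN : ContDiff ℝ 1 N := by
    unfold N solerMass
    fun_prop
  obtain ⟨K, hK⟩ := hN.contDiffOn.exists_lipschitzOnWith
    (s := Icc ((0, 0), -2, -2) ((1 / 8, 1), 2, 2)) one_ne_zero (convex_Icc _ _) isCompact_Icc
  obtain ⟨N', hN', hN'_eq⟩ := hK.extend_finite_dimension
  refine ⟨N', _, hN', fun μ hμ ν hν x y hx hy => ?_⟩
  have hx' := abs_le_of_sq_le_sq' (hx.trans (by norm_num : _ ≤ (2 : ℝ) ^ 2)) zero_le_two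
  have hy' := abs_le_of_sq_le_sq' (hy.trans (by norm_num : _ ≤ (2 : ℝ) ^ 2)) zero_le_two
  exact (hN'_eq ⟨⟨⟨hμ.1, hν.1⟩, hx'.1, hy'.1⟩, ⟨hμ.2, hν.2⟩, hx'.2, hy'.2⟩).symm

theorem exists_continuous_solerProfile :
    ∃ v w : ℝ × ℝ → ℝ → ℝ, Continuous (uncurry v) ∧ Continuous (uncurry w) ∧
      ∀ μ ∈ Icc 0 (1 / 8), ∀ ν ∈ Icc 0 1, IsSolerProfile μ ν (v (μ, ν)) (w (μ, ν)) := by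
  obtain ⟨N, K, hN, hN_eq⟩ := exists_lipschitzWith_eq_solerField
  obtain ⟨y, hy, hsol⟩ := exists_continuous_radial_flow (N := curry N) hN 2 (1 : ℝ)
  refine ⟨fun p ρ => (y p ρ).1, fun p ρ => (y p ρ).2, hy.fst, hy.snd, fun μ hμ ν hν => ?_⟩
  obtain ⟨hy0, hderiv⟩ := hsol (μ, ν)
  have hyc : Continuous (y (μ, ν)) := hy.uncurry_left (μ, ν)
  have h0 := Prod.ext_iff.1 hy0
  have hsmall {ρ : ℝ} (hρ : 0 < ρ) (h1 : (y (μ, ν) ρ).1 ^ 2 ≤ 4) (h2 : (y (μ, ν) ρ).2 ^ 2 ≤ 4) :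
      HasDerivAt (y (μ, ν)) (-solerMass μ ν (y (μ, ν) ρ).1 (y (μ, ν) ρ).2 * (y (μ, ν) ρ).2,
        ((y (μ, ν) ρ).1 ^ 2 - μ * (y (μ, ν) ρ).2 ^ 2 - ν) * (y (μ, ν) ρ).1
          - 2 / ρ * (y (μ, ν) ρ).2) ρ := by
    have h := hderiv ρ hρ.ne'
    rwa [curry_apply, hN_eq μ hμ ν hν _ _ h1 h2, Prod.mk_sub_mk, sub_zero] at h
  have hv (ρ) (hρ : 0 < ρ) (h1 : (y (μ, ν) ρ).1 ^ 2 ≤ 4) (h2 : (y (μ, ν) ρ).2 ^ 2 ≤ 4) :=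
    hasFDerivAt_fst.comp_hasDerivAt ρ (hsmall hρ h1 h2)
  have hw (ρ) (hρ : 0 < ρ) (h1 : (y (μ, ν) ρ).1 ^ 2 ≤ 4) (h2 : (y (μ, ν) ρ).2 ^ 2 ≤ 4) :=
    hasFDerivAt_snd.comp_hasDerivAt ρ (hsmall hρ h1 h2)
  have hbound (ρ) (hρ : 0 < ρ) : (y (μ, ν) ρ).1 ^ 2 ≤ 4 ∧ (y (μ, ν) ρ).2 ^ 2 ≤ 4 := by
    have h := sq_le_of_hasDerivAt_of_sq_le hμ hν hyc.fst hyc.snd h0.1 h0.2 hv hw hρ.le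
    exact ⟨h.1.trans (by norm_num), h.2.trans (by norm_num)⟩
  exact ⟨hμ, hν, hyc.fst, hyc.snd, h0.1, h0.2, fun ρ hρ => hv ρ hρ (hbound ρ hρ).1 (hbound ρ hρ).2,
    fun ρ hρ => hw ρ hρ (hbound ρ hρ).1 (hbound ρ hρ).2⟩

end SolerSystem

section SolerProfile

variable {μ ν ρ : ℝ} {v w : ℝ → ℝ}

namespace IsSolerProfile

theorem sq_le (h : IsSolerProfile μ ν v w) (hρ : 0 ≤ ρ) : v ρ ^ 2 ≤ 2 ∧ w ρ ^ 2 ≤ 1 :=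
  sq_le_of_hasDerivAt_of_sq_le h.mu_mem h.nu_mem h.continuous_fst h.continuous_snd h.fst_zero
    h.snd_zero (fun ρ hρ _ _ => h.hasDerivAt_fst ρ hρ) (fun ρ hρ _ _ => h.hasDerivAt_snd ρ hρ) hρ

theorem solerMass_mem_Icc (h : IsSolerProfile μ ν v w) (hρ : 0 ≤ ρ) :
    solerMass μ ν (v ρ) (w ρ) ∈ Icc (3 / 8) 2 :=
  _root_.solerMass_mem_Icc h.mu_mem h.nu_mem ((h.sq_le hρ).1.trans (by norm_num))
    ((h.sq_le hρ).2.trans (by norm_num))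

theorem solerEnergy_antitone (h : IsSolerProfile μ ν v w) {a b : ℝ} (ha : 0 ≤ a) (hab : a ≤ b) :
    solerEnergy μ ν (v b) (w b) ≤ solerEnergy μ ν (v a) (w a) := by
  have hpos {t : ℝ} (ht : t ∈ Ioo a b) : 0 < t := ha.trans_lt ht.1
  refine le_of_hasDerivAt_nonpos hab
    (continuous_solerEnergy h.continuous_fst h.continuous_snd).continuousOn
    (fun t ht => hasDerivAt_solerEnergy (h.hasDerivAt_fst t (hpos ht))
      (h.hasDerivAt_snd t (hpos ht))) fun t ht => ?_
  have := hpos ht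
  have := (h.solerMass_mem_Icc (hpos ht).le).1
  rw [neg_nonpos]
  positivity

theorem eventually_pos_nhdsGT_zero (h : IsSolerProfile μ ν v w) : ∀ᶠ t in 𝓝[>] 0, 0 < v t :=
  (h.continuous_fst.continuousAt.eventually_const_lt (h.fst_zero ▸ one_pos)).filter_mono
    nhdsWithin_le_nhds

theorem abs_sub_solerMass_le (h : IsSolerProfile μ ν v w) (hρ : 0 ≤ ρ) :
    |v ρ ^ 2 - μ * w ρ ^ 2 - ν - solerMass μ ν (v ρ) (w ρ)| ≤ 4 := by
  have hb := h.solerMass_mem_Icc hρ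
  have hv := (h.sq_le hρ).1
  have hw : μ * w ρ ^ 2 ∈ Icc 0 1 :=
    ⟨mul_nonneg h.mu_mem.1 (sq_nonneg _), mul_le_one₀ (h.mu_mem.2.trans (by norm_num))
      (sq_nonneg _) (h.sq_le hρ).2⟩
  rw [abs_le]
  constructor <;> linarith [h.nu_mem.1, h.nu_mem.2, hb.1, hb.2, hw.1, hw.2, sq_nonneg (v ρ)]

/-- The weight makes `v ^ 2 + w ^ 2` nondecreasing: backward uniqueness of the zero solution. -/
theorem sq_add_sq_pos (h : IsSolerProfile μ ν v w) (hρ : 0 < ρ) : 0 < v ρ ^ 2 + w ρ ^ 2 := by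
  have := h.continuous_fst
  have := h.continuous_snd
  obtain ⟨δ, hvδ, hδ, hδρ⟩ := (h.eventually_pos_nhdsGT_zero.and (Ioo_mem_nhdsGT hρ)).exists
  have hmono := le_of_hasDerivAt_nonneg
    (f := fun t => t ^ 4 * Real.exp (4 * t) * (v t ^ 2 + w t ^ 2))
    (f' := fun t => t ^ 4 * Real.exp (4 * t) * (4 / t * v t ^ 2 + (4 * (v t ^ 2 + w t ^ 2) +
      2 * (v t ^ 2 - μ * w t ^ 2 - ν - solerMass μ ν (v t) (w t)) * (v t * w t))))
    hδρ.le (by fun_prop)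
    (fun t ht => by
      have ht0 : 0 < t := hδ.trans ht.1
      refine (((hasDerivAt_pow 4 t).mul ((hasDerivAt_id t).const_mul 4).exp).mul
        (((h.hasDerivAt_fst t ht0).pow 2).add ((h.hasDerivAt_snd t ht0).pow 2))).congr_deriv ?_
      simp only [Pi.mul_apply, Pi.add_apply, Pi.pow_apply, id_eq, Nat.cast_ofNat]
      field_simp
      ring)
    (fun t ht => by
      have ht0 : 0 < t := hδ.trans ht.1
      have hcvw : 0 ≤ 4 * (v t ^ 2 + w t ^ 2) +
          2 * (v t ^ 2 - μ * w t ^ 2 - ν - solerMass μ ν (v t) (w t)) * (v t * w t) := by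
        have := abs_le.1 (h.abs_sub_solerMass_le ht0.le)
        nlinarith [sq_nonneg (v t + w t), sq_nonneg (v t - w t)]
      positivity)
  have hδ_pos : 0 < δ ^ 4 * Real.exp (4 * δ) * (v δ ^ 2 + w δ ^ 2) := by positivity
  exact pos_of_mul_pos_right (hδ_pos.trans_le hmono) (by positivity)

end IsSolerProfile

/-- The profile changes sign. -/
def Overshoots (v : ℝ → ℝ) : Prop := ∃ ρ ≥ 0, v ρ < 0

/-- The energy becomes negative while `v` is still positive; `v` then stays positive forever,
because the energy is nonincreasing and nonnegative where `v` vanishes. -/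
def Undershoots (μ ν : ℝ) (v w : ℝ → ℝ) : Prop :=
  ∃ ρ ≥ 0, (∀ t ∈ Icc 0 ρ, 0 < v t) ∧ solerEnergy μ ν (v ρ) (w ρ) < 0

theorem isOpen_setOf_overshoots {P : Type*} [TopologicalSpace P] {v : P → ℝ → ℝ}
    (hv : Continuous (uncurry v)) : IsOpen {p | Overshoots (v p)} := by
  simp only [Overshoots, ofPred_exists, ofPred_and]
  exact isOpen_iUnion fun ρ => isOpen_const.inter
    (isOpen_lt (hv.uncurry_right ρ) continuous_const)

theorem isOpen_setOf_undershoots {v w : ℝ × ℝ → ℝ → ℝ} (hv : Continuous (uncurry v))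
    (hw : Continuous (uncurry w)) : IsOpen {p : ℝ × ℝ | Undershoots p.1 p.2 (v p) (w p)} := by
  refine isOpen_iff_mem_nhds.2 fun p ⟨ρ, hρ, hpos, hE⟩ => ?_
  have hvρ := hv.uncurry_right ρ
  have hwρ := hw.uncurry_right ρ
  have hcont : Continuous fun q : ℝ × ℝ => solerEnergy q.1 q.2 (v q ρ) (w q ρ) := by
    unfold solerEnergy
    fun_prop
  have hpos' : ∀ᶠ q in 𝓝 p, ∀ t ∈ Icc 0 ρ, 0 < v q t :=
    isCompact_Icc.eventually_forall_of_forall_eventually fun t ht =>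
      hv.continuousAt.eventually_const_lt (hpos t ht)
  filter_upwards [hpos', hcont.continuousAt.eventually_lt_const hE] with q hq hEq
  exact ⟨ρ, hρ, hq, hEq⟩

namespace IsSolerProfile

theorem not_overshoots_of_undershoots (h : IsSolerProfile μ ν v w) (hu : Undershoots μ ν v w) :
    ¬Overshoots v := by
  rintro ⟨t, ht, hvt⟩
  obtain ⟨ρ, hρ, hpos, hE⟩ := hu
  have hρt : ρ ≤ t := le_of_lt <| not_le.1 fun htρ => (hpos t ⟨ht, htρ⟩).not_gt hvt
  obtain ⟨s, hs, hvs⟩ := intermediate_value_Icc' hρt h.continuous_fst.continuousOn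
    ⟨hvt.le, (hpos ρ (right_mem_Icc.2 hρ)).le⟩
  have hEs := (h.solerEnergy_antitone hρ hs.1).trans_lt hE
  refine hEs.not_ge ?_
  have hμ := h.mu_mem
  have hν := h.nu_mem
  have hμν : 0 ≤ 1 / 2 - μ * ν := by nlinarith [hμ.1, hμ.2, hν.1, hν.2]
  have := hμ.1
  have := hν.1
  calc 0 ≤ (μ * w s ^ 2) ^ 2 / 4 + ν * (μ * w s ^ 2) / 2 + (1 / 2 - μ * ν) * w s ^ 2 := by
        positivity
    _ = solerEnergy μ ν (v s) (w s) := by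
        rw [hvs, solerEnergy]
        ring

theorem overshoots_of_zero (h : IsSolerProfile 0 0 v w) : Overshoots v := by
  have hLE : IsLaneEmden v w :=
    { continuous_fst := h.continuous_fst
      continuous_snd := h.continuous_snd
      hasDerivAt_fst ρ hρ := (h.hasDerivAt_fst ρ hρ).congr_deriv (by simp [solerMass])
      hasDerivAt_snd ρ hρ := (h.hasDerivAt_snd ρ hρ).congr_deriv (by ring) }
  exact hLE.exists_fst_neg (h.fst_zero ▸ one_pos)

theorem undershoots_of_half_lt (h : IsSolerProfile μ ν v w) (hν : 1 / 2 < ν) :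
    Undershoots μ ν v w := by
  refine ⟨0, le_rfl, fun t ht => ?_, ?_⟩
  · rw [Icc_self, mem_singleton_iff] at ht
    rw [ht, h.fst_zero]
    exact one_pos
  · rw [h.fst_zero, h.snd_zero, solerEnergy]
    linarith

end IsSolerProfile

end SolerProfile

/-- The arc of the hyperbola `μ ν = ε` joining `(ε, 1)` to `(√ε, √ε)` is connected, so it cannot be
covered by disjoint open sets containing its two ends. -/
theorem exists_mul_eq_notMem_of_isOpen {O U : Set (ℝ × ℝ)} {a : ℝ} (ha : 0 < a) (hO : IsOpen O)
    (hU : IsOpen U) (hO_zero : (0, 0) ∈ O) (hU_one : ∀ μ ∈ Ioc 0 a, (μ, 1) ∈ U)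
    (hdisj : ∀ μ ∈ Ioc 0 a, ∀ ν ∈ Ioc 0 1, (μ, ν) ∈ U → (μ, ν) ∉ O) :
    ∃ ε₀ > 0, ∀ ε ∈ Ioo 0 ε₀, ∃ μ ∈ Ioc 0 a, ∃ ν ∈ Ioc 0 1, μ * ν = ε ∧
      (μ, ν) ∉ O ∧ (μ, ν) ∉ U := by
  obtain ⟨η, hη, hball⟩ := Metric.isOpen_iff.1 hO _ hO_zero
  refine ⟨(min η (min a 1)) ^ 2, by positivity, fun ε ⟨hε, hεη⟩ => ?_⟩
  obtain ⟨hsqrt_η, hsqrt_a, hsqrt_one⟩ : √ε < η ∧ √ε < a ∧ √ε < 1 := by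
    simpa only [lt_min_iff] using (Real.sqrt_lt' (by positivity)).2 hεη
  have hsqrt_pos : 0 < √ε := Real.sqrt_pos.2 hε
  have hdiv : ε / √ε = √ε := Real.div_sqrt
  have hε_le : ε ≤ √ε := by nlinarith [Real.mul_self_sqrt hε.le]
  have hcurve (s) (hs : s ∈ Icc ε √ε) : s ∈ Ioc 0 a ∧ ε / s ∈ Ioc 0 1 := by
    have hs0 : 0 < s := hε.trans_le hs.1
    exact ⟨⟨hs0, hs.2.trans hsqrt_a.le⟩, by positivity, div_le_one_of_le₀ hs.1 hs0.le⟩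
  have hγ : ContinuousOn (fun s => (s, ε / s)) (Icc ε √ε) :=
    continuousOn_id.prodMk
      (continuousOn_const.div continuousOn_id fun s hs => (hcurve s hs).1.1.ne')
  have hO_end : (√ε, ε / √ε) ∈ O := hball <| by
    simpa [Prod.dist_eq, hdiv, abs_of_pos hsqrt_pos] using hsqrt_η
  have hU_end : (ε, ε / ε) ∈ U := by
    rw [div_self hε.ne']
    exact hU_one ε (hcurve ε (left_mem_Icc.2 hε_le)).1
  by_contra! hcover
  obtain ⟨_, ⟨s, hs, rfl⟩, hsO, hsU⟩ := (isPreconnected_Icc.image _ hγ) O U hO hU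
    (image_subset_iff.2 fun s hs => or_iff_not_imp_left.2 (hcover s (hcurve s hs).1 (ε / s)
      (hcurve s hs).2 (mul_div_cancel₀ _ (hcurve s hs).1.1.ne')))
    ⟨_, mem_image_of_mem _ (right_mem_Icc.2 hε_le), hO_end⟩
    ⟨_, mem_image_of_mem _ (left_mem_Icc.2 hε_le), hU_end⟩
  exact hdisj s (hcurve s hs).1 _ (hcurve s hs).2 hsU hsO

section CriticalProfile

variable {μ ν ρ : ℝ} {v w : ℝ → ℝ}

/-- A profile on the threshold between overshooting and undershooting. -/
structure IsCriticalProfile (μ ν : ℝ) (v w : ℝ → ℝ) : Prop extends IsSolerProfile μ ν v w where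
  nu_pos : 0 < ν
  not_overshoots : ¬Overshoots v
  not_undershoots : ¬Undershoots μ ν v w

theorem exists_isCriticalProfile : ∃ ε₀ > 0, ∀ ε ∈ Ioo 0 ε₀, ∃ μ > 0, ∃ ν, μ * ν = ε ∧
    ∃ v w, IsCriticalProfile μ ν v w := by
  obtain ⟨v, w, hv, hw, hprofile⟩ := exists_continuous_solerProfile
  have hprofile' (μ) (hμ : μ ∈ Ioc 0 (1 / 8)) (ν) (hν : ν ∈ Ioc 0 1) :
      IsSolerProfile μ ν (v (μ, ν)) (w (μ, ν)) :=
    hprofile μ (Ioc_subset_Icc_self hμ) ν (Ioc_subset_Icc_self hν)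
  obtain ⟨ε₀, hε₀, hexists⟩ := exists_mul_eq_notMem_of_isOpen (a := 1 / 8) (by norm_num)
    (isOpen_setOf_overshoots hv) (isOpen_setOf_undershoots hv hw)
    (hprofile 0 (by norm_num) 0 (by norm_num)).overshoots_of_zero
    (fun μ hμ => (hprofile' μ hμ 1 (by norm_num)).undershoots_of_half_lt (by norm_num))
    fun μ hμ ν hν => (hprofile' μ hμ ν hν).not_overshoots_of_undershoots
  refine ⟨ε₀, hε₀, fun ε hε => ?_⟩
  obtain ⟨μ, hμ, ν, hν, hμν, hover, hunder⟩ := hexists ε hε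
  exact ⟨μ, hμ.1, ν, hμν, _, _, hprofile' μ hμ ν hν, hν.1, hover, hunder⟩

namespace IsCriticalProfile

theorem fst_pos (h : IsCriticalProfile μ ν v w) (hρ : 0 ≤ ρ) : 0 < v ρ := by
  have hnonneg : ∀ t ≥ 0, 0 ≤ v t := fun t ht => not_lt.1 fun hvt => h.not_overshoots ⟨t, ht, hvt⟩
  rcases hρ.eq_or_lt with rfl | hρ
  · exact h.fst_zero ▸ one_pos
  refine (hnonneg ρ hρ.le).lt_of_ne' fun hv0 => ?_
  have hmin : IsLocalMin v ρ := by
    filter_upwards [lt_mem_nhds hρ] with t ht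
    exact hv0 ▸ hnonneg t ht.le
  have hbw := hmin.hasDerivAt_eq_zero (h.hasDerivAt_fst ρ hρ)
  have hb := (h.solerMass_mem_Icc hρ.le).1
  have hw0 : w ρ = 0 := (mul_eq_zero.1 hbw).resolve_left (by linarith)
  simpa [hv0, hw0] using h.sq_add_sq_pos hρ

theorem solerEnergy_nonneg (h : IsCriticalProfile μ ν v w) (hρ : 0 ≤ ρ) :
    0 ≤ solerEnergy μ ν (v ρ) (w ρ) :=
  not_lt.1 fun hE => h.not_undershoots ⟨ρ, hρ, fun _ ht => h.fst_pos ht.1, hE⟩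

theorem two_mul_nu_le_of_snd_eq_zero (h : IsCriticalProfile μ ν v w) (hρ : 0 ≤ ρ)
    (hw : w ρ = 0) : 2 * ν ≤ v ρ ^ 2 := by
  have hE := h.solerEnergy_nonneg hρ
  have hv : 0 < v ρ ^ 2 := pow_pos (h.fst_pos hρ) 2
  rw [hw, solerEnergy] at hE
  refine le_of_mul_le_mul_left ?_ hv
  linarith

theorem nu_le_half (h : IsCriticalProfile μ ν v w) : ν ≤ 1 / 2 := by
  have := h.two_mul_nu_le_of_snd_eq_zero le_rfl h.snd_zero
  rw [h.fst_zero] at this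
  linarith

theorem eventually_snd_pos_nhdsGT_zero (h : IsCriticalProfile μ ν v w) :
    ∀ᶠ t in 𝓝[>] 0, 0 < w t := by
  have hv := h.continuous_fst
  have hw := h.continuous_snd
  have hcont : Continuous fun t => v t ^ 2 - μ * w t ^ 2 - ν := by fun_prop
  have hforce : ∀ᶠ t in 𝓝 0, 0 < v t ^ 2 - μ * w t ^ 2 - ν :=
    (hcont.tendsto' 0 (1 - ν) (by simp [h.fst_zero, h.snd_zero])).eventually_const_lt
      (by linarith [h.nu_le_half])
  obtain ⟨δ, hδ, hball⟩ := Metric.eventually_nhds_iff_ball.1 hforce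
  filter_upwards [Ioo_mem_nhdsGT hδ] with t ht
  have hmono : StrictMonoOn (fun s => s ^ 2 * w s) (Icc 0 t) := by
    refine strictMonoOn_of_hasDerivWithinAt_pos (convex_Icc 0 t) (by fun_prop)
      (f' := fun s => s ^ 2 * ((v s ^ 2 - μ * w s ^ 2 - ν) * v s)) (fun s hs => ?_) fun s hs => ?_
    all_goals
      rw [interior_Icc] at hs
      have hs0 : 0 < s := hs.1
    · refine (((hasDerivAt_pow 2 s).mul
        (h.hasDerivAt_snd s hs0)).congr_deriv ?_).hasDerivWithinAt
      simp only [Nat.cast_ofNat]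
      field_simp
      ring
    · have := hball s (by
        rw [Metric.mem_ball, Real.dist_0_eq_abs, abs_of_pos hs0]
        exact hs.2.trans ht.2)
      have := h.fst_pos hs0.le
      positivity
  have := hmono (left_mem_Icc.2 ht.1.le) (right_mem_Icc.2 ht.1.le) ht.1
  simp only [ne_eq, OfNat.ofNat_ne_zero, not_false_eq_true, zero_pow, zero_mul] at this
  exact pos_of_mul_pos_right this (by positivity)

theorem snd_pos (h : IsCriticalProfile μ ν v w) (hρ : 0 < ρ) : 0 < w ρ := by
  obtain ⟨δ, hwδ, hδ, hδρ⟩ := (h.eventually_snd_pos_nhdsGT_zero.and (Ioo_mem_nhdsGT hρ)).exists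
  have hpos {t : ℝ} (ht : t ∈ Icc δ ρ) : 0 < t := hδ.trans_le ht.1
  refine pos_of_hasDerivAt_pos_of_eq_zero hδρ.le hwδ (fun t ht => h.hasDerivAt_snd t (hpos ht))
    fun t ht hwt => ?_
  have hv := h.fst_pos (hpos ht).le
  have hν : ν < v t ^ 2 := by
    linarith [h.two_mul_nu_le_of_snd_eq_zero (hpos ht).le hwt, h.nu_pos]
  rw [hwt, sq 0, mul_zero, mul_zero, mul_zero, sub_zero, sub_zero]
  exact mul_pos (sub_pos.2 hν) hv

theorem snd_nonneg (h : IsCriticalProfile μ ν v w) (hρ : 0 ≤ ρ) : 0 ≤ w ρ := by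
  rcases hρ.eq_or_lt with rfl | hρ
  · exact h.snd_zero.ge
  · exact (h.snd_pos hρ).le

theorem antitoneOn_fst (h : IsCriticalProfile μ ν v w) : AntitoneOn v (Ici 0) :=
  fun _ ha _ _ hab => le_of_hasDerivAt_nonpos hab h.continuous_fst.continuousOn
    (fun t ht => h.hasDerivAt_fst t (ha.out.trans_lt ht.1)) fun t ht => by
      have ht0 : 0 ≤ t := ha.out.trans ht.1.le
      have := (h.solerMass_mem_Icc ht0).1
      have := h.snd_nonneg ht0
      rw [neg_mul, neg_nonpos]
      positivity

theorem neg_four_le_deriv_snd (h : IsCriticalProfile μ ν v w) (hρ : 1 ≤ ρ) :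
    -4 ≤ (v ρ ^ 2 - μ * w ρ ^ 2 - ν) * v ρ - 2 / ρ * w ρ := by
  have hρ0 : 0 ≤ ρ := zero_le_one.trans hρ
  have hv := h.fst_pos hρ0
  have hv1 : v ρ ≤ 1 := h.fst_zero ▸ h.antitoneOn_fst self_mem_Ici hρ0 hρ0
  have hw := h.snd_nonneg hρ0
  have hw1 : w ρ ≤ 1 := by nlinarith [(h.sq_le hρ0).2]
  have hforce : -2 ≤ v ρ ^ 2 - μ * w ρ ^ 2 - ν := by
    nlinarith [(h.sq_le hρ0).2, h.mu_mem.1, h.mu_mem.2, h.nu_mem.2, sq_nonneg (v ρ)]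
  have hdamp : 2 / ρ * w ρ ≤ 2 * 1 := by
    gcongr
    exact div_le_self zero_le_two hρ
  nlinarith

theorem tendsto_zero (h : IsCriticalProfile μ ν v w) :
    Tendsto v atTop (𝓝 0) ∧ Tendsto w atTop (𝓝 0) := by
  obtain ⟨l, hl, hle⟩ := exists_tendsto_of_antitoneOn_Ici h.antitoneOn_fst
    ⟨0, forall_mem_image.2 fun t ht => (h.fst_pos ht).le⟩
  have hpos {t : ℝ} (ht : t ≥ 1) : 0 < t := one_pos.trans_le ht
  have hw : Tendsto w atTop (𝓝 0) := tendsto_zero_of_deriv_le_neg (k := 3 / 8) (L := 4) (R := 1)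
    (by norm_num) (by norm_num) (fun t ht => h.hasDerivAt_fst t (hpos ht))
    (fun t ht => h.hasDerivAt_snd t (hpos ht))
    (fun t ht => mul_le_mul_of_nonneg_right
      (neg_le_neg (h.solerMass_mem_Icc (hpos ht).le).1) (h.snd_nonneg (hpos ht).le))
    (fun t ht => h.neg_four_le_deriv_snd ht) (fun t ht => h.snd_nonneg (hpos ht).le)
    (fun t ht => hle t (hpos ht).le) hl
  have hS : Tendsto (fun t => v t ^ 2 - μ * w t ^ 2) atTop (𝓝 (l ^ 2)) := by
    simpa using (hl.pow 2).sub ((hw.pow 2).const_mul μ)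
  have hforce : (l ^ 2 - ν) * l = 0 := by
    refine eq_zero_of_tendsto_of_tendsto_deriv (fun t ht => h.hasDerivAt_snd t ht) hw ?_
    have hdamp := (tendsto_id.const_div_atTop (2 : ℝ)).mul hw
    simpa using ((hS.sub_const ν).mul hl).sub hdamp
  have hE : 0 ≤ (l ^ 2) ^ 2 / 4 - ν * l ^ 2 / 2 := by
    refine ge_of_tendsto ?_ ((eventually_ge_atTop 0).mono fun t ht => h.solerEnergy_nonneg ht)
    simpa [solerEnergy] using (((hS.pow 2).div_const 4).sub ((hS.const_mul ν).div_const 2)).add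
      ((hw.pow 2).const_mul (1 / 2 - μ * ν))
  refine ⟨?_, hw⟩
  rcases mul_eq_zero.1 hforce with hlν | hl0
  · rw [sub_eq_zero.1 hlν] at hE
    nlinarith [h.nu_pos]
  · exact hl0 ▸ hl

theorem deriv_add_le (h : IsCriticalProfile μ ν v w) (hρ : 0 < ρ) (hvρ : v ρ ^ 2 ≤ ν / 2) :
    -solerMass μ ν (v ρ) (w ρ) * w ρ + ((v ρ ^ 2 - μ * w ρ ^ 2 - ν) * v ρ - 2 / ρ * w ρ) ≤
      -(ν / 2) * (v ρ + w ρ) := by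
  have hv := h.fst_pos hρ.le
  have hw := h.snd_nonneg hρ.le
  have hmass : ν / 2 * w ρ ≤ solerMass μ ν (v ρ) (w ρ) * w ρ := by
    gcongr
    linarith [(h.solerMass_mem_Icc hρ.le).1, h.nu_le_half]
  have hforce : (v ρ ^ 2 - μ * w ρ ^ 2 - ν) * v ρ ≤ -(ν / 2) * v ρ := by
    gcongr
    linarith [mul_nonneg h.mu_mem.1 (sq_nonneg (w ρ))]
  have hdamp : 0 ≤ 2 / ρ * w ρ := by positivity
  linarith

theorem exists_le_mul_exp (h : IsCriticalProfile μ ν v w) :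
    ∃ C > 0, ∃ σ > 0, ∀ ρ ≥ 0, v ρ + w ρ ≤ C * Real.exp (-σ * ρ) := by
  have hν := h.nu_pos
  have hsmall : ∀ᶠ t in atTop, v t ^ 2 < ν / 2 :=
    (h.tendsto_zero.1.pow 2).eventually_lt_const (by simpa using hν)
  obtain ⟨R, hR⟩ := eventually_atTop.1 (hsmall.and (eventually_gt_atTop 0))
  have hR0 : 0 < R := (hR R le_rfl).2
  have hdecay : ∀ t ≥ R, v t + w t ≤ (v R + w R) * Real.exp (-(ν / 2) * (t - R)) := fun t ht =>
    le_mul_exp_of_hasDerivAt_le ht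
      (fun s hs => (h.hasDerivAt_fst s (hR s hs).2).fun_add (h.hasDerivAt_snd s (hR s hs).2))
      fun s hs => h.deriv_add_le (hR s hs).2 (hR s hs).1.le
  have hbound : ∀ t ≥ 0, v t + w t ≤ 3 := fun t ht => by
    nlinarith [(h.sq_le ht).1, (h.sq_le ht).2, sq_nonneg (v t - 1), sq_nonneg (w t - 1)]
  refine ⟨3 * Real.exp (ν / 2 * R), by positivity, ν / 2, by positivity, fun t ht => ?_⟩
  rw [mul_assoc, ← Real.exp_add]
  rcases le_total t R with htR | hRt
  · refine (hbound t ht).trans (le_mul_of_one_le_right (by norm_num) (Real.one_le_exp ?_))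
    nlinarith
  · refine (hdecay t hRt).trans ?_
    rw [show ν / 2 * R + -(ν / 2) * t = -(ν / 2) * (t - R) by ring]
    gcongr
    exact hbound R hR0.le

end IsCriticalProfile

end CriticalProfile

section SolerSolution

variable {m ω μ ν r : ℝ} {f g v w : ℝ → ℝ}

/-- A solution `(f, g)` of the radial Soler system with mass `m` and frequency `ω` away from the
origin. -/
structure IsSolerSolution (m ω : ℝ) (f g : ℝ → ℝ) : Prop where
  hasDerivAt_fst : ∀ r > 0,
    HasDerivAt f (((g r ^ 2 - f r ^ 2) - (m - ω)) * g r - 2 / r * f r) r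
  hasDerivAt_snd : ∀ r > 0, HasDerivAt g (((g r ^ 2 - f r ^ 2) - (m + ω)) * f r) r

theorem IsSolerProfile.isSolerSolution (h : IsSolerProfile μ ν v w) (hμ : 0 < μ) :
    IsSolerSolution (1 / 2) (1 / 2 - μ * ν) (fun r => μ * w (√μ * r)) fun r => √μ * v (√μ * r) := by
  have hsqrt : 0 < √μ := Real.sqrt_pos.2 hμ
  have hsq : √μ ^ 2 = μ := Real.sq_sqrt hμ.le
  have hscale (r : ℝ) : HasDerivAt (√μ * ·) √μ r := by
    simpa using (hasDerivAt_id r).const_mul √μ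
  constructor <;> intro r hr
  · refine ((h.hasDerivAt_snd _ (mul_pos hsqrt hr)).comp r (hscale r)).const_mul μ
      |>.congr_deriv ?_
    rw [mul_pow, hsq]
    field_simp
    ring
  · refine ((h.hasDerivAt_fst _ (mul_pos hsqrt hr)).comp r (hscale r)).const_mul √μ
      |>.congr_deriv ?_
    rw [solerMass, mul_pow, hsq]
    linear_combination (-(1 - μ * (ν + (v (√μ * r) ^ 2 - μ * w (√μ * r) ^ 2))) * w (√μ * r)) * hsq

namespace IsSolerSolution

theorem contDiffOn_two (h : IsSolerSolution m ω f g) :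
    ContDiffOn ℝ 2 f (Ioi 0) ∧ ContDiffOn ℝ 2 g (Ioi 0) := by
  let G : ℝ → ℝ × ℝ → ℝ × ℝ := fun r p =>
    (((p.2 ^ 2 - p.1 ^ 2) - (m - ω)) * p.2 - 2 / r * p.1, ((p.2 ^ 2 - p.1 ^ 2) - (m + ω)) * p.1)
  have hG : ContDiffOn ℝ 1 (uncurry G) (Ioi 0 ×ˢ univ) := by
    have hne (q : ℝ × ℝ × ℝ) (hq : q ∈ Ioi 0 ×ˢ univ) : q.1 ≠ 0 := hq.1.out.ne'
    unfold G uncurry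
    fun_prop (disch := assumption)
  have hfg : ContDiffOn ℝ 2 (fun r => (f r, g r)) (Ioi 0) :=
    contDiffOn_succ_of_hasDerivAt (n := 1) isOpen_Ioi hG fun r hr =>
      (h.hasDerivAt_fst r hr).prodMk (h.hasDerivAt_snd r hr)
  exact ⟨hfg.fst, hfg.snd⟩

theorem abs_add_abs_deriv_le (h : IsSolerSolution m ω f g) (hr : 1 ≤ r) {C : ℝ}
    (hC : |f r| + |g r| ≤ C) :
    |f r| + |g r| + |deriv f r| + |deriv g r| ≤
      (3 + C ^ 2 + |m - ω| + |m + ω|) * (|f r| + |g r|) := by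
  have hr0 : 0 < r := one_pos.trans_le hr
  have hS : |g r ^ 2 - f r ^ 2| ≤ C ^ 2 := by
    rw [abs_le]
    constructor <;> nlinarith [abs_nonneg (f r), abs_nonneg (g r), sq_abs (f r), sq_abs (g r)]
  have hcoeff (a : ℝ) : |g r ^ 2 - f r ^ 2 - a| ≤ C ^ 2 + |a| :=
    (abs_sub _ _).trans (by gcongr)
  have hf' : |deriv f r| ≤ (C ^ 2 + |m - ω|) * |g r| + 2 * |f r| := by
    rw [(h.hasDerivAt_fst r hr0).deriv]
    refine (abs_sub _ _).trans ?_
    rw [abs_mul, abs_mul, abs_of_pos (div_pos two_pos hr0)]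
    gcongr
    · exact hcoeff _
    · exact div_le_self zero_le_two hr
  have hg' : |deriv g r| ≤ (C ^ 2 + |m + ω|) * |f r| := by
    rw [(h.hasDerivAt_snd r hr0).deriv, abs_mul]
    gcongr
    exact hcoeff _
  nlinarith [mul_nonneg (abs_nonneg (m - ω)) (abs_nonneg (f r)),
    mul_nonneg (abs_nonneg (m + ω)) (abs_nonneg (g r)), abs_nonneg (f r), abs_nonneg (g r)]

theorem exists_deriv_le_mul_exp (h : IsSolerSolution m ω f g) {C σ : ℝ} (hC : 0 < C) (hσ : 0 < σ)
    (hdecay : ∀ r ≥ 0, |f r| + |g r| ≤ C * Real.exp (-σ * r)) :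
    ∃ C' > 0, ∀ r ≥ 1, |f r| + |g r| + |deriv f r| + |deriv g r| ≤ C' * Real.exp (-σ * r) := by
  refine ⟨(3 + C ^ 2 + |m - ω| + |m + ω|) * C, by positivity, fun r hr => ?_⟩
  have hr0 : 0 ≤ r := zero_le_one.trans hr
  have hbound : |f r| + |g r| ≤ C := (hdecay r hr0).trans <|
    mul_le_of_le_one_right hC.le (Real.exp_le_one_iff.2 (by nlinarith))
  refine (h.abs_add_abs_deriv_le hr hbound).trans ?_
  rw [mul_assoc]
  gcongr
  exact hdecay r hr0

end IsSolerSolution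

theorem IsCriticalProfile.exists_rescaled_le_mul_exp (h : IsCriticalProfile μ ν v w) (hμ : 0 < μ) :
    ∃ C > 0, ∃ σ > 0, ∀ r ≥ 0,
      |μ * w (√μ * r)| + |√μ * v (√μ * r)| ≤ C * Real.exp (-σ * r) := by
  obtain ⟨C, hC, σ, hσ, hdecay⟩ := h.exists_le_mul_exp
  refine ⟨(μ + √μ) * C, by positivity, σ * √μ, by positivity, fun r hr => ?_⟩
  have hρ : 0 ≤ √μ * r := by positivity
  have hv := h.fst_pos hρ
  have hw := h.snd_nonneg hρ
  rw [abs_of_nonneg (by positivity), abs_of_nonneg (by positivity)]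
  calc μ * w (√μ * r) + √μ * v (√μ * r)
      ≤ (μ + √μ) * (v (√μ * r) + w (√μ * r)) := by nlinarith [Real.sqrt_nonneg μ]
    _ ≤ (μ + √μ) * (C * Real.exp (-σ * (√μ * r))) := by
      gcongr
      exact hdecay _ hρ
    _ = (μ + √μ) * C * Real.exp (-(σ * √μ) * r) := by ring_nf

end SolerSolution

/-- Theorem 1.3 of the paper: for the Soler model `F(s) = s` with mass `m = 1/2`, there is
`ε₀ > 0` such that for every `ε ∈ (0, ε₀)` and frequency `ω = m − ε`, the radially reduced
nonlinear Dirac system has a nontrivial, twice continuously differentiable, exponentially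
decaying solution `(f, g)`. -/
theorem dirac_localized_solutions_soler :
    ∃ ε₀ > (0:ℝ), ∀ ε ∈ Set.Ioo (0:ℝ) ε₀, ∀ ω : ℝ, ω = 1/2 - ε →
      ∃ f g : ℝ → ℝ,
        ContDiffOn ℝ 2 f (Set.Ioi 0) ∧ ContDiffOn ℝ 2 g (Set.Ioi 0) ∧
        (∃ r > (0:ℝ), f r ≠ 0 ∨ g r ≠ 0) ∧
        (∀ r > (0:ℝ),
          deriv f r + (2 / r) * f r = ((g r ^ 2 - f r ^ 2) - (1/2 - ω)) * g r ∧
          deriv g r = ((g r ^ 2 - f r ^ 2) - (1/2 + ω)) * f r) ∧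
        ∃ C > (0:ℝ), ∃ σ > (0:ℝ), ∀ r ≥ (1:ℝ),
          |f r| + |g r| + |deriv f r| + |deriv g r| ≤ C * Real.exp (-σ * r) := by
  obtain ⟨ε₀, hε₀, hcritical⟩ := exists_isCriticalProfile
  refine ⟨ε₀, hε₀, fun ε hε ω hω => ?_⟩
  obtain ⟨μ, hμ, ν, rfl, v, w, h⟩ := hcritical ε hε
  have hsol := h.isSolerSolution hμ
  rw [← hω] at hsol
  obtain ⟨C, hC, σ, hσ, hdecay⟩ := h.exists_rescaled_le_mul_exp hμ
  obtain ⟨C', hC', hdecay'⟩ := hsol.exists_deriv_le_mul_exp hC hσ hdecay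
  have hg : √μ * v (√μ * 1) ≠ 0 :=
    (mul_pos (Real.sqrt_pos.2 hμ) (h.fst_pos (by positivity))).ne'
  refine ⟨_, _, hsol.contDiffOn_two.1, hsol.contDiffOn_two.2, ⟨1, one_pos, Or.inr hg⟩,
    fun r hr => ⟨?_, (hsol.hasDerivAt_snd r hr).deriv⟩, C', hC', σ, hσ, hdecay'⟩
  rw [(hsol.hasDerivAt_fst r hr).deriv]
  ring
end
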